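/- Let Ω, ω, u, λ, ū be as in the context, and let φ be the first Neumann eigenfunction of −(ωφ')' = μωφ on (0,1) (φ ∈ C¹([0,1]), φ'(0) = φ'(1) = 0, ωφ' differentiable on (0,1) with (ωφ')' = −μωφ there, μ the smallest positive eigenvalue), normalized so that φ(0) = lim_{x→0+} ū(x) > 0, and let s₁ be the unique zero of φ in (0,1). If (x,y) ∈ Ω and u(x,y) = 0, then |x − s₁| ≤ Cε, with C depending only on n. In particular, the projection of the nodal set Λ = {(x,y) ∈ Ω : u(x,y) = 0} onto the x-axis has diameter at most Cε. -/

import Mathlib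

open MeasureTheory Set Filter Topology RealInnerProductSpace

noncomputable section

/-- The point `(x, y) ∈ ℝ × ℝ^m ≅ ℝ^{m+1}`. -/
def mkPt (m : ℕ) (x : ℝ) (y : EuclideanSpace ℝ (Fin m)) : EuclideanSpace ℝ (Fin (m+1)) :=
  (EuclideanSpace.equiv (Fin (m+1)) ℝ).symm (Fin.cons x ((EuclideanSpace.equiv (Fin m) ℝ) y))

/-- The cross-section `Ω(s) = {y : (s, y) ∈ Ω}`. -/
def cross {m : ℕ} (Ω : Set (EuclideanSpace ℝ (Fin (m+1)))) (s : ℝ) :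
    Set (EuclideanSpace ℝ (Fin m)) := {y | mkPt m s y ∈ Ω}

/-- `ω(s)`: the (n-1)-dimensional volume of the cross-section `Ω(s)`. -/
def ωvol {m : ℕ} (Ω : Set (EuclideanSpace ℝ (Fin (m+1)))) (s : ℝ) : ℝ :=
  (volume (cross Ω s)).toReal

/-- The Laplacian, as the sum of the pure second derivatives along the standard basis. -/
def lap {k : ℕ} (u : EuclideanSpace ℝ (Fin k) → ℝ) (p : EuclideanSpace ℝ (Fin k)) : ℝ :=
  ∑ i, fderiv ℝ (fun q => fderiv ℝ u q (EuclideanSpace.single i 1)) p (EuclideanSpace.single i 1)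

/-- The cross-sectional average `ū(x)` of `u`. -/
def ubarFn {m : ℕ} (Ω : Set (EuclideanSpace ℝ (Fin (m+1))))
    (u : EuclideanSpace ℝ (Fin (m+1)) → ℝ) (x : ℝ) : ℝ :=
  (∫ y in cross Ω x, u (mkPt m x y)) / ωvol Ω x

/-- `(φ, φd)` is a (nonzero, C¹ on [0,1]) solution of the Neumann problem
`-(ω φ')' = μ ω φ` on (0,1), with `φ'(0) = φ'(1) = 0`. -/
def NeumannSol (ω : ℝ → ℝ) (μ : ℝ) (φ φd : ℝ → ℝ) : Prop :=
  (∀ x ∈ Icc (0:ℝ) 1, HasDerivWithinAt φ (φd x) (Icc 0 1) x) ∧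
  ContinuousOn φd (Icc 0 1) ∧ φd 0 = 0 ∧ φd 1 = 0 ∧
  (∃ x ∈ Icc (0:ℝ) 1, φ x ≠ 0) ∧
  ∀ x ∈ Ioo (0:ℝ) 1, HasDerivAt (fun t => ω t * φd t) (-(μ * ω x * φ x)) x

/-- `μ` is a Neumann eigenvalue of `-(ω φ')' = μ ω φ`. -/
def IsNeumannEigenvalue (ω : ℝ → ℝ) (μ : ℝ) : Prop := ∃ φ φd, NeumannSol ω μ φ φd


/-- Continuous and bounded on the open unit interval. -/
def BC (g : ℝ → ℝ) : Prop := ContinuousOn g (Ioo 0 1) ∧ ∃ B, ∀ x ∈ Ioo (0:ℝ) 1, |g x| ≤ B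

lemma BC.mul {g h : ℝ → ℝ} (hg : BC g) (hh : BC h) : BC (fun x => g x * h x) := by
  obtain ⟨hg1, B, hB⟩ := hg
  obtain ⟨hh1, D, hD⟩ := hh
  refine ⟨hg1.mul hh1, B * D, fun x hx => ?_⟩
  rw [abs_mul]
  exact mul_le_mul (hB x hx) (hD x hx) (abs_nonneg _) ((abs_nonneg _).trans (hB x hx))

lemma BC.add {g h : ℝ → ℝ} (hg : BC g) (hh : BC h) : BC (fun x => g x + h x) := by
  obtain ⟨hg1, B, hB⟩ := hg
  obtain ⟨hh1, D, hD⟩ := hh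
  exact ⟨hg1.add hh1, B + D, fun x hx => (abs_add_le _ _).trans (add_le_add (hB x hx) (hD x hx))⟩

lemma BC.const (c : ℝ) : BC (fun _ => c) := ⟨continuousOn_const, |c|, fun _ _ => le_rfl⟩

lemma BC.neg {g : ℝ → ℝ} (hg : BC g) : BC (fun x => - g x) := by
  obtain ⟨hg1, B, hB⟩ := hg
  exact ⟨hg1.neg, B, fun x hx => by rw [abs_neg]; exact hB x hx⟩

lemma BC.sub {g h : ℝ → ℝ} (hg : BC g) (hh : BC h) : BC (fun x => g x - h x) := by
  simpa [sub_eq_add_neg] using hg.add hh.neg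

lemma BC.abs {g : ℝ → ℝ} (hg : BC g) : BC (fun x => |g x|) := by
  obtain ⟨hg1, B, hB⟩ := hg
  exact ⟨hg1.abs, B, fun x hx => by rw [abs_abs]; exact hB x hx⟩

lemma BC.of_Icc {g : ℝ → ℝ} (hg : ContinuousOn g (Icc 0 1)) : BC g := by
  refine ⟨hg.mono Ioo_subset_Icc_self, ?_⟩
  obtain ⟨B, hB⟩ := isCompact_Icc.exists_bound_of_continuousOn hg
  exact ⟨B, fun x hx => hB x (Ioo_subset_Icc_self hx)⟩

lemma BC.ii01 {g : ℝ → ℝ} (hg : BC g) : IntervalIntegrable g volume 0 1 := by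
  obtain ⟨hg1, B, hB⟩ := hg
  rw [intervalIntegrable_iff_integrableOn_Ioo_of_le zero_le_one]
  refine Integrable.of_bound (hg1.aestronglyMeasurable measurableSet_Ioo) B ?_
  exact (ae_restrict_mem measurableSet_Ioo).mono fun x hx => hB x hx

lemma BC.ii {g : ℝ → ℝ} (hg : BC g) {a b : ℝ} (ha : a ∈ Icc (0:ℝ) 1) (hb : b ∈ Icc (0:ℝ) 1) :
    IntervalIntegrable g volume a b :=
  hg.ii01.mono_set (by
    rw [uIcc_of_le zero_le_one]
    exact uIcc_subset_Icc ha hb)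

lemma BC.prim_hasDerivAt {g : ℝ → ℝ} (hg : BC g) {a x : ℝ} (ha : a ∈ Icc (0:ℝ) 1)
    (hx : x ∈ Ioo (0:ℝ) 1) : HasDerivAt (fun t => ∫ y in a..t, g y) (g x) x :=
  intervalIntegral.integral_hasDerivAt_right (hg.ii ha (Ioo_subset_Icc_self hx))
    (hg.1.stronglyMeasurableAtFilter isOpen_Ioo x hx) (hg.1.continuousAt (isOpen_Ioo.mem_nhds hx))

lemma BC.prim_cont {g : ℝ → ℝ} (hg : BC g) : ContinuousOn (fun t => ∫ y in (0:ℝ)..t, g y) (Icc 0 1) := by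
  have := @intervalIntegral.continuousOn_primitive_interval ℝ _ _ 0 1 volume g _ (by
    rw [uIcc_of_le zero_le_one, integrableOn_Icc_iff_integrableOn_Ioc,
      ← intervalIntegrable_iff_integrableOn_Ioc_of_le zero_le_one]
    exact hg.ii01)
  rwa [uIcc_of_le zero_le_one] at this

lemma BC.mono {g h : ℝ → ℝ} (hg : BC g) (hh : BC h) {a b : ℝ} (ha : 0 ≤ a) (hab : a ≤ b)
    (hb : b ≤ 1) (hle : ∀ x ∈ Ioo a b, g x ≤ h x) : ∫ x in a..b, g x ≤ ∫ x in a..b, h x :=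
  intervalIntegral.integral_mono_on_of_le_Ioo hab
    (hg.ii ⟨ha, hab.trans hb⟩ ⟨ha.trans hab, hb⟩) (hh.ii ⟨ha, hab.trans hb⟩ ⟨ha.trans hab, hb⟩) hle

lemma BC.abs_le {g h : ℝ → ℝ} (hg : BC g) (hh : BC h) {a b : ℝ} (ha : 0 ≤ a) (hab : a ≤ b)
    (hb : b ≤ 1) (hle : ∀ x ∈ Ioo a b, |g x| ≤ h x) : |∫ x in a..b, g x| ≤ ∫ x in a..b, h x := by
  refine (intervalIntegral.abs_integral_le_integral_abs hab).trans ?_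
  exact hg.abs.mono hh ha hab hb hle

lemma BC.split {g : ℝ → ℝ} (hg : BC g) {a b c : ℝ} (ha : a ∈ Icc (0:ℝ) 1) (hb : b ∈ Icc (0:ℝ) 1)
    (hc : c ∈ Icc (0:ℝ) 1) : ∫ x in a..c, g x = (∫ x in a..b, g x) + ∫ x in b..c, g x :=
  (intervalIntegral.integral_add_adjacent_intervals (hg.ii ha hb) (hg.ii hb hc)).symm

lemma BC.pos {g : ℝ → ℝ} (hg : BC g) {a b : ℝ} (ha : 0 ≤ a) (hab : a < b)
    (hb : b ≤ 1) (hle : ∀ x ∈ Ioo a b, 0 < g x) : 0 < ∫ x in a..b, g x :=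
  intervalIntegral.intervalIntegral_pos_of_pos_on
    (hg.ii ⟨ha, hab.le.trans hb⟩ ⟨ha.trans hab.le, hb⟩) hle hab

lemma BC.prim {g : ℝ → ℝ} (hg : BC g) : BC (fun t => ∫ y in (0:ℝ)..t, g y) := BC.of_Icc hg.prim_cont

structure PhiFacts (ω : ℝ → ℝ) (μ : ℝ) (φ φd : ℝ → ℝ) (s₁ : ℝ) : Prop where
  cont : ContinuousOn φ (Icc 0 1)
  contd : ContinuousOn φd (Icc 0 1)
  der : ∀ x ∈ Ioo (0:ℝ) 1, HasDerivAt φ (φd x) x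
  eq : ∀ x ∈ Ioo (0:ℝ) 1, ω x * φd x = - (μ * ∫ t in (0:ℝ)..x, ω t * φ t)
  mean : ∫ t in (0:ℝ)..1, ω t * φ t = 0
  pos : ∀ x ∈ Ico (0:ℝ) s₁, 0 < φ x
  neg : ∀ x ∈ Ioo s₁ 1, φ x < 0
  gpos : ∀ x ∈ Ioo (0:ℝ) 1, 0 < ∫ t in (0:ℝ)..x, ω t * φ t
  dneg : ∀ x ∈ Ioo (0:ℝ) 1, φd x < 0
  anti : AntitoneOn φ (Icc 0 1)

lemma tendsto_omega_phid {ω φd : ℝ → ℝ} (hω : BC ω) (hc : ContinuousOn φd (Icc 0 1))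
    {a : ℝ} (ha : a ∈ Icc (0:ℝ) 1) (h0 : φd a = 0) :
    Tendsto (fun t => ω t * φd t) (𝓝[Ioo 0 1] a) (𝓝 0) := by
  obtain ⟨B, hB⟩ := hω.2
  have h1 : Tendsto φd (𝓝[Ioo 0 1] a) (𝓝 0) := by
    have := (hc a ha).mono_left (nhdsWithin_mono a Ioo_subset_Icc_self)
    rwa [h0] at this
  have h2 : Tendsto (fun t => B * |φd t|) (𝓝[Ioo 0 1] a) (𝓝 0) := by
    simpa using h1.abs.const_mul B
  refine squeeze_zero_norm' ?_ h2
  filter_upwards [self_mem_nhdsWithin] with t ht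
  rw [Real.norm_eq_abs, abs_mul]
  exact mul_le_mul_of_nonneg_right (hB t ht) (abs_nonneg _)

lemma phiFacts {ω φ φd : ℝ → ℝ} {μ s₁ : ℝ} (hω : BC ω) (hωp : ∀ x ∈ Ioo (0:ℝ) 1, 0 < ω x)
    (hN : NeumannSol ω μ φ φd) (hμ : 0 < μ) (h0 : 0 < φ 0) (hs : s₁ ∈ Ioo (0:ℝ) 1)
    (huniq : ∀ s ∈ Ioo (0:ℝ) 1, φ s = 0 → s = s₁) : PhiFacts ω μ φ φd s₁ := by
  obtain ⟨hd, hdc, hd0, hd1, -, hode⟩ := hN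
  have hc : ContinuousOn φ (Icc 0 1) := fun x hx => (hd x hx).continuousWithinAt
  have hder : ∀ x ∈ Ioo (0:ℝ) 1, HasDerivAt φ (φd x) x := fun x hx =>
    (hd x (Ioo_subset_Icc_self hx)).hasDerivAt (Icc_mem_nhds hx.1 hx.2)
  have hφ : BC φ := .of_Icc hc
  have hωφ : BC (fun t => ω t * φ t) := hω.mul hφ
  have t0 : Tendsto (fun t => ω t * φd t) (𝓝[>] 0) (𝓝 0) := by
    have := tendsto_omega_phid hω hdc (a := 0) (by simp) hd0
    rwa [nhdsWithin_Ioo_eq_nhdsGT one_pos] at this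
  have t1 : Tendsto (fun t => ω t * φd t) (𝓝[<] 1) (𝓝 0) := by
    have := tendsto_omega_phid hω hdc (a := 1) (by simp) hd1
    rwa [nhdsWithin_Ioo_eq_nhdsLT one_pos] at this
  have hmn : ∀ x, ∫ t in (0:ℝ)..x, -(μ * ω t * φ t) = -(μ * ∫ t in (0:ℝ)..x, ω t * φ t) := by
    intro x
    rw [intervalIntegral.integral_neg, ← intervalIntegral.integral_const_mul]
    simp only [mul_assoc]
  have hbc : BC (fun t => -(μ * ω t * φ t)) := (((BC.const μ).mul hω).mul hφ).neg
  have heq : ∀ x ∈ Ioo (0:ℝ) 1, ω x * φd x = - (μ * ∫ t in (0:ℝ)..x, ω t * φ t) := by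
    intro x hx
    have := intervalIntegral.integral_eq_sub_of_hasDerivAt_of_tendsto hx.1
      (fun t ht => hode t ⟨ht.1, ht.2.trans hx.2⟩)
      (hbc.ii (by simp) (Ioo_subset_Icc_self hx)) t0
      ((hode x hx).continuousAt.tendsto.mono_left nhdsWithin_le_nhds)
    rw [hmn] at this
    linarith
  have hmean : ∫ t in (0:ℝ)..1, ω t * φ t = 0 := by
    have := intervalIntegral.integral_eq_sub_of_hasDerivAt_of_tendsto one_pos
      (fun t ht => hode t ht) hbc.ii01 t0 t1
    rw [hmn] at this
    have h2 : μ * ∫ t in (0:ℝ)..1, ω t * φ t = 0 := by linarith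
    exact (mul_eq_zero.1 h2).resolve_left hμ.ne'
  have hpos : ∀ x ∈ Ico (0:ℝ) s₁, 0 < φ x := by
    intro x hx
    by_contra hneg
    push Not at hneg
    have : (0:ℝ) ∈ φ '' Icc 0 x := by
      refine intermediate_value_Icc' hx.1 (hc.mono (Icc_subset_Icc le_rfl (hx.2.le.trans hs.2.le))) ⟨hneg, h0.le⟩
    obtain ⟨s, hs', hs0'⟩ := this
    have hne : s ≠ 0 := by rintro rfl; linarith
    have := huniq s ⟨lt_of_le_of_ne hs'.1 hne.symm, by linarith [hs'.2, hx.2, hs.2]⟩ hs0'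
    linarith [hs'.2, hx.2]
  have hneg : ∀ x ∈ Ioo s₁ 1, φ x < 0 := by
    intro x hx
    by_contra hnn
    push Not at hnn
    have hall : ∀ z ∈ Ioo s₁ 1, 0 < φ z := by
      intro z hz
      by_contra hzn
      push Not at hzn
      have hsub : uIcc z x ⊆ Ioo s₁ 1 := fun w hw => by
        rw [mem_uIcc] at hw
        constructor <;> rcases hw with h | h <;> linarith [hx.1, hx.2, hz.1, hz.2]
      have : (0:ℝ) ∈ φ '' uIcc z x := by
        refine intermediate_value_uIcc (hc.mono (fun w hw => ?_)) ?_
        · exact ⟨by linarith [(hsub hw).1, hs.1], (hsub hw).2.le⟩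
        · rw [uIcc_of_le (hzn.trans hnn)]; exact ⟨hzn, hnn⟩
      obtain ⟨s, hs', hs0'⟩ := this
      have h := hsub hs'
      have := huniq s ⟨by linarith [h.1, hs.1], h.2⟩ hs0'
      linarith [h.1]
    have h1 := hωφ.split (a := 0) (b := s₁) (c := 1) (by simp) (Ioo_subset_Icc_self hs) (by simp)
    have h2 := hωφ.pos le_rfl hs.1 hs.2.le (fun z hz => mul_pos (hωp z ⟨hz.1, hz.2.trans hs.2⟩)
      (hpos z ⟨hz.1.le, hz.2⟩))
    have h3 := hωφ.pos hs.1.le hs.2 le_rfl (fun z hz => mul_pos (hωp z ⟨hs.1.trans hz.1, hz.2⟩)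
      (hall z hz))
    linarith
  have hg : ∀ x ∈ Ioo (0:ℝ) 1, 0 < ∫ t in (0:ℝ)..x, ω t * φ t := by
    intro x hx
    rcases le_or_gt x s₁ with h | h
    · exact hωφ.pos le_rfl hx.1 hx.2.le (fun z hz => mul_pos (hωp z ⟨hz.1, hz.2.trans hx.2⟩)
        (hpos z ⟨hz.1.le, hz.2.trans_le h⟩))
    · have h1 := hωφ.split (a := 0) (b := x) (c := 1) (by simp) (Ioo_subset_Icc_self hx) (by simp)
      have h3 := hωφ.neg.pos hx.1.le hx.2 le_rfl (fun z hz => by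
        have := mul_neg_of_pos_of_neg (hωp z ⟨hx.1.trans hz.1, hz.2⟩) (hneg z ⟨h.trans hz.1, hz.2⟩)
        linarith)
      rw [intervalIntegral.integral_neg] at h3
      linarith
  have hdn : ∀ x ∈ Ioo (0:ℝ) 1, φd x < 0 := by
    intro x hx
    have h1 := heq x hx
    have h2 := mul_pos hμ (hg x hx)
    by_contra h
    push Not at h
    have := mul_nonneg (hωp x hx).le h
    linarith
  refine ⟨hc, hdc, hder, heq, hmean, hpos, hneg, hg, hdn, ?_⟩
  refine antitoneOn_of_deriv_nonpos (convex_Icc 0 1) hc ?_ ?_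
  · rw [interior_Icc]; exact fun x hx => (hder x hx).differentiableAt.differentiableWithinAt
  · rw [interior_Icc]; exact fun x hx => by rw [(hder x hx).deriv]; exact (hdn x hx).le



lemma picone {ω φ φd ub q : ℝ → ℝ} {μ s₁ K : ℝ} (hω : BC ω) (hωp : ∀ x ∈ Ioo (0:ℝ) 1, 0 < ω x)
    (hs : s₁ ∈ Ioo (0:ℝ) 1) (hF : PhiFacts ω μ φ φd s₁) (hub : BC ub)
    (hK : ∀ x ∈ Ioo (0:ℝ) 1, |ub x| ≤ K) (hmean : ∫ x in (0:ℝ)..1, ω x * ub x = 0)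
    (hq : BC q) (hqN : ∀ x ∈ Ioo (0:ℝ) 1, ω x * q x = ∫ t in (0:ℝ)..x, ω t * ub t) :
    μ * ∫ x in (0:ℝ)..1, (∫ t in (0:ℝ)..x, ω t * ub t) * q x ≤ ∫ x in (0:ℝ)..1, ω x * (ub x) ^ 2 := by
  set N : ℝ → ℝ := fun x => ∫ t in (0:ℝ)..x, ω t * ub t with hN
  set G : ℝ → ℝ := fun x => ∫ t in (0:ℝ)..x, ω t * φ t with hG
  have hφ : BC φ := .of_Icc hF.cont
  have hωub := hω.mul hub
  have hωφ := hω.mul hφ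
  have hNd : ∀ x ∈ Ioo (0:ℝ) 1, HasDerivAt N (ω x * ub x) x := fun x hx =>
    hωub.prim_hasDerivAt (by simp) hx
  have hGd : ∀ x ∈ Ioo (0:ℝ) 1, HasDerivAt G (ω x * φ x) x := fun x hx =>
    hωφ.prim_hasDerivAt (by simp) hx
  have hNc : ContinuousOn N (Icc 0 1) := hωub.prim_cont
  have hK0 : 0 ≤ K := (abs_nonneg _).trans (hK s₁ hs)
  set T : ℝ → ℝ := fun x => N x ^ 2 * φ x / G x with hT
  have hTd : ∀ x ∈ Ioo (0:ℝ) 1, HasDerivAt T (((2 * N x * (ω x * ub x)) * φ x + N x ^ 2 * φd x) / G x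
      - N x ^ 2 * φ x * (ω x * φ x) / G x ^ 2) x := by
    intro x hx
    have hGp := hF.gpos x hx
    have h1 := (((hNd x hx).pow 2).mul (hF.der x hx)).div (hGd x hx) hGp.ne'
    have h0 : G x ≠ 0 := hGp.ne'
    refine HasDerivAt.congr_deriv (f := T) h1 ?_
    simp only [Nat.cast_ofNat, Nat.add_one_sub_one, pow_one, Pi.pow_apply, Pi.mul_apply]
    field_simp
  set F : ℝ → ℝ := fun x => ω x * ub x ^ 2 - μ * (N x * q x) with hFd
  have hFbc : BC F := by
    have h1 := hω.mul (hub.mul hub)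
    have h2 := (BC.const μ).mul (hωub.prim.mul hq)
    simpa [hFd, sq, hN] using h1.sub h2
  have hle : ∀ x ∈ Ioo (0:ℝ) 1, ((2 * N x * (ω x * ub x)) * φ x + N x ^ 2 * φd x) / G x
      - N x ^ 2 * φ x * (ω x * φ x) / G x ^ 2 ≤ F x := by
    intro x hx
    have hGp : 0 < G x := hF.gpos x hx
    have hωx := hωp x hx
    have e1 : φd x = - (μ * G x) / ω x := by
      rw [eq_div_iff hωx.ne', mul_comm]; exact hF.eq x hx
    have e2 : q x = N x / ω x := by
      rw [eq_div_iff hωx.ne', mul_comm]; exact hqN x hx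
    have : F x - (((2 * N x * (ω x * ub x)) * φ x + N x ^ 2 * φd x) / G x
      - N x ^ 2 * φ x * (ω x * φ x) / G x ^ 2) = ω x * (ub x - N x * φ x / G x) ^ 2 := by
      simp only [hFd]
      rw [e1, e2]
      field_simp
      ring
    have h2 : 0 ≤ ω x * (ub x - N x * φ x / G x) ^ 2 := by positivity
    linarith
  have hab : ∀ a b, 0 < a → a ≤ b → b < 1 → T b - T a ≤ ∫ x in a..b, F x := by
    intro a b ha hab hb
    refine intervalIntegral.sub_le_integral_of_hasDeriv_right_of_le hab
      (fun x hx => (hTd x ⟨by linarith [hx.1], by linarith [hx.2]⟩).continuousAt.continuousWithinAt)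
      (fun x hx => (hTd x ⟨by linarith [hx.1], by linarith [hx.2]⟩).hasDerivWithinAt) ?_
      (fun x hx => hle x ⟨by linarith [hx.1], by linarith [hx.2]⟩)
    exact (hFbc.1.mono (fun x hx => ⟨by linarith [hx.1], by linarith [hx.2]⟩)).integrableOn_Icc
  have hTa : ∀ a ∈ Ioo 0 s₁, T a ≤ K * |N a| := by
    intro a ha
    have ha1 : a < 1 := ha.2.trans hs.2
    have hφa : 0 < φ a := hF.pos a ⟨ha.1.le, ha.2⟩
    have hWp : 0 < ∫ x in (0:ℝ)..a, ω x := hω.pos le_rfl ha.1 ha1.le (fun x hx => hωp x ⟨hx.1, hx.2.trans ha1⟩)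
    have h1 : φ a * ∫ x in (0:ℝ)..a, ω x ≤ G a := by
      rw [← intervalIntegral.integral_const_mul]
      refine ((BC.const _).mul hω).mono hωφ le_rfl ha.1.le ha1.le (fun x hx => ?_)
      rw [mul_comm]
      exact mul_le_mul_of_nonneg_left (hF.anti ⟨hx.1.le, hx.2.le.trans ha1.le⟩ ⟨ha.1.le, ha1.le⟩ hx.2.le)
        (hωp x ⟨hx.1, hx.2.trans ha1⟩).le
    have h2 : |N a| ≤ K * ∫ x in (0:ℝ)..a, ω x := by
      rw [← intervalIntegral.integral_const_mul]
      refine hωub.abs_le ((BC.const _).mul hω) le_rfl ha.1.le ha1.le (fun x hx => ?_)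
      have hx' : x ∈ Ioo (0:ℝ) 1 := ⟨hx.1, hx.2.trans ha1⟩
      rw [abs_mul, abs_of_pos (hωp x hx'), mul_comm]
      exact mul_le_mul_of_nonneg_right (hK x hx') (hωp x hx').le
    have hGp : 0 < G a := hF.gpos a ⟨ha.1, ha1⟩
    simp only [hT]
    rw [div_le_iff₀ hGp, ← sq_abs]
    nlinarith [mul_le_mul_of_nonneg_left h2 (mul_nonneg (abs_nonneg (N a)) hφa.le),
      mul_le_mul_of_nonneg_left h1 (mul_nonneg hK0 (abs_nonneg (N a)))]
  have hTb : ∀ b ∈ Ioo s₁ 1, - (K * |N b|) ≤ T b := by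
    intro b hb
    have hb0 : 0 < b := hs.1.trans hb.1
    have hφb : φ b < 0 := hF.neg b hb
    have h1 : (-φ b) * ∫ x in b..1, ω x ≤ G b := by
      have hsp := hωφ.split (a := 0) (b := b) (c := 1) (by simp) ⟨hb0.le, hb.2.le⟩ (by simp)
      rw [hF.mean] at hsp
      have : G b = ∫ x in b..1, -(ω x * φ x) := by
        rw [intervalIntegral.integral_neg]; simp only [hG]; linarith
      rw [this, ← intervalIntegral.integral_const_mul]
      refine ((BC.const _).mul hω).mono hωφ.neg hb0.le hb.2.le le_rfl (fun x hx => ?_)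
      have := mul_le_mul_of_nonneg_left (hF.anti ⟨hb0.le, hb.2.le⟩ ⟨hb0.le.trans hx.1.le, hx.2.le⟩ hx.1.le)
        (hωp x ⟨hb0.trans hx.1, hx.2⟩).le
      linarith
    have h2 : |N b| ≤ K * ∫ x in b..1, ω x := by
      have hsp := hωub.split (a := 0) (b := b) (c := 1) (by simp) ⟨hb0.le, hb.2.le⟩ (by simp)
      rw [hmean] at hsp
      have : N b = - ∫ x in b..1, ω x * ub x := by simp only [hN]; linarith
      rw [this, abs_neg, ← intervalIntegral.integral_const_mul]
      refine hωub.abs_le ((BC.const _).mul hω) hb0.le hb.2.le le_rfl (fun x hx => ?_)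
      have hx' : x ∈ Ioo (0:ℝ) 1 := ⟨hb0.trans hx.1, hx.2⟩
      rw [abs_mul, abs_of_pos (hωp x hx'), mul_comm]
      exact mul_le_mul_of_nonneg_right (hK x hx') (hωp x hx').le
    have hGp : 0 < G b := hF.gpos b ⟨hb0, hb.2⟩
    simp only [hT]
    rw [le_div_iff₀ hGp, ← sq_abs]
    nlinarith [mul_le_mul_of_nonneg_left h2 (mul_nonneg (abs_nonneg (N b)) (neg_nonneg.2 hφb.le)),
      mul_le_mul_of_nonneg_left h1 (mul_nonneg hK0 (abs_nonneg (N b)))]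
  set P : ℝ → ℝ := fun x => ∫ t in (0:ℝ)..x, F t with hP
  have hPc : ContinuousOn P (Icc 0 1) := hFbc.prim_cont
  have hN1 : N 1 = 0 := hmean
  have hN0 : N 0 = 0 := by simp [hN]
  have hP0 : P 0 = 0 := by simp [hP]
  have tid : Tendsto (fun t : ℝ => t) (𝓝[>] 0) (𝓝[Icc 0 1] 0) := by
    rw [tendsto_nhdsWithin_iff]
    refine ⟨tendsto_id.mono_left nhdsWithin_le_nhds, ?_⟩
    filter_upwards [Ioo_mem_nhdsGT (zero_lt_one (α := ℝ))] with t ht using Ioo_subset_Icc_self ht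
  have t1m : Tendsto (fun t : ℝ => 1 - t) (𝓝[>] 0) (𝓝[Icc 0 1] 1) := by
    rw [tendsto_nhdsWithin_iff]
    refine ⟨?_, ?_⟩
    · have : Tendsto (fun t : ℝ => 1 - t) (𝓝 0) (𝓝 (1 - 0)) := (continuous_const.sub continuous_id).tendsto 0
      rw [sub_zero] at this
      exact this.mono_left nhdsWithin_le_nhds
    · filter_upwards [Ioo_mem_nhdsGT (zero_lt_one (α := ℝ))] with t ht
      exact ⟨by linarith [ht.2], by linarith [ht.1]⟩
  have hlim : Tendsto (fun t => P (1 - t) - P t + K * |N (1 - t)| + K * |N t|) (𝓝[>] 0)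
      (𝓝 (P 1 - P 0 + K * |N 1| + K * |N 0|)) := by
    have a1 := (hPc 1 (by simp)).tendsto.comp t1m
    have a0 := (hPc 0 (by simp)).tendsto.comp tid
    have b1 := (hNc 1 (by simp)).tendsto.comp t1m
    have b0 := (hNc 0 (by simp)).tendsto.comp tid
    exact ((a1.sub a0).add (b1.abs.const_mul K)).add (b0.abs.const_mul K)
  have hfin : 0 ≤ P 1 - P 0 + K * |N 1| + K * |N 0| := by
    refine ge_of_tendsto hlim ?_
    filter_upwards [Ioo_mem_nhdsGT (lt_min hs.1 (sub_pos.2 hs.2))] with t ht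
    have ht1 : t < s₁ := ht.2.trans_le (min_le_left _ _)
    have ht2 : t < 1 - s₁ := ht.2.trans_le (min_le_right _ _)
    have h1 := hab t (1 - t) ht.1 (by linarith) (by linarith [ht.1])
    have h2 := hTa t ⟨ht.1, ht1⟩
    have h3 := hTb (1 - t) ⟨by linarith, by linarith [ht.1]⟩
    have h4 := hFbc.split (a := 0) (b := t) (c := 1 - t) (by simp) ⟨ht.1.le, by linarith [hs.2]⟩
      ⟨by linarith [hs.1], by linarith [ht.1]⟩
    simp only [hP]
    linarith
  rw [hN1, hN0, hP0] at hfin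
  simp only [abs_zero, mul_zero, add_zero, sub_zero] at hfin
  have hs2 : P 1 = (∫ x in (0:ℝ)..1, ω x * ub x ^ 2) - μ * ∫ x in (0:ℝ)..1, N x * q x := by
    simp only [hP, hFd]
    rw [intervalIntegral.integral_sub, intervalIntegral.integral_const_mul]
    · have := (hω.mul (hub.mul hub)).ii01
      simpa [sq] using this
    · exact ((BC.const μ).mul (hωub.prim.mul hq)).ii01
  linarith

lemma lam_le_mu {ω φ φd : ℝ → ℝ} {lam μ s₁ : ℝ} (hω : BC ω) (hωp : ∀ x ∈ Ioo (0:ℝ) 1, 0 < ω x)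
    (hs : s₁ ∈ Ioo (0:ℝ) 1) (hF : PhiFacts ω μ φ φd s₁) (hlam : 0 < lam)
    (hR : ∀ g : ℝ → ℝ, ContDiff ℝ (⊤:ℕ∞) g → ∀ k : ℝ,
      (∫ x in (0:ℝ)..1, ω x * (k + ∫ t in (0:ℝ)..x, g t)) = 0 →
      lam * (∫ x in (0:ℝ)..1, ω x * (k + ∫ t in (0:ℝ)..x, g t) ^ 2) ≤ ∫ x in (0:ℝ)..1, ω x * g x ^ 2) :
    lam ≤ μ := by
  have hφ : BC φ := .of_Icc hF.cont
  have hφd : BC φd := .of_Icc hF.contd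
  have hωφ := hω.mul hφ
  set w := ∫ x in (0:ℝ)..1, ω x with hw
  have hwp : 0 < w := hω.pos le_rfl one_pos le_rfl hωp
  set A := ∫ x in (0:ℝ)..1, ω x * φ x ^ 2 with hA
  have hωφ2 : BC (fun x => ω x * φ x ^ 2) := by simpa [sq] using hω.mul (hφ.mul hφ)
  have hωφd2 : BC (fun x => ω x * φd x ^ 2) := by simpa [sq] using hω.mul (hφd.mul hφd)
  have hAp : 0 < A := by
    have h1 := hωφ2.split (a := 0) (b := s₁) (c := 1) (by simp) (Ioo_subset_Icc_self hs) (by simp)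
    have h2 := hωφ2.pos le_rfl hs.1 hs.2.le (fun x hx => mul_pos (hωp x ⟨hx.1, hx.2.trans hs.2⟩)
      (pow_pos (hF.pos x ⟨hx.1.le, hx.2⟩) 2))
    have h3 := hωφ2.pos hs.1.le hs.2 le_rfl (fun x hx => mul_pos (hωp x ⟨hs.1.trans hx.1, hx.2⟩)
      (sq_pos_of_neg (hF.neg x hx)))
    simp only [hA]; linarith
  -- energy identity
  have hen : ∫ x in (0:ℝ)..1, ω x * φd x ^ 2 = μ * A := by
    have h1 := intervalIntegral.integral_mul_deriv_eq_deriv_mul_of_hasDerivAt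
      (u := fun x => ∫ t in (0:ℝ)..x, ω t * φ t) (v := φ) (u' := fun x => ω x * φ x) (v' := φd)
      (a := 0) (b := 1) (by rw [uIcc_of_le zero_le_one]; exact hωφ.prim_cont)
      (by rw [uIcc_of_le zero_le_one]; exact hF.cont)
      (by simp only [zero_le_one, min_eq_left, max_eq_right]; exact fun x hx => hωφ.prim_hasDerivAt (by simp) hx)
      (by simp only [zero_le_one, min_eq_left, max_eq_right]; exact hF.der) hωφ.ii01 hφd.ii01
    simp only [hF.mean, intervalIntegral.integral_same, zero_mul, sub_self, zero_sub] at h1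
    have h2 : ∫ x in (0:ℝ)..1, ω x * φd x ^ 2 = ∫ x in (0:ℝ)..1, -μ * ((∫ t in (0:ℝ)..x, ω t * φ t) * φd x) := by
      rw [intervalIntegral.integral_of_le zero_le_one, intervalIntegral.integral_of_le zero_le_one,
        integral_Ioc_eq_integral_Ioo, integral_Ioc_eq_integral_Ioo]
      refine setIntegral_congr_fun measurableSet_Ioo (fun x hx => ?_)
      have := hF.eq x hx
      calc ω x * φd x ^ 2 = (ω x * φd x) * φd x := by ring
        _ = _ := by rw [this]; ring
    rw [h2, intervalIntegral.integral_const_mul, h1, hA]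
    have : ∀ x, ω x * φ x ^ 2 = ω x * φ x * φ x := fun x => by ring
    simp only [this]; ring
  obtain ⟨B, hB⟩ := hφ.2
  obtain ⟨D, hD⟩ := hφd.2
  have hB0 : 0 ≤ B := (abs_nonneg _).trans (hB s₁ hs)
  have hD0 : 0 ≤ D := (abs_nonneg _).trans (hD s₁ hs)
  have key : ∀ η, 0 < η → η ≤ 1 → lam * (A - 4 * B * η * w) ≤ μ * A + (2 * D + 1) * η * w := by
    intro η hη hη1
    obtain ⟨p, hp⟩ := exists_polynomial_near_of_continuousOn 0 1 φd hF.contd η hη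
    set g : ℝ → ℝ := fun x => p.eval x with hg
    have hgs : ContDiff ℝ (⊤:ℕ∞) g := by simpa [hg] using p.contDiff_aeval (𝕜 := ℝ) (⊤:ℕ∞)
    have hgbc : BC g := .of_Icc hgs.continuous.continuousOn
    set W0 : ℝ → ℝ := fun x => φ 0 + ∫ t in (0:ℝ)..x, g t with hW0
    have hW0bc : BC W0 := (BC.const _).add hgbc.prim
    have hφint : ∀ x ∈ Ioo (0:ℝ) 1, φ x = φ 0 + ∫ t in (0:ℝ)..x, φd t := by
      intro x hx
      have := intervalIntegral.integral_eq_sub_of_hasDerivAt_of_le hx.1.le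
        (hF.cont.mono (Icc_subset_Icc le_rfl hx.2.le)) (fun t ht => hF.der t ⟨ht.1, ht.2.trans hx.2⟩)
        (hφd.ii (by simp) (Ioo_subset_Icc_self hx))
      linarith
    have hclose : ∀ x ∈ Ioo (0:ℝ) 1, |W0 x - φ x| ≤ η := by
      intro x hx
      rw [hφint x hx]
      have : W0 x - (φ 0 + ∫ t in (0:ℝ)..x, φd t) = ∫ t in (0:ℝ)..x, (g t - φd t) := by
        rw [intervalIntegral.integral_sub (hgbc.ii (by simp) (Ioo_subset_Icc_self hx))
          (hφd.ii (by simp) (Ioo_subset_Icc_self hx))]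
        simp only [hW0]; ring
      rw [this]
      refine ((hgbc.sub hφd).abs_le (BC.const η) le_rfl hx.1.le hx.2.le (fun t ht => ?_)).trans ?_
      · exact (hp t ⟨ht.1.le, (ht.2.trans hx.2).le⟩).le
      · simp; nlinarith [hx.2]
    set κ := (∫ x in (0:ℝ)..1, ω x * W0 x) / w with hκ
    have hκb : |κ| ≤ η := by
      rw [hκ, abs_div, abs_of_pos hwp, div_le_iff₀ hwp]
      have : ∫ x in (0:ℝ)..1, ω x * W0 x = ∫ x in (0:ℝ)..1, ω x * (W0 x - φ x) := by
        simp only [mul_sub]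
        rw [intervalIntegral.integral_sub (hω.mul hW0bc).ii01 hωφ.ii01, hF.mean, sub_zero]
      rw [this, hw, ← intervalIntegral.integral_const_mul]
      refine (hω.mul (hW0bc.sub hφ)).abs_le ((BC.const η).mul hω) le_rfl zero_le_one le_rfl (fun x hx => ?_)
      rw [abs_mul, abs_of_pos (hωp x hx), mul_comm]
      exact mul_le_mul_of_nonneg_right (hclose x hx) (hωp x hx).le
    have hWeq : ∀ x, (φ 0 - κ) + ∫ t in (0:ℝ)..x, g t = W0 x - κ := fun x => by
      simp only [hW0]; ring
    have h := hR g hgs (φ 0 - κ)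
    simp only [hWeq] at h
    have hmean0 : ∫ x in (0:ℝ)..1, ω x * (W0 x - κ) = 0 := by
      simp only [mul_sub]
      rw [intervalIntegral.integral_sub (hω.mul hW0bc).ii01 (hω.mul (BC.const κ)).ii01,
        intervalIntegral.integral_mul_const, hκ]
      field_simp
      simp only [hw]; ring
    have h := h hmean0
    have hl : A - 4 * B * η * w ≤ ∫ x in (0:ℝ)..1, ω x * (W0 x - κ) ^ 2 := by
      have : A - 4 * B * η * w = ∫ x in (0:ℝ)..1, (ω x * φ x ^ 2 - 4 * B * η * ω x) := by
        rw [intervalIntegral.integral_sub hωφ2.ii01 ((BC.const (4 * B * η)).mul hω).ii01,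
          intervalIntegral.integral_const_mul]
      rw [this]
      have hbc : BC (fun x => ω x * (W0 x - κ) ^ 2) := by
        have := hW0bc.sub (BC.const κ)
        simpa [sq] using hω.mul (this.mul this)
      refine (hωφ2.sub ((BC.const (4 * B * η)).mul hω)).mono hbc le_rfl zero_le_one le_rfl (fun x hx => ?_)
      have h1 := abs_le.1 (hclose x hx)
      have h2 := abs_le.1 hκb
      have h3 := abs_le.1 (hB x hx)
      have hz : |W0 x - κ - φ x| ≤ 2 * η := by rw [abs_le]; constructor <;> linarith
      have h4 : |φ x * (W0 x - κ - φ x)| ≤ B * (2 * η) := by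
        rw [abs_mul]; exact mul_le_mul (hB x hx) hz (abs_nonneg _) hB0
      have h5 := (abs_le.1 h4).1
      have : φ x ^ 2 - 4 * B * η ≤ (W0 x - κ) ^ 2 := by nlinarith [sq_nonneg (W0 x - κ - φ x)]
      nlinarith [mul_le_mul_of_nonneg_left this (hωp x hx).le]
    have hr : ∫ x in (0:ℝ)..1, ω x * g x ^ 2 ≤ μ * A + (2 * D + 1) * η * w := by
      have : μ * A + (2 * D + 1) * η * w = ∫ x in (0:ℝ)..1, (ω x * φd x ^ 2 + (2 * D + 1) * η * ω x) := by
        rw [intervalIntegral.integral_add hωφd2.ii01 ((BC.const ((2 * D + 1) * η)).mul hω).ii01,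
          intervalIntegral.integral_const_mul, hen]
      rw [this]
      have hbc : BC (fun x => ω x * g x ^ 2) := by simpa [sq] using hω.mul (hgbc.mul hgbc)
      refine hbc.mono (hωφd2.add ((BC.const ((2 * D + 1) * η)).mul hω)) le_rfl zero_le_one le_rfl (fun x hx => ?_)
      have h1 : |g x - φd x| ≤ η := (hp x (Ioo_subset_Icc_self hx)).le
      have h4 : |φd x * (g x - φd x)| ≤ D * η := by
        rw [abs_mul]; exact mul_le_mul (hD x hx) h1 (abs_nonneg _) hD0
      have h5 := (abs_le.1 h4).2
      have h6 : (g x - φd x) ^ 2 ≤ η := by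
        rw [← sq_abs]; nlinarith [abs_nonneg (g x - φd x)]
      have : g x ^ 2 ≤ φd x ^ 2 + (2 * D + 1) * η := by nlinarith
      nlinarith [mul_le_mul_of_nonneg_left this (hωp x hx).le]
    calc lam * (A - 4 * B * η * w) ≤ lam * ∫ x in (0:ℝ)..1, ω x * (W0 x - κ) ^ 2 :=
          mul_le_mul_of_nonneg_left hl hlam.le
      _ ≤ _ := h.trans hr
  by_contra hlt
  push Not at hlt
  set Q := (4 * B * lam + 2 * D + 1) * w with hQ
  have hQp : 0 < Q := by positivity
  set η := min 1 ((lam - μ) * A / (2 * Q)) with hη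
  have hηp : 0 < η := lt_min one_pos (div_pos (mul_pos (sub_pos.2 hlt) hAp) (by positivity))
  have h1 := key η hηp (min_le_left _ _)
  have h2 : η ≤ (lam - μ) * A / (2 * Q) := min_le_right _ _
  rw [le_div_iff₀ (by positivity)] at h2
  have h3 : 0 < (lam - μ) * A := mul_pos (sub_pos.2 hlt) hAp
  have h4 : (lam - μ) * A ≤ η * Q := by rw [hQ]; linarith
  linarith


/-- The hypotheses of the one-dimensional problem. -/
structure OneD (m : ℕ) (K c ε lam μ L0 L1 s₁ : ℝ) (ω ub f φ φd : ℝ → ℝ) : Prop where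
  hK : 1 ≤ K
  hc : 0 < c
  hc1 : c ≤ 1
  hε : 0 < ε
  hω : BC ω
  hωp : ∀ x ∈ Ioo (0:ℝ) 1, 0 < ω x
  R1 : ∀ s ∈ Ioo (0:ℝ) 1, ∀ t ∈ Ioo (0:ℝ) 1, s < t → ω s ≤ (2 / (1 - t)) ^ m * ω t
  R2 : ∀ s ∈ Ioo (0:ℝ) 1, ∀ t ∈ Ioo (0:ℝ) 1, s < t → ω t ≤ (2 / s) ^ m * ω s
  ubc : ContinuousOn ub (Ioo 0 1)
  ubb : ∀ x ∈ Ioo (0:ℝ) 1, |ub x| ≤ K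
  fc : ContinuousOn f (Ioo 0 1)
  fb : ∀ x ∈ Ioo (0:ℝ) 1, |f x| ≤ K
  feq : ∀ x ∈ Ioo (0:ℝ) 1, ω x * f x = - (lam * ∫ t in (0:ℝ)..x, ω t * ub t)
  mean : ∫ t in (0:ℝ)..1, ω t * ub t = 0
  hE : ∀ x ∈ Ioo (0:ℝ) 1, ∀ x' ∈ Ioo (0:ℝ) 1, x ≤ x' → |ub x' - ub x - ∫ t in x..x', f t| ≤ K * ε
  lim0 : Tendsto ub (𝓝[>] 0) (𝓝 L0)
  lim1 : Tendsto ub (𝓝[<] 1) (𝓝 L1)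
  hL0 : c ≤ L0
  hL1 : L1 ≤ -c
  hlam : 0 < lam
  hlm : lam ≤ μ
  hs : s₁ ∈ Ioo (0:ℝ) 1
  hs0 : φ s₁ = 0
  hF : PhiFacts ω μ φ φd s₁
  hφ0 : φ 0 = L0

namespace OneD

variable {m : ℕ} {K c ε lam μ L0 L1 s₁ : ℝ} {ω ub f φ φd : ℝ → ℝ}

lemma ub_bc (h : OneD m K c ε lam μ L0 L1 s₁ ω ub f φ φd) : BC ub := ⟨h.ubc, K, h.ubb⟩
lemma f_bc (h : OneD m K c ε lam μ L0 L1 s₁ ω ub f φ φd) : BC f := ⟨h.fc, K, h.fb⟩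

lemma tid : Tendsto (fun t : ℝ => t) (𝓝[>] 0) (𝓝[Icc 0 1] 0) := by
  rw [tendsto_nhdsWithin_iff]
  refine ⟨tendsto_id.mono_left nhdsWithin_le_nhds, ?_⟩
  filter_upwards [Ioo_mem_nhdsGT (zero_lt_one (α := ℝ))] with t ht using Ioo_subset_Icc_self ht

lemma t1d : Tendsto (fun t : ℝ => t) (𝓝[<] 1) (𝓝[Icc 0 1] 1) := by
  rw [tendsto_nhdsWithin_iff]
  refine ⟨tendsto_id.mono_left nhdsWithin_le_nhds, ?_⟩
  filter_upwards [Ioo_mem_nhdsLT (zero_lt_one (α := ℝ))] with t ht using Ioo_subset_Icc_self ht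

lemma U0 (h : OneD m K c ε lam μ L0 L1 s₁ ω ub f φ φd) {x : ℝ} (hx : x ∈ Ioo (0:ℝ) 1) :
    |ub x - (L0 + ∫ t in (0:ℝ)..x, f t)| ≤ K * ε := by
  have hp := h.f_bc.prim_cont
  have h1 := (hp 0 (by simp)).tendsto.comp tid
  simp only [intervalIntegral.integral_same] at h1
  have h2 : Tendsto (fun s => |ub x - ub s - ((∫ t in (0:ℝ)..x, f t) - ∫ t in (0:ℝ)..s, f t)|) (𝓝[>] 0)
      (𝓝 |ub x - L0 - ((∫ t in (0:ℝ)..x, f t) - 0)|) :=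
    ((h.lim0.const_sub _).sub (h1.const_sub _)).abs
  have h3 : |ub x - L0 - ((∫ t in (0:ℝ)..x, f t) - 0)| ≤ K * ε := by
    refine le_of_tendsto h2 ?_
    filter_upwards [Ioo_mem_nhdsGT hx.1] with s hs
    have hs' : s ∈ Ioo (0:ℝ) 1 := ⟨hs.1, hs.2.trans hx.2⟩
    have := h.hE s hs' x hx hs.2.le
    rwa [h.f_bc.split (a := 0) (b := s) (c := x) (by simp) (Ioo_subset_Icc_self hs')
      (Ioo_subset_Icc_self hx), add_sub_cancel_left]
  convert h3 using 2
  ring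

lemma U1 (h : OneD m K c ε lam μ L0 L1 s₁ ω ub f φ φd) {x : ℝ} (hx : x ∈ Ioo (0:ℝ) 1) :
    |L1 - ub x - ∫ t in x..1, f t| ≤ K * ε := by
  have hp := h.f_bc.prim_cont
  have h1 := (hp 1 (by simp)).tendsto.comp t1d
  have h2 : Tendsto (fun s => |ub s - ub x - ((∫ t in (0:ℝ)..s, f t) - ∫ t in (0:ℝ)..x, f t)|) (𝓝[<] 1)
      (𝓝 |L1 - ub x - ((∫ t in (0:ℝ)..1, f t) - ∫ t in (0:ℝ)..x, f t)|) :=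
    ((h.lim1.sub_const _).sub (h1.sub_const _)).abs
  have h3 : |L1 - ub x - ((∫ t in (0:ℝ)..1, f t) - ∫ t in (0:ℝ)..x, f t)| ≤ K * ε := by
    refine le_of_tendsto h2 ?_
    filter_upwards [Ioo_mem_nhdsLT hx.2] with s hs
    have hs' : s ∈ Ioo (0:ℝ) 1 := ⟨hx.1.trans hs.1, hs.2⟩
    have := h.hE x hx s hs' hs.1.le
    rwa [h.f_bc.split (a := 0) (b := x) (c := s) (by simp) (Ioo_subset_Icc_self hx)
      (Ioo_subset_Icc_self hs'), add_sub_cancel_left]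
  rwa [h.f_bc.split (a := 0) (b := x) (c := 1) (by simp) (Ioo_subset_Icc_self hx)
      (by simp), add_sub_cancel_left] at h3

lemma f_int (h : OneD m K c ε lam μ L0 L1 s₁ ω ub f φ φd) {a b : ℝ} (ha : 0 ≤ a) (hab : a ≤ b) (hb : b ≤ 1) :
    |∫ t in a..b, f t| ≤ K * (b - a) := by
  have := h.f_bc.abs_le (BC.const K) ha hab hb (fun x hx => h.fb x ⟨by linarith [hx.1], by linarith [hx.2]⟩)
  simp at this
  linarith

lemma ub_left (h : OneD m K c ε lam μ L0 L1 s₁ ω ub f φ φd) {δ x : ℝ} (hδ : K * δ ≤ c / 8) (hε : K * ε ≤ c / 8)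
    (hx : x ∈ Ioo (0:ℝ) 1) (hxδ : x ≤ δ) : 3 * c / 4 ≤ ub x := by
  have h1 := (abs_le.1 (h.U0 hx)).1
  have h2 := (abs_le.1 (h.f_int le_rfl hx.1.le hx.2.le)).1
  have h3 : K * x ≤ K * δ := mul_le_mul_of_nonneg_left hxδ (by linarith [h.hK])
  have := h.hL0
  linarith

lemma ub_right (h : OneD m K c ε lam μ L0 L1 s₁ ω ub f φ φd) {δ x : ℝ} (hδ : K * δ ≤ c / 8) (hε : K * ε ≤ c / 8)
    (hx : x ∈ Ioo (0:ℝ) 1) (hxδ : 1 - 2 * δ ≤ x) : ub x ≤ - (5 * c / 8) := by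
  have h1 := (abs_le.1 (h.U1 hx)).1
  have h2 := (abs_le.1 (h.f_int hx.1.le hx.2.le le_rfl)).1
  have h3 : K * (1 - x) ≤ K * (2 * δ) := mul_le_mul_of_nonneg_left (by linarith) (by linarith [h.hK])
  have := h.hL1
  linarith

/-- mass ratio constant -/
def kap (m : ℕ) (δ : ℝ) : ℝ := (4 / δ) ^ m * (2 / δ)

lemma kap_ge (m : ℕ) {δ : ℝ} (hδ : 0 < δ) (hδ1 : δ ≤ 1) :
    1 ≤ kap m δ ∧ (2 / δ) ^ m ≤ kap m δ ∧ (2 / δ) ^ m / δ ≤ kap m δ := by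
  have h1 : (1:ℝ) ≤ 2 / δ := by rw [le_div_iff₀ hδ]; linarith
  have h2 : (2:ℝ) / δ ≤ 4 / δ := by gcongr; norm_num
  have h3 : (2 / δ) ^ m ≤ (4 / δ) ^ m := by gcongr
  have h4 : (1:ℝ) ≤ (2 / δ) ^ m := one_le_pow₀ h1
  have h5 : (1:ℝ)/δ ≤ 2 / δ := by gcongr; norm_num
  unfold kap
  refine ⟨by nlinarith, by nlinarith, ?_⟩
  rw [div_eq_mul_one_div]
  exact mul_le_mul h3 h5 (by positivity) (by positivity)

lemma MR1 (h : OneD m K c ε lam μ L0 L1 s₁ ω ub f φ φd) {δ x : ℝ} (hδ : 0 < δ) (hδ1 : δ ≤ 1)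
    (hx : x ∈ Ioo (0:ℝ) 1) (hxδ : δ ≤ x) : ω x ≤ kap m δ * ∫ t in (0:ℝ)..δ, ω t := by
  have h1 : (δ / 2) * ω x ≤ ∫ t in (δ/2)..δ, (4 / δ) ^ m * ω t := by
    have := (BC.const (ω x)).mono ((BC.const ((4 / δ) ^ m)).mul h.hω) (a := δ/2) (b := δ) (by linarith) (by linarith) hδ1
      (fun t ht => by
        have ht' : t ∈ Ioo (0:ℝ) 1 := ⟨by linarith [ht.1], by linarith [ht.2, hx.2]⟩
        refine (h.R2 t ht' x hx (by linarith [ht.2])).trans ?_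
        have : 2 / t ≤ 4 / δ := by
          rw [div_le_div_iff₀ ht'.1 hδ]; linarith [ht.1]
        have h0 : 0 ≤ 2 / t := by have := ht'.1; positivity
        exact mul_le_mul_of_nonneg_right (pow_le_pow_left₀ h0 this m) (h.hωp t ht').le)
    rw [intervalIntegral.integral_const] at this
    simp only [smul_eq_mul] at this
    linarith
  rw [intervalIntegral.integral_const_mul] at h1
  have h2 := h.hω.split (a := 0) (b := δ/2) (c := δ) (by simp) ⟨by linarith, by linarith⟩ ⟨hδ.le, hδ1⟩
  have h3 := h.hω.pos le_rfl (half_pos hδ) (by linarith) (fun t ht => h.hωp t ⟨ht.1, by linarith [ht.2]⟩)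
  have h4 : 0 < (4 / δ) ^ m := by positivity
  have h5 : (δ / 2) * ω x ≤ (4 / δ) ^ m * ∫ t in (0:ℝ)..δ, ω t :=
    h1.trans (mul_le_mul_of_nonneg_left (by linarith) h4.le)
  unfold kap
  calc ω x = (2 / δ) * ((δ / 2) * ω x) := by field_simp
    _ ≤ (2 / δ) * ((4 / δ) ^ m * ∫ t in (0:ℝ)..δ, ω t) := mul_le_mul_of_nonneg_left h5 (by positivity)
    _ = _ := by ring

lemma MR2 (h : OneD m K c ε lam μ L0 L1 s₁ ω ub f φ φd) {δ x : ℝ} (hδ : 0 < δ) (hδ1 : δ < 1 / 2)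
    (hx : x ∈ Ioo (0:ℝ) 1) (hxδ : x ≤ 1 - 2 * δ) :
    ω x ≤ kap m δ * ∫ t in (1 - 2 * δ)..(1 - δ), ω t := by
  have h1 : δ * ω x ≤ ∫ t in (1 - 2 * δ)..(1 - δ), (2 / δ) ^ m * ω t := by
    have := (BC.const (ω x)).mono ((BC.const ((2 / δ) ^ m)).mul h.hω) (a := 1 - 2 * δ) (b := 1 - δ)
      (by linarith) (by linarith) (by linarith)
      (fun t ht => by
        have ht' : t ∈ Ioo (0:ℝ) 1 := ⟨by linarith [ht.1], by linarith [ht.2, hx.2]⟩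
        refine (h.R1 x hx t ht' (by linarith [ht.1])).trans ?_
        have hp : 0 < 1 - t := by linarith [ht'.2]
        have : 2 / (1 - t) ≤ 2 / δ := by
          rw [div_le_div_iff₀ hp hδ]; linarith [ht.2]
        have h0 : 0 ≤ 2 / (1 - t) := by positivity
        exact mul_le_mul_of_nonneg_right (pow_le_pow_left₀ h0 this m) (h.hωp t ht').le)
    rw [intervalIntegral.integral_const] at this
    simp only [smul_eq_mul] at this
    linarith
  rw [intervalIntegral.integral_const_mul] at h1
  have h3 := h.hω.pos (a := 1 - 2 * δ) (b := 1 - δ) (by linarith) (by linarith) (by linarith)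
    (fun t ht => h.hωp t ⟨by linarith [ht.1], by linarith [ht.2]⟩)
  have h5 := (kap_ge m hδ (by linarith)).2.2
  calc ω x = (1 / δ) * (δ * ω x) := by field_simp
    _ ≤ (1 / δ) * ((2 / δ) ^ m * ∫ t in (1 - 2 * δ)..(1 - δ), ω t) := mul_le_mul_of_nonneg_left h1 (by positivity)
    _ = (2 / δ) ^ m / δ * ∫ t in (1 - 2 * δ)..(1 - δ), ω t := by ring
    _ ≤ _ := mul_le_mul_of_nonneg_right h5 h3.le

lemma MR3 (h : OneD m K c ε lam μ L0 L1 s₁ ω ub f φ φd) {δ x : ℝ} (hδ : 0 < δ) (hδ1 : δ ≤ 1)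
    (hx : x ∈ Ioo (0:ℝ) 1) (hxδ : x ≤ 1 - δ) : ∫ t in (0:ℝ)..x, ω t ≤ kap m δ * ω x := by
  have h1 := h.hω.mono (BC.const ((2 / δ) ^ m * ω x)) le_rfl hx.1.le hx.2.le (fun t ht => by
    have ht' : t ∈ Ioo (0:ℝ) 1 := ⟨by linarith [ht.1], by linarith [ht.2, hx.2]⟩
    refine (h.R1 t ht' x hx ht.2).trans ?_
    have hp : 0 < 1 - x := by linarith [hx.2]
    have : 2 / (1 - x) ≤ 2 / δ := by
      rw [div_le_div_iff₀ hp hδ]; linarith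
    have h0 : 0 ≤ 2 / (1 - x) := by positivity
    exact mul_le_mul_of_nonneg_right (pow_le_pow_left₀ h0 this m) (h.hωp x hx).le)
  rw [intervalIntegral.integral_const] at h1
  simp only [smul_eq_mul, sub_zero] at h1
  have h2 : 0 ≤ (2 / δ) ^ m * ω x := mul_nonneg (by positivity) (h.hωp x hx).le
  have h3 := mul_le_mul_of_nonneg_right (kap_ge m hδ hδ1).2.1 (h.hωp x hx).le
  nlinarith [hx.2]

/-- Eigenvalue comparison. -/
lemma eig (h : OneD m K c ε lam μ L0 L1 s₁ ω ub f φ φd) {δ a₀ : ℝ} (hδ0 : 0 < δ) (hδ1 : δ ≤ 1)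
    (hδ : K * δ ≤ c / 8) (hε : K * ε ≤ c / 8) (ha : 0 < a₀) (ha₀ : a₀ * (1 + kap m δ) = c ^ 2 / 4)
    (hεa : 2 * K ^ 2 * ε ≤ a₀) :
    lam ≤ 2 * K ^ 2 / a₀ ∧ μ ≤ 4 * K ^ 2 / a₀ ∧ μ - lam ≤ 4 * K ^ 4 / a₀ ^ 2 * ε := by
  have hub := h.ub_bc
  have hf := h.f_bc
  have hω := h.hω
  have hωub := hω.mul hub
  set N : ℝ → ℝ := fun x => ∫ t in (0:ℝ)..x, ω t * ub t with hN
  set U : ℝ → ℝ := fun x => L0 + ∫ t in (0:ℝ)..x, f t with hU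
  have hUbc : BC U := (BC.const _).add hf.prim
  have hlam := h.hlam
  have hμ : 0 < μ := h.hlam.trans_le h.hlm
  set w := ∫ x in (0:ℝ)..1, ω x with hw
  have hwp : 0 < w := hω.pos le_rfl one_pos le_rfl h.hωp
  set A := ∫ x in (0:ℝ)..1, ω x * ub x ^ 2 with hA
  set J := ∫ x in (0:ℝ)..1, ω x * ub x * U x with hJ
  have hωub2 : BC (fun x => ω x * ub x ^ 2) := by simpa [sq] using hω.mul (hub.mul hub)
  have hωf2 : BC (fun x => ω x * f x ^ 2) := by simpa [sq] using hω.mul (hf.mul hf)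
  have hAl : a₀ * w ≤ A := by
    have h1 : (c ^ 2 / 4) * ∫ x in (0:ℝ)..δ, ω x ≤ ∫ x in (0:ℝ)..δ, ω x * ub x ^ 2 := by
      rw [← intervalIntegral.integral_const_mul]
      refine ((BC.const _).mul hω).mono hωub2 le_rfl hδ0.le hδ1 (fun x hx => ?_)
      have hx' : x ∈ Ioo (0:ℝ) 1 := ⟨hx.1, by linarith [hx.2]⟩
      have := h.ub_left hδ hε hx' hx.2.le
      have hc := h.hc
      rw [mul_comm]
      exact mul_le_mul_of_nonneg_left (by nlinarith) (h.hωp x hx').le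
    have h2 : ∫ x in δ..1, ω x ≤ kap m δ * ∫ x in (0:ℝ)..δ, ω x := by
      have hk : 0 ≤ kap m δ * ∫ x in (0:ℝ)..δ, ω x := mul_nonneg (by linarith [(kap_ge m hδ0 hδ1).1])
        (hω.pos le_rfl hδ0 hδ1 (fun x hx => h.hωp x ⟨hx.1, by linarith [hx.2]⟩)).le
      have := hω.mono (BC.const (kap m δ * ∫ x in (0:ℝ)..δ, ω x)) hδ0.le hδ1 le_rfl (fun x hx =>
        h.MR1 hδ0 hδ1 ⟨by linarith [hx.1], hx.2⟩ hx.1.le)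
      rw [intervalIntegral.integral_const] at this
      simp only [smul_eq_mul] at this
      nlinarith
    have h3 := hω.split (a := 0) (b := δ) (c := 1) (by simp) ⟨hδ0.le, hδ1⟩ (by simp)
    have h4 := hωub2.split (a := 0) (b := δ) (c := 1) (by simp) ⟨hδ0.le, hδ1⟩ (by simp)
    have h5 : 0 ≤ ∫ x in δ..1, ω x * ub x ^ 2 := by
      refine intervalIntegral.integral_nonneg_of_ae_restrict hδ1 ?_
      rw [EventuallyLE, ← restrict_Ioo_eq_restrict_Icc]
      filter_upwards [ae_restrict_mem measurableSet_Ioo] with x hx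
      exact mul_nonneg (h.hωp x ⟨by linarith [hx.1], hx.2⟩).le (sq_nonneg _)
    have h6 : a₀ * w ≤ a₀ * ((1 + kap m δ) * ∫ x in (0:ℝ)..δ, ω x) :=
      mul_le_mul_of_nonneg_left (by rw [hw, h3]; linarith) ha.le
    rw [← mul_assoc, ha₀] at h6
    simp only [hA]; linarith
  have hNf : ∫ x in (0:ℝ)..1, N x * f x = - J := by
    have h1 := intervalIntegral.integral_mul_deriv_eq_deriv_mul_of_hasDerivAt
      (u := N) (v := U) (u' := fun x => ω x * ub x) (v' := f)
      (a := 0) (b := 1) (by rw [uIcc_of_le zero_le_one]; exact hωub.prim_cont)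
      (by rw [uIcc_of_le zero_le_one]; exact continuousOn_const.add hf.prim_cont)
      (by simp only [zero_le_one, min_eq_left, max_eq_right]; exact fun x hx => hωub.prim_hasDerivAt (by simp) hx)
      (by simp only [zero_le_one, min_eq_left, max_eq_right]; exact fun x hx => (hf.prim_hasDerivAt (by simp) hx).const_add _)
      hωub.ii01 hf.ii01
    have hN1 : N 1 = 0 := h.mean
    have hN0 : N 0 = 0 := by simp [hN]
    rw [hN1, hN0] at h1
    rw [h1]; ring
  have hen : lam * J = ∫ x in (0:ℝ)..1, ω x * f x ^ 2 := by
    have h2 : ∫ x in (0:ℝ)..1, ω x * f x ^ 2 = ∫ x in (0:ℝ)..1, -lam * (N x * f x) := by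
      rw [intervalIntegral.integral_of_le zero_le_one, intervalIntegral.integral_of_le zero_le_one,
        integral_Ioc_eq_integral_Ioo, integral_Ioc_eq_integral_Ioo]
      refine setIntegral_congr_fun measurableSet_Ioo (fun x hx => ?_)
      have := h.feq x hx
      calc ω x * f x ^ 2 = (ω x * f x) * f x := by ring
        _ = _ := by rw [this]; ring
    rw [h2, intervalIntegral.integral_const_mul, hNf]; ring
  have hlJ : lam * J ≤ K ^ 2 * w := by
    rw [hen, hw, ← intervalIntegral.integral_const_mul]
    refine hωf2.mono ((BC.const _).mul hω) le_rfl zero_le_one le_rfl (fun x hx => ?_)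
    rw [mul_comm]
    refine mul_le_mul_of_nonneg_right ?_ (h.hωp x hx).le
    rw [← sq_abs]
    exact pow_le_pow_left₀ (abs_nonneg _) (h.fb x hx) 2
  have hJl : A - K ^ 2 * ε * w ≤ J := by
    have h1 : A - K ^ 2 * ε * w = ∫ x in (0:ℝ)..1, (ω x * ub x ^ 2 - K ^ 2 * ε * ω x) := by
      rw [intervalIntegral.integral_sub hωub2.ii01 ((BC.const (K ^ 2 * ε)).mul hω).ii01,
        intervalIntegral.integral_const_mul]
    rw [h1]
    refine (hωub2.sub ((BC.const (K ^ 2 * ε)).mul hω)).mono (hωub.mul hUbc) le_rfl zero_le_one le_rfl (fun x hx => ?_)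
    have h2 : |ub x * (ub x - U x)| ≤ K * (K * ε) := by
      rw [abs_mul]; exact mul_le_mul (h.ubb x hx) (h.U0 hx) (abs_nonneg _) (by linarith [h.hK])
    have h3 := (abs_le.1 h2).2
    have : ub x ^ 2 - K ^ 2 * ε ≤ ub x * U x := by nlinarith
    nlinarith [mul_le_mul_of_nonneg_left this (h.hωp x hx).le]
  have hpic : μ * J ≤ lam * A := by
    have h1 := picone (q := fun x => (-(1/lam)) * f x) hω h.hωp h.hs h.hF hub h.ubb h.mean
      ((BC.const _).mul hf) (fun x hx => by
        have := h.feq x hx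
        field_simp
        linarith)
    have h2 : ∀ x, (∫ t in (0:ℝ)..x, ω t * ub t) * (-(1/lam) * f x) = (-(1/lam)) * (N x * f x) := fun x => by
      simp only [hN]; ring
    simp only [h2] at h1
    rw [intervalIntegral.integral_const_mul, hNf] at h1
    have h3 : μ * (-(1/lam) * -J) = μ * J / lam := by ring
    rw [h3, div_le_iff₀ hlam] at h1
    linarith
  have hK2 : 0 < K ^ 2 := by have := h.hK; positivity
  have hJ2 : A / 2 ≤ J := by
    have : K ^ 2 * ε * w ≤ a₀ / 2 * w := mul_le_mul_of_nonneg_right (by linarith) hwp.le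
    linarith
  have haw : 0 < a₀ * w := mul_pos ha hwp
  have hAp : 0 < A := by linarith
  have hl1 : lam * a₀ ≤ 2 * K ^ 2 := by
    have h1 : lam * (a₀ * w / 2) ≤ lam * J := mul_le_mul_of_nonneg_left (by linarith) hlam.le
    have h2 : (lam * a₀) * w ≤ (2 * K ^ 2) * w := by linarith
    exact le_of_mul_le_mul_right h2 hwp
  have hm1 : μ ≤ 2 * lam := by
    have h1 : μ * (A / 2) ≤ μ * J := mul_le_mul_of_nonneg_left hJ2 hμ.le
    have h2 : μ * A ≤ (2 * lam) * A := by linarith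
    exact le_of_mul_le_mul_right h2 hAp
  have hl2 : lam ≤ 2 * K ^ 2 / a₀ := by rwa [le_div_iff₀ ha]
  have hm2 : μ ≤ 4 * K ^ 2 / a₀ := by
    have : 4 * K ^ 2 / a₀ = 2 * (2 * K ^ 2 / a₀) := by ring
    linarith
  refine ⟨hl2, hm2, ?_⟩
  have h1 : μ * (A - K ^ 2 * ε * w) ≤ lam * A := (mul_le_mul_of_nonneg_left hJl hμ.le).trans hpic
  have h2 : (μ - lam) * (a₀ * w) ≤ (μ - lam) * A := mul_le_mul_of_nonneg_left hAl (by linarith [h.hlm])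
  have h3 : (μ - lam) * a₀ * w ≤ μ * K ^ 2 * ε * w := by linarith
  have h4 : (μ - lam) * a₀ ≤ μ * K ^ 2 * ε := le_of_mul_le_mul_right h3 hwp
  have h5 : μ * K ^ 2 * ε ≤ (4 * K ^ 2 / a₀) * K ^ 2 * ε := by
    have := h.hε
    gcongr
  have h6 : μ - lam ≤ (4 * K ^ 2 / a₀) * K ^ 2 * ε / a₀ := by
    rw [le_div_iff₀ ha]; linarith
  calc μ - lam ≤ _ := h6
    _ = _ := by field_simp
end OneD

namespace OneD

variable {m : ℕ} {K c ε lam μ L0 L1 s₁ : ℝ} {ω ub f φ φd : ℝ → ℝ}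

lemma gron (h : OneD m K c ε lam μ L0 L1 s₁ ω ub f φ φd) {δ Λ D b : ℝ} (hδ0 : 0 < δ) (hδ1 : δ < 1)
    (hε1 : ε ≤ 1) (hΛ : μ ≤ Λ) (hD0 : 0 ≤ D) (hD : μ - lam ≤ D * ε) (hb : b = kap m δ * (Λ + Λ * K + 2 * K * D))
    {x : ℝ} (hx : x ∈ Icc (0:ℝ) (1 - δ)) :
    |L0 + (∫ t in (0:ℝ)..x, f t) - φ x| ≤ 2 * b * Real.exp (2 * b) * ε := by
  have hK := h.hK
  have hε0 := h.hε
  have hμ : 0 < μ := h.hlam.trans_le h.hlm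
  have hk := (kap_ge m hδ0 hδ1.le).1
  have hΛ0 : 0 < Λ := hμ.trans_le hΛ
  have hb0 : 0 < b := by rw [hb]; positivity
  have hf := h.f_bc
  have hφ := BC.of_Icc h.hF.cont
  have hφd := BC.of_Icc h.hF.contd
  set E : ℝ → ℝ := fun x => L0 + (∫ t in (0:ℝ)..x, f t) - φ x with hE
  have hEc : ContinuousOn E (Icc 0 1) := (continuousOn_const.add hf.prim_cont).sub h.hF.cont
  have hsub : Icc 0 (1 - δ) ⊆ Icc (0:ℝ) 1 := Icc_subset_Icc le_rfl (by linarith)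
  obtain ⟨xs, hxs, hmax⟩ := isCompact_Icc.exists_isMaxOn (f := fun x => |E x| * Real.exp (-(2 * b * x)))
    (nonempty_Icc.2 (by linarith : (0:ℝ) ≤ 1 - δ))
    (((hEc.mono hsub).abs).mul (by fun_prop))
  set S := |E xs| * Real.exp (-(2 * b * xs)) with hS
  have hS0 : 0 ≤ S := by positivity
  have hES : ∀ t ∈ Icc (0:ℝ) (1 - δ), |E t| ≤ S * Real.exp (2 * b * t) := by
    intro t ht
    have h1 : |E t| * Real.exp (-(2 * b * t)) ≤ S := hmax ht
    have h2 := mul_le_mul_of_nonneg_right h1 (Real.exp_pos (2 * b * t)).le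
    rwa [mul_assoc, ← Real.exp_add, neg_add_cancel, Real.exp_zero, mul_one] at h2
  have hder : ∀ x ∈ Ioo (0:ℝ) (1 - δ), |f x - φd x| ≤ b * S * Real.exp (2 * b * x) + b * ε := by
    intro x hx
    have hx' : x ∈ Ioo (0:ℝ) 1 := ⟨hx.1, by linarith [hx.2]⟩
    have hωx := h.hωp x hx'
    set G := S * Real.exp (2 * b * x) with hG
    have hG0 : 0 ≤ G := by positivity
    have hEG : ∀ t ∈ Ioo (0:ℝ) x, |E t| ≤ G := fun t ht => by
      refine (hES t ⟨ht.1.le, by linarith [ht.2, hx.2]⟩).trans ?_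
      have := ht.2.le
      simp only [hG]; gcongr
    have hW0 : 0 < ∫ t in (0:ℝ)..x, ω t := h.hω.pos le_rfl hx.1 hx'.2.le
      (fun t ht => h.hωp t ⟨ht.1, ht.2.trans hx'.2⟩)
    have hUE : ∀ t ∈ Ioo (0:ℝ) x, |ub t - φ t| ≤ G + K * ε ∧ |φ t| ≤ 2 * K + G := by
      intro t ht
      have ht' : t ∈ Ioo (0:ℝ) 1 := ⟨ht.1, ht.2.trans hx'.2⟩
      have h1 := abs_le.1 (h.U0 ht')
      have h2 := abs_le.1 (hEG t ht)
      have h3 := abs_le.1 (h.ubb t ht')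
      simp only [hE] at h2
      have h4 : K * ε ≤ K := by nlinarith
      exact ⟨abs_le.2 ⟨by linarith, by linarith⟩, abs_le.2 ⟨by linarith, by linarith⟩⟩
    have i1 : |∫ t in (0:ℝ)..x, ω t * (ub t - φ t)| ≤ (G + K * ε) * ∫ t in (0:ℝ)..x, ω t := by
      rw [← intervalIntegral.integral_const_mul]
      refine (h.hω.mul (h.ub_bc.sub hφ)).abs_le ((BC.const _).mul h.hω) le_rfl hx.1.le hx'.2.le (fun t ht => ?_)
      have := h.hωp t ⟨ht.1, ht.2.trans hx'.2⟩
      rw [abs_mul, abs_of_pos this, mul_comm]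
      exact mul_le_mul_of_nonneg_right (hUE t ht).1 this.le
    have i2 : |∫ t in (0:ℝ)..x, ω t * φ t| ≤ (2 * K + G) * ∫ t in (0:ℝ)..x, ω t := by
      rw [← intervalIntegral.integral_const_mul]
      refine (h.hω.mul hφ).abs_le ((BC.const _).mul h.hω) le_rfl hx.1.le hx'.2.le (fun t ht => ?_)
      have := h.hωp t ⟨ht.1, ht.2.trans hx'.2⟩
      rw [abs_mul, abs_of_pos this, mul_comm]
      exact mul_le_mul_of_nonneg_right (hUE t ht).2 this.le
    have e1 : ∫ t in (0:ℝ)..x, ω t * (ub t - φ t) =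
        (∫ t in (0:ℝ)..x, ω t * ub t) - ∫ t in (0:ℝ)..x, ω t * φ t := by
      rw [← intervalIntegral.integral_sub ((h.hω.mul h.ub_bc).ii (by simp) (Ioo_subset_Icc_self hx'))
        ((h.hω.mul hφ).ii (by simp) (Ioo_subset_Icc_self hx'))]
      simp only [mul_sub]
    have e2 : ω x * (f x - φd x) = -(lam * ∫ t in (0:ℝ)..x, ω t * (ub t - φ t)) +
        (μ - lam) * ∫ t in (0:ℝ)..x, ω t * φ t := by
      rw [e1, mul_sub, h.feq x hx', h.hF.eq x hx']; ring
    have hml : 0 ≤ μ - lam := by linarith [h.hlm]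
    have e3 : ω x * |f x - φd x| ≤ (μ * G + (lam * K + 2 * K * D) * ε) * ∫ t in (0:ℝ)..x, ω t := by
      rw [← abs_of_pos hωx, ← abs_mul, e2]
      refine (abs_add_le _ _).trans ?_
      rw [abs_neg, abs_mul, abs_mul, abs_of_pos h.hlam, abs_of_nonneg hml]
      have j1 := mul_le_mul_of_nonneg_left i1 h.hlam.le
      have j2 := mul_le_mul_of_nonneg_left i2 hml
      have j3 : (μ - lam) * (2 * K) * ∫ t in (0:ℝ)..x, ω t ≤ (D * ε) * (2 * K) * ∫ t in (0:ℝ)..x, ω t := by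
        gcongr
      nlinarith
    have e4 := h.MR3 hδ0 hδ1.le hx' hx.2.le
    have hlΛ : lam ≤ Λ := h.hlm.trans hΛ
    have e5 : μ * G + (lam * K + 2 * K * D) * ε ≤ (Λ + Λ * K + 2 * K * D) * (G + ε) := by
      have k1 : μ * G ≤ Λ * G := by gcongr
      have k2 : lam * K * ε ≤ Λ * K * ε := by gcongr
      have k3 : 0 ≤ (Λ * K + 2 * K * D) * G := by positivity
      have k4 : 0 ≤ Λ * ε := by positivity
      nlinarith
    have e6 : ω x * |f x - φd x| ≤ ω x * (b * (G + ε)) := by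
      refine e3.trans ?_
      calc _ ≤ ((Λ + Λ * K + 2 * K * D) * (G + ε)) * (kap m δ * ω x) := by
            refine mul_le_mul e5 e4 hW0.le (by positivity)
        _ = _ := by rw [hb]; ring
    have := le_of_mul_le_mul_left e6 hωx
    simp only [hG] at this
    linarith
  have hφi : ∀ x ∈ Icc (0:ℝ) 1, ∫ t in (0:ℝ)..x, φd t = φ x - φ 0 := fun x hx =>
    intervalIntegral.integral_eq_sub_of_hasDerivAt_of_le hx.1 (h.hF.cont.mono (Icc_subset_Icc le_rfl hx.2))
      (fun t ht => h.hF.der t ⟨ht.1, ht.2.trans_le hx.2⟩) (hφd.ii (by simp) hx)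
  have hEi : E xs = ∫ t in (0:ℝ)..xs, (f t - φd t) := by
    rw [intervalIntegral.integral_sub (hf.ii (by simp) (hsub hxs)) (hφd.ii (by simp) (hsub hxs)),
      hφi xs (hsub hxs), h.hφ0]
    simp only [hE]; ring
  have hint : ∫ t in (0:ℝ)..xs, (b * S * Real.exp (2 * b * t) + b * ε) =
      (S / 2 * Real.exp (2 * b * xs) + b * ε * xs) - S / 2 := by
    have hder : ∀ t, HasDerivAt (fun t => S / 2 * Real.exp (2 * b * t) + b * ε * t)
        (b * S * Real.exp (2 * b * t) + b * ε) t := by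
      intro t
      have := ((((hasDerivAt_id t).const_mul (2 * b)).exp).const_mul (S / 2)).add ((hasDerivAt_id t).const_mul (b * ε))
      refine this.congr_deriv ?_
      simp; ring
    rw [intervalIntegral.integral_eq_sub_of_hasDerivAt (fun t _ => hder t)
      (Continuous.intervalIntegrable (by fun_prop) _ _)]
    simp
  have hfin : |E xs| ≤ S / 2 * Real.exp (2 * b * xs) + b * ε := by
    have := (hf.sub hφd).abs_le (h := fun t => b * S * Real.exp (2 * b * t) + b * ε) (BC.of_Icc (by fun_prop))
      le_rfl hxs.1 (hsub hxs).2 (fun t ht => hder t ⟨ht.1, by linarith [ht.2, hxs.2]⟩)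
    rw [← hEi, hint] at this
    have h2 : b * ε * xs ≤ b * ε := by
      have : 0 < b * ε := by positivity
      nlinarith [(hsub hxs).2]
    linarith
  have hSE : S * Real.exp (2 * b * xs) = |E xs| := by
    rw [hS, mul_assoc, ← Real.exp_add, neg_add_cancel, Real.exp_zero, mul_one]
  have hE2 : |E xs| ≤ 2 * b * ε := by nlinarith
  have hS2 : S ≤ 2 * b * ε := by
    have : Real.exp (-(2 * b * xs)) ≤ 1 := Real.exp_le_one_iff.2 (by have := hxs.1; nlinarith [mul_nonneg hb0.le hxs.1])
    calc S ≤ |E xs| * 1 := mul_le_mul_of_nonneg_left this (abs_nonneg _)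
      _ ≤ _ := by linarith
  calc |E x| ≤ S * Real.exp (2 * b * x) := hES x hx
    _ ≤ (2 * b * ε) * Real.exp (2 * b) := by
      refine mul_le_mul hS2 (Real.exp_le_exp.2 ?_) (Real.exp_pos _).le (by positivity)
      nlinarith [(hsub hx).2]
    _ = _ := by ring

lemma fin (h : OneD m K c ε lam μ L0 L1 s₁ ω ub f φ φd) {δ H κ μ₀ d : ℝ} (hδ0 : 0 < δ) (hδ1 : δ < 1 / 2)
    (hδ : K * δ ≤ c / 8) (hH0 : 0 < H) (hεH : (K + H) * ε ≤ c / 8)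
    (hH : ∀ x ∈ Icc (0:ℝ) (1 - δ), |L0 + (∫ t in (0:ℝ)..x, f t) - φ x| ≤ H * ε)
    (hκ : κ = kap m δ) (hμ₀ : μ₀ = c / (3 * K * κ)) (hd : d = μ₀ * c / (2 * κ))
    {x0 : ℝ} (hx0 : x0 ∈ Ioo (0:ℝ) 1) (hx0u : |ub x0| ≤ K * ε) :
    |x0 - s₁| ≤ (2 * K + H) / d * ε := by
  have hK := h.hK
  have hc := h.hc
  have hc1 := h.hc1
  have hε0 := h.hε
  have hμ : 0 < μ := h.hlam.trans_le h.hlm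
  have hk := (kap_ge m hδ0 (by linarith)).1
  rw [← hκ] at hk
  have hμ₀p : 0 < μ₀ := by rw [hμ₀]; positivity
  have hdp : 0 < d := by rw [hd]; positivity
  have hKε : K * ε ≤ c / 8 := by nlinarith
  have hHε : H * ε ≤ c / 8 := by nlinarith
  have hφ := BC.of_Icc h.hF.cont
  have hφd := BC.of_Icc h.hF.contd
  have hωφ := h.hω.mul hφ
  have hcmp : ∀ x ∈ Ioo (0:ℝ) 1, x ≤ 1 - δ → |ub x - φ x| ≤ (K + H) * ε := by
    intro x hx hx1
    have h1 := abs_le.1 (h.U0 hx)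
    have h2 := abs_le.1 (hH x ⟨hx.1.le, hx1⟩)
    exact abs_le.2 ⟨by linarith, by linarith⟩
  have hl : ∀ x ∈ Ioo (0:ℝ) 1, x ≤ δ → c / 2 ≤ φ x := fun x hx hxδ => by
    have h1 := abs_le.1 (hcmp x hx (by linarith))
    have h2 := h.ub_left hδ hKε hx hxδ
    linarith
  have hr : ∀ x ∈ Ioo (0:ℝ) 1, 1 - 2 * δ ≤ x → x ≤ 1 - δ → φ x ≤ - (c / 2) := fun x hx h1x h2x => by
    have h1 := abs_le.1 (hcmp x hx h2x)
    have h2 := h.ub_right hδ hKε hx h1x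
    linarith
  have hs := h.hs
  have hs0 := h.hs0
  have hsl : δ < s₁ := by
    by_contra hh; push Not at hh
    have := hl s₁ hs hh; linarith
  have hsr : s₁ < 1 - 2 * δ := by
    by_contra hh; push Not at hh
    have h1 := hr (1 - 2 * δ) ⟨by linarith, by linarith⟩ le_rfl (by linarith)
    have h2 := h.hF.anti (a := 1 - 2 * δ) (b := s₁) ⟨by linarith, by linarith⟩ (Ioo_subset_Icc_self hs) hh
    linarith
  have hub0 := abs_le.1 hx0u
  have hxl : δ < x0 := by
    by_contra hh; push Not at hh
    have := h.ub_left hδ hKε hx0 hh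
    linarith
  have hxr : x0 < 1 - 2 * δ := by
    by_contra hh; push Not at hh
    have := h.ub_right hδ hKε hx0 hh
    linarith
  -- lower bound for μ
  have hφb : ∀ x ∈ Ioo (0:ℝ) 1, x ≤ 1 - δ → |φ x| ≤ 3 * K := fun x hx hx1 => by
    have h1 := abs_le.1 (hcmp x hx hx1)
    have h2 := abs_le.1 (h.ubb x hx)
    exact abs_le.2 ⟨by linarith, by linarith⟩
  have hφdb : ∀ x ∈ Ioo (0:ℝ) 1, x ≤ 1 - δ → |φd x| ≤ 3 * K * κ * μ := fun x hx hx1 => by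
    have i2 : |∫ t in (0:ℝ)..x, ω t * φ t| ≤ (3 * K) * ∫ t in (0:ℝ)..x, ω t := by
      rw [← intervalIntegral.integral_const_mul]
      refine hωφ.abs_le ((BC.const _).mul h.hω) le_rfl hx.1.le hx.2.le (fun t ht => ?_)
      have ht' : t ∈ Ioo (0:ℝ) 1 := ⟨ht.1, ht.2.trans hx.2⟩
      have := h.hωp t ht'
      rw [abs_mul, abs_of_pos this, mul_comm]
      exact mul_le_mul_of_nonneg_right (hφb t ht' (by linarith [ht.2])) this.le
    have i3 := h.MR3 hδ0 (by linarith) hx hx1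
    rw [← hκ] at i3
    have hωx := h.hωp x hx
    have i4 : ω x * |φd x| ≤ ω x * (3 * K * κ * μ) := by
      rw [← abs_of_pos hωx, ← abs_mul, abs_of_pos hωx, h.hF.eq x hx, abs_neg, abs_mul, abs_of_pos hμ]
      calc _ ≤ μ * ((3 * K) * (κ * ω x)) := by
            refine mul_le_mul_of_nonneg_left (i2.trans ?_) hμ.le
            exact mul_le_mul_of_nonneg_left i3 (by positivity)
        _ = _ := by ring
    exact le_of_mul_le_mul_left i4 hωx
  have hφi : ∀ a ∈ Icc (0:ℝ) 1, ∀ b ∈ Icc (0:ℝ) 1, a ≤ b → ∫ t in a..b, φd t = φ b - φ a := fun a ha b hb hab =>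
    intervalIntegral.integral_eq_sub_of_hasDerivAt_of_le hab (h.hF.cont.mono (Icc_subset_Icc ha.1 hb.2))
      (fun t ht => h.hF.der t ⟨ha.1.trans_lt ht.1, ht.2.trans_le hb.2⟩) (hφd.ii ha hb)
  have hμl : μ₀ ≤ μ := by
    have h1 := hφd.abs_le (BC.const (3 * K * κ * μ)) le_rfl hs.1.le hs.2.le
      (fun t ht => hφdb t ⟨ht.1, ht.2.trans hs.2⟩ (by linarith [ht.2]))
    rw [hφi 0 (by simp) s₁ (Ioo_subset_Icc_self hs) hs.1.le, hs0, h.hφ0, intervalIntegral.integral_const] at h1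
    simp only [smul_eq_mul, sub_zero] at h1
    have h2 := (abs_le.1 h1).1
    have h3 := h.hL0
    have h4 : 0 < 3 * K * κ * μ := by positivity
    rw [hμ₀, div_le_iff₀ (by positivity)]
    nlinarith [hs.2]
  have hslope : ∀ x ∈ Ioo δ (1 - 2 * δ), φd x ≤ - d := by
    intro x hx
    have hx' : x ∈ Ioo (0:ℝ) 1 := ⟨by linarith [hx.1], by linarith [hx.2]⟩
    have hωx := h.hωp x hx'
    have key : c / 2 * ω x ≤ κ * ∫ t in (0:ℝ)..x, ω t * φ t := by
      rcases le_total x s₁ with hxs | hxs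
      · have h1 := h.MR1 hδ0 (by linarith) hx' hx.1.le
        have h2 : c / 2 * ∫ t in (0:ℝ)..δ, ω t ≤ ∫ t in (0:ℝ)..δ, ω t * φ t := by
          rw [← intervalIntegral.integral_const_mul]
          refine ((BC.const _).mul h.hω).mono hωφ le_rfl hδ0.le (by linarith) (fun t ht => ?_)
          have ht' : t ∈ Ioo (0:ℝ) 1 := ⟨ht.1, by linarith [ht.2]⟩
          have := h.hωp t ht'
          rw [mul_comm]
          exact mul_le_mul_of_nonneg_left (hl t ht' ht.2.le) this.le
        have h3 := hωφ.split (a := 0) (b := δ) (c := x) (by simp) ⟨hδ0.le, by linarith⟩ (Ioo_subset_Icc_self hx')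
        have h4 := hωφ.pos hδ0.le hx.1 hx'.2.le (fun t ht => mul_pos (h.hωp t ⟨by linarith [ht.1], by linarith [ht.2, hx'.2]⟩)
          (h.hF.pos t ⟨by linarith [ht.1], by linarith [ht.2]⟩))
        rw [← hκ] at h1
        calc c / 2 * ω x ≤ c / 2 * (κ * ∫ t in (0:ℝ)..δ, ω t) := by gcongr
          _ = κ * (c / 2 * ∫ t in (0:ℝ)..δ, ω t) := by ring
          _ ≤ _ := mul_le_mul_of_nonneg_left (by linarith) (by linarith)
      · have h1 := h.MR2 hδ0 hδ1 hx' hx.2.le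
        have h2 : c / 2 * ∫ t in (1 - 2 * δ)..(1 - δ), ω t ≤ ∫ t in (1 - 2 * δ)..(1 - δ), -(ω t * φ t) := by
          rw [← intervalIntegral.integral_const_mul]
          refine ((BC.const _).mul h.hω).mono hωφ.neg (by linarith) (by linarith) (by linarith) (fun t ht => ?_)
          have ht' : t ∈ Ioo (0:ℝ) 1 := ⟨by linarith [ht.1], by linarith [ht.2]⟩
          have := h.hωp t ht'
          have h5 := mul_le_mul_of_nonneg_left (hr t ht' ht.1.le ht.2.le) this.le
          linarith
        rw [intervalIntegral.integral_neg] at h2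
        have m1 : 1 - 2 * δ ∈ Icc (0:ℝ) 1 := ⟨by linarith, by linarith⟩
        have m2 : 1 - δ ∈ Icc (0:ℝ) 1 := ⟨by linarith, by linarith⟩
        have h3 := hωφ.split (a := 0) (b := x) (c := 1) (by simp) (Ioo_subset_Icc_self hx') (by simp)
        have h31 := hωφ.split (a := x) (b := 1 - 2 * δ) (c := 1) (Ioo_subset_Icc_self hx') m1 (by simp)
        have h32 := hωφ.split (a := 1 - 2 * δ) (b := 1 - δ) (c := 1) m1 m2 (by simp)
        have hng : ∀ a b : ℝ, x ≤ a → a < b → b ≤ 1 → ∫ t in a..b, ω t * φ t ≤ 0 := fun a b ha hab hb => by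
          have := hωφ.neg.pos (by linarith [hx'.1]) hab hb (fun t ht => by
            have ht' : t ∈ Ioo (0:ℝ) 1 := ⟨by linarith [ht.1, hx'.1], by linarith [ht.2]⟩
            have := mul_neg_of_pos_of_neg (h.hωp t ht') (h.hF.neg t ⟨by linarith [ht.1], ht'.2⟩)
            linarith)
          rw [intervalIntegral.integral_neg] at this
          linarith
        have h41 := hng x (1 - 2 * δ) le_rfl hx.2 (by linarith)
        have h42 := hng (1 - δ) 1 (by linarith [hx.2]) (by linarith) le_rfl
        have hmean := h.hF.mean
        rw [← hκ] at h1
        calc c / 2 * ω x ≤ c / 2 * (κ * ∫ t in (1 - 2 * δ)..(1 - δ), ω t) := by gcongr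
          _ = κ * (c / 2 * ∫ t in (1 - 2 * δ)..(1 - δ), ω t) := by ring
          _ ≤ _ := mul_le_mul_of_nonneg_left (by linarith) (by linarith)
    have e := h.hF.eq x hx'
    have h1 : ω x * φd x ≤ ω x * (-d) := by
      have hg := h.hF.gpos x hx'
      have h2 : μ₀ * (c / 2 * ω x) ≤ μ * (κ * ∫ t in (0:ℝ)..x, ω t * φ t) :=
        mul_le_mul hμl key (by positivity) hμ.le
      have h3 : ω x * d * κ = μ₀ * (c / 2 * ω x) := by rw [hd]; field_simp
      have h4 : κ * (ω x * d) ≤ κ * (μ * ∫ t in (0:ℝ)..x, ω t * φ t) := by linarith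
      have h5 := le_of_mul_le_mul_left h4 (by linarith)
      linarith
    exact le_of_mul_le_mul_left h1 hωx
  have hinc : ∀ a b : ℝ, δ < a → a ≤ b → b < 1 - 2 * δ → d * (b - a) ≤ φ a - φ b := by
    intro a b ha hab hb
    have h1 := hφd.mono (BC.const (-d)) (a := a) (b := b) (by linarith) hab (by linarith)
      (fun t ht => hslope t ⟨by linarith [ht.1], by linarith [ht.2]⟩)
    rw [hφi a ⟨by linarith, by linarith⟩ b ⟨by linarith, by linarith⟩ hab, intervalIntegral.integral_const] at h1
    simp only [smul_eq_mul] at h1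
    linarith
  have hφx0 : |φ x0| ≤ (2 * K + H) * ε := by
    have h1 := abs_le.1 (hcmp x0 hx0 (by linarith))
    exact abs_le.2 ⟨by linarith, by linarith⟩
  have hq := abs_le.1 hφx0
  rw [div_mul_eq_mul_div, le_div_iff₀ hdp]
  rcases le_total x0 s₁ with hh | hh
  · have := hinc x0 s₁ hxl hh hsr
    rw [abs_of_nonpos (by linarith)]; linarith
  · have := hinc s₁ x0 hsl hh hxr
    rw [abs_of_nonneg (by linarith)]; linarith

end OneD

theorem oneD (m : ℕ) (K c : ℝ) (hK : 1 ≤ K) (hc : 0 < c) (hc1 : c ≤ 1) :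
    ∃ C > (0:ℝ), ∃ ε₀ > (0:ℝ), ∀ (ε lam μ L0 L1 s₁ : ℝ) (ω ub f φ φd : ℝ → ℝ), ε < ε₀ →
      OneD m K c ε lam μ L0 L1 s₁ ω ub f φ φd → ∀ x0 ∈ Ioo (0:ℝ) 1, |ub x0| ≤ K * ε →
        |x0 - s₁| ≤ C * ε := by
  set δ := c / (8 * K) with hδ
  have hδ0 : 0 < δ := by positivity
  have hKδ : K * δ = c / 8 := by rw [hδ]; field_simp
  have hδ1 : δ < 1 / 2 := by nlinarith
  set κ := OneD.kap m δ with hκ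
  have hk := (OneD.kap_ge m hδ0 (by linarith)).1
  rw [← hκ] at hk
  set a₀ := c ^ 2 / (4 * (1 + κ)) with ha
  have ha0 : 0 < a₀ := by positivity
  set Λ := 4 * K ^ 2 / a₀ with hΛ
  set D := 4 * K ^ 4 / a₀ ^ 2 with hD
  set b := κ * (Λ + Λ * K + 2 * K * D) with hb
  have hΛp : 0 < Λ := by positivity
  have hDp : 0 < D := by positivity
  have hbp : 0 < b := by positivity
  set H := 2 * b * Real.exp (2 * b) with hH
  have hHp : 0 < H := by positivity
  set μ₀ := c / (3 * K * κ) with hμ₀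
  set d := μ₀ * c / (2 * κ) with hd
  refine ⟨(2 * K + H) / d, by positivity, min 1 (min (c / (8 * (K + H))) (a₀ / (2 * K ^ 2))), by positivity, ?_⟩
  intro ε lam μ L0 L1 s₁ ω ub f φ φd hε h x0 hx0 hx0u
  have hε1 : ε < 1 := hε.trans_le (min_le_left _ _)
  have hε2 : ε < c / (8 * (K + H)) := hε.trans_le ((min_le_right _ _).trans (min_le_left _ _))
  have hε3 : ε < a₀ / (2 * K ^ 2) := hε.trans_le ((min_le_right _ _).trans (min_le_right _ _))
  rw [lt_div_iff₀ (by positivity)] at hε2 hε3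
  have hε0 := h.hε
  have hKε : K * ε ≤ c / 8 := by nlinarith
  obtain ⟨-, e2, e3⟩ := h.eig hδ0 (by linarith) hKδ.le hKε ha0 (by rw [ha, ← hκ]; field_simp) (by linarith)
  exact h.fin (κ := κ) (μ₀ := μ₀) (d := d) hδ0 hδ1 hKδ.le hHp (by linarith)
    (fun x hx => h.gron hδ0 (by linarith) hε1.le e2 hDp.le e3 hb hx) hκ hμ₀ hd hx0 hx0u


/-- Euclidean space. -/
abbrev EE (m : ℕ) := EuclideanSpace ℝ (Fin m)

/-- last coordinates -/
def tailPt (m : ℕ) (p : EE (m+1)) : EE m := WithLp.toLp 2 (fun i => p i.succ)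

@[simp] lemma mkPt_zero (m : ℕ) (x : ℝ) (y : EE m) : mkPt m x y 0 = x := rfl
@[simp] lemma mkPt_succ (m : ℕ) (x : ℝ) (y : EE m) (i : Fin m) : mkPt m x y i.succ = y i := rfl

lemma mkPt_tail (m : ℕ) (p : EE (m+1)) : mkPt m (p 0) (tailPt m p) = p := by
  ext i
  refine Fin.cases ?_ (fun i => ?_) i <;> rfl

lemma mkPt_comb (m : ℕ) (a b x x' : ℝ) (y y' : EE m) :
    a • mkPt m x y + b • mkPt m x' y' = mkPt m (a * x + b * x') (a • y + b • y') := by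
  ext i
  refine Fin.cases ?_ (fun i => ?_) i <;> simp

lemma mkPt_sub (m : ℕ) (x x' : ℝ) (y y' : EE m) :
    mkPt m x y - mkPt m x' y' = mkPt m (x - x') (y - y') := by
  ext i
  refine Fin.cases ?_ (fun i => ?_) i <;> simp

lemma mkPt_norm_sq (m : ℕ) (x : ℝ) (y : EE m) : ‖mkPt m x y‖ ^ 2 = x ^ 2 + ‖y‖ ^ 2 := by
  rw [EuclideanSpace.norm_sq_eq, EuclideanSpace.norm_sq_eq, Fin.sum_univ_succ]
  simp

lemma mkPt_norm_le (m : ℕ) (x : ℝ) (y : EE m) : ‖mkPt m x y‖ ≤ |x| + ‖y‖ := by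
  refine abs_le_of_sq_le_sq' ?_ (by positivity) |>.2
  rw [mkPt_norm_sq]
  nlinarith [sq_abs x, mul_nonneg (abs_nonneg x) (norm_nonneg y)]

lemma mkPt_norm_zero (m : ℕ) (y : EE m) : ‖mkPt m 0 y‖ = ‖y‖ := by
  have := mkPt_norm_sq m 0 y
  rw [zero_pow two_ne_zero, zero_add] at this
  exact (sq_eq_sq₀ (norm_nonneg _) (norm_nonneg _)).1 this

lemma tail_norm_le (m : ℕ) (p : EE (m+1)) : ‖tailPt m p‖ ≤ ‖p‖ := by
  have := mkPt_norm_sq m (p 0) (tailPt m p)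
  rw [mkPt_tail] at this
  exact abs_le_of_sq_le_sq' (by nlinarith [sq_nonneg (p 0)]) (norm_nonneg _) |>.2

/-- the first basis vector -/
def e0 (m : ℕ) : EE (m+1) := EuclideanSpace.single 0 1

lemma e0_norm (m : ℕ) : ‖e0 m‖ = 1 := by simp [e0]

lemma mkPt_x0 (m : ℕ) (x : ℝ) : mkPt m x 0 = x • e0 m := by
  ext i
  refine Fin.cases ?_ (fun i => ?_) i <;> simp [e0]

lemma mkPt_add_e0 (m : ℕ) (x : ℝ) (y : EE m) : mkPt m x y = x • e0 m + mkPt m 0 y := by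
  ext i
  refine Fin.cases ?_ (fun i => ?_) i <;> simp [e0]

lemma mkPt_cont (m : ℕ) : Continuous (fun q : ℝ × EE m => mkPt m q.1 q.2) := by
  unfold mkPt
  refine (ContinuousLinearEquiv.continuous _).comp ?_
  refine continuous_pi (fun i => ?_)
  refine Fin.cases ?_ (fun i => ?_) i
  · simpa using continuous_fst
  · simp only [Fin.cons_succ]
    have : Continuous (fun q : ℝ × EE m => (EuclideanSpace.equiv (Fin m) ℝ) q.2) :=
      (ContinuousLinearEquiv.continuous _).comp continuous_snd
    exact (continuous_apply i).comp this

lemma mkPt_cont_snd (m : ℕ) (x : ℝ) : Continuous (fun y : EE m => mkPt m x y) :=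
  (mkPt_cont m).comp (Continuous.prodMk_right x)

lemma mkPt_inj (m : ℕ) : Function.Injective (fun q : ℝ × EE m => mkPt m q.1 q.2) := by
  rintro ⟨x, y⟩ ⟨x', y'⟩ h
  simp only at h
  have h0 : x = x' := by
    have := congrArg (fun p : EE (m+1) => p 0) h
    simpa using this
  have h1 : y = y' := by
    ext i
    have := congrArg (fun p : EE (m+1) => p i.succ) h
    simpa using this
  rw [h0, h1]

lemma mkPt_emb (m : ℕ) : MeasurableEmbedding (fun q : ℝ × EE m => mkPt m q.1 q.2) :=
  (mkPt_cont m).measurableEmbedding (mkPt_inj m)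

lemma mkPt_mp (m : ℕ) : MeasurePreserving (fun q : ℝ × EE m => mkPt m q.1 q.2) := by
  have h1 : MeasurePreserving (fun q : ℝ × EE m => (q.1, WithLp.ofLp q.2)) volume volume :=
    (MeasurePreserving.id volume).prod (PiLp.volume_preserving_ofLp (Fin m))
  have h2 := (volume_preserving_piFinSuccAbove (fun _ : Fin (m+1) => ℝ) 0).symm
  have h3 := PiLp.volume_preserving_toLp (Fin (m+1))
  have := h3.comp (h2.comp h1)
  have he : (fun q : ℝ × EE m => mkPt m q.1 q.2) = (WithLp.toLp 2 ∘
      ⇑(MeasurableEquiv.piFinSuccAbove (fun _ : Fin (m+1) => ℝ) 0).symm ∘ fun q : ℝ × EE m => (q.1, WithLp.ofLp q.2)) := by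
    funext q
    ext i
    refine Fin.cases ?_ (fun i => ?_) i
    · simp [MeasurableEquiv.piFinSuccAbove, Fin.insertNthEquiv]
    · simp [MeasurableEquiv.piFinSuccAbove, Fin.insertNthEquiv]
  rw [he]
  exact this

/-- The domain hypotheses. -/
structure Geo (m : ℕ) (ε : ℝ) (Ω : Set (EE (m+1))) : Prop where
  hε : 0 < ε
  op : IsOpen Ω
  cv : Convex ℝ Ω
  bd : Bornology.IsBounded Ω
  sub : ∀ x y, mkPt m x y ∈ Ω → x ∈ Ioo (0:ℝ) 1 ∧ y ∈ Metric.ball (0 : EE m) ε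
  ne : ∀ s ∈ Ioo (0:ℝ) 1, (cross Ω s).Nonempty

namespace Geo
variable {m : ℕ} {ε : ℝ} {Ω : Set (EE (m+1))}

lemma cross_open (h : Geo m ε Ω) (x : ℝ) : IsOpen (cross Ω x) := h.op.preimage (mkPt_cont_snd m x)

lemma cross_sub (h : Geo m ε Ω) (x : ℝ) : cross Ω x ⊆ Metric.ball 0 ε := fun y hy => (h.sub x y hy).2

lemma cross_empty (h : Geo m ε Ω) {x : ℝ} (hx : x ∉ Ioo (0:ℝ) 1) : cross Ω x = ∅ := by
  ext y
  simp only [mem_empty_iff_false, iff_false]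
  exact fun hy => hx (h.sub x y hy).1

lemma cross_lt_top (h : Geo m ε Ω) (x : ℝ) : volume (cross Ω x) < ⊤ :=
  (measure_mono (h.cross_sub x)).trans_lt Metric.isBounded_ball.measure_lt_top

lemma om_pos (h : Geo m ε Ω) {x : ℝ} (hx : x ∈ Ioo (0:ℝ) 1) : 0 < ωvol Ω x :=
  ENNReal.toReal_pos ((h.cross_open x).measure_pos volume (h.ne x hx)).ne' (h.cross_lt_top x).ne

lemma om_le (h : Geo m ε Ω) (x : ℝ) : ωvol Ω x ≤ (volume (Metric.ball (0 : EE m) ε)).toReal :=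
  ENNReal.toReal_mono Metric.isBounded_ball.measure_lt_top.ne (measure_mono (h.cross_sub x))

lemma mem_Ioo (h : Geo m ε Ω) {p : EE (m+1)} (hp : p ∈ Ω) : p 0 ∈ Ioo (0:ℝ) 1 := by
  rw [← mkPt_tail m p] at hp
  exact (h.sub _ _ hp).1

lemma vol_lt_top (h : Geo m ε Ω) : volume Ω < ⊤ := h.bd.measure_lt_top

lemma fubini (h : Geo m ε Ω) {g : EE (m+1) → ℝ} (hg : IntegrableOn g Ω) :
    ∫ p in Ω, g p = ∫ x in (0:ℝ)..1, ∫ y in cross Ω x, g (mkPt m x y) := by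
  rw [← (mkPt_mp m).setIntegral_preimage_emb (mkPt_emb m)]
  have hS : MeasurableSet ((fun q : ℝ × EE m => mkPt m q.1 q.2) ⁻¹' Ω) := (mkPt_cont m).measurable h.op.measurableSet
  rw [← integral_indicator hS]
  have hi : Integrable (((fun q : ℝ × EE m => mkPt m q.1 q.2) ⁻¹' Ω).indicator (fun q => g (mkPt m q.1 q.2)))
      (volume.prod volume) := by
    rw [integrable_indicator_iff hS]
    exact ((mkPt_mp m).integrableOn_comp_preimage (mkPt_emb m)).2 hg
  rw [Measure.volume_eq_prod, integral_prod _ hi]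
  have he : ∀ x, (∫ y, ((fun q : ℝ × EE m => mkPt m q.1 q.2) ⁻¹' Ω).indicator (fun q => g (mkPt m q.1 q.2)) (x, y))
      = ∫ y in cross Ω x, g (mkPt m x y) := by
    intro x
    rw [← integral_indicator (h.cross_open x).measurableSet]
    rfl
  simp only [he]
  rw [intervalIntegral.integral_of_le zero_le_one, integral_Ioc_eq_integral_Ioo]
  symm
  refine setIntegral_eq_integral_of_forall_compl_eq_zero (fun x hx => ?_)
  rw [h.cross_empty hx]; simp

lemma mem_comb (h : Geo m ε Ω) {s r θ : ℝ} (h0 : 0 ≤ θ) (h1 : θ ≤ 1) {y z : EE m}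
    (hy : y ∈ cross Ω s) (hz : z ∈ cross Ω r) :
    (1 - θ) • y + θ • z ∈ cross Ω ((1 - θ) * s + θ * r) := by
  have := h.cv hy hz (a := 1 - θ) (b := θ) (by linarith) h0 (by ring)
  rw [mkPt_comb] at this
  exact this

/-- volume comparison via homothety -/
lemma hom_vol (h : Geo m ε Ω) {s r θ : ℝ} (h0 : 0 ≤ θ) (h1 : θ ≤ 1) (hr : r ∈ Ioo (0:ℝ) 1) :
    (1 - θ) ^ m * ωvol Ω s ≤ ωvol Ω ((1 - θ) * s + θ * r) := by
  obtain ⟨z, hz⟩ := h.ne r hr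
  have hsub : AffineMap.homothety z (1 - θ) '' cross Ω s ⊆ cross Ω ((1 - θ) * s + θ * r) := by
    rintro _ ⟨y, hy, rfl⟩
    have := h.mem_comb h0 h1 hy hz
    convert this using 1
    simp [AffineMap.homothety_apply]
    module
  have h2 := measure_mono (μ := volume) hsub
  rw [Measure.addHaar_image_homothety, finrank_euclideanSpace_fin] at h2
  have h3 := ENNReal.toReal_mono (h.cross_lt_top _).ne h2
  rw [ENNReal.toReal_mul, ENNReal.toReal_ofReal (abs_nonneg _), abs_of_nonneg (pow_nonneg (by linarith) m)] at h3
  exact h3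

/-- general version: `t` lies between `s` and `r` -/
lemma hom_vol' (h : Geo m ε Ω) {s r t : ℝ} (hr : r ∈ Ioo (0:ℝ) 1) (hst : s ≠ r) (h0 : 0 ≤ (t - s) / (r - s))
    (h1 : (t - s) / (r - s) ≤ 1) :
    (1 - (t - s) / (r - s)) ^ m * ωvol Ω s ≤ ωvol Ω t := by
  have := h.hom_vol h0 h1 hr (s := s)
  convert this using 2
  have : r - s ≠ 0 := sub_ne_zero.2 hst.symm
  field_simp
  ring

lemma R1 (h : Geo m ε Ω) {s t : ℝ} (hs : s ∈ Ioo (0:ℝ) 1) (ht : t ∈ Ioo (0:ℝ) 1) (hst : s < t) :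
    ωvol Ω s ≤ (2 / (1 - t)) ^ m * ωvol Ω t := by
  have hts : 0 < 1 - t := by linarith [ht.2]
  have hp : 0 < (1 + t) / 2 - s := by linarith
  have h1 := h.hom_vol' (s := s) (r := (1 + t) / 2) (t := t) ⟨by linarith [ht.1], by linarith⟩ (by linarith)
    (div_nonneg (by linarith) hp.le) (by rw [div_le_one hp]; linarith)
  have h2 : (1 - t) / 2 ≤ 1 - (t - s) / ((1 + t) / 2 - s) := by
    have e : 1 - (t - s) / ((1 + t) / 2 - s) = ((1 - t) / 2) / ((1 + t) / 2 - s) := by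
      rw [eq_div_iff hp.ne', sub_mul, div_mul_cancel₀ _ hp.ne']; ring
    rw [e, le_div_iff₀ hp]
    nlinarith [hs.1, ht.2]
  have h3 : ((1 - t) / 2) ^ m * ωvol Ω s ≤ ωvol Ω t :=
    (mul_le_mul_of_nonneg_right (pow_le_pow_left₀ (by linarith) h2 m) (h.om_pos hs).le).trans h1
  calc ωvol Ω s = (2 / (1 - t)) ^ m * (((1 - t) / 2) ^ m * ωvol Ω s) := by
        rw [← mul_assoc, ← mul_pow]; field_simp; simp
    _ ≤ _ := mul_le_mul_of_nonneg_left h3 (by positivity)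

lemma R2 (h : Geo m ε Ω) {s t : ℝ} (hs : s ∈ Ioo (0:ℝ) 1) (ht : t ∈ Ioo (0:ℝ) 1) (hst : s < t) :
    ωvol Ω t ≤ (2 / s) ^ m * ωvol Ω s := by
  have hs0 := hs.1
  have hp : 0 < t - s / 2 := by linarith
  have e1 : (s - t) / (s / 2 - t) = (t - s) / (t - s / 2) := by
    rw [← neg_sub t s, ← neg_sub t (s/2), neg_div_neg_eq]
  have h1 := h.hom_vol' (s := t) (r := s / 2) (t := s) ⟨by linarith, by linarith [hs.2]⟩ (by linarith)
    (by rw [e1]; exact div_nonneg (by linarith) hp.le) (by rw [e1, div_le_one hp]; linarith)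
  rw [e1] at h1
  have h2 : s / 2 ≤ 1 - (t - s) / (t - s / 2) := by
    have e : 1 - (t - s) / (t - s / 2) = (s / 2) / (t - s / 2) := by
      rw [eq_div_iff hp.ne', sub_mul, div_mul_cancel₀ _ hp.ne']; ring
    rw [e, le_div_iff₀ hp]
    nlinarith [hs.1, ht.2]
  have h3 : (s / 2) ^ m * ωvol Ω t ≤ ωvol Ω s :=
    (mul_le_mul_of_nonneg_right (pow_le_pow_left₀ (by linarith) h2 m) (h.om_pos ht).le).trans h1
  calc ωvol Ω t = (2 / s) ^ m * ((s / 2) ^ m * ωvol Ω t) := by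
        rw [← mul_assoc, ← mul_pow]; field_simp; simp
    _ ≤ _ := mul_le_mul_of_nonneg_left h3 (by positivity)

end Geo


lemma avg_sub {m : ℕ} {A B : Set (EE m)} (hAB : A ⊆ B) (hA : MeasurableSet A)
    {a b k O : ℝ} (ha : a = (volume A).toReal) (hb : b = (volume B).toReal) (ha0 : 0 < a)
    (hBt : volume B < ⊤) (hBm : MeasurableSet B) {g : EE m → ℝ} (hg : IntegrableOn g B)
    (hO : ∀ y ∈ B, |g y - k| ≤ O) :
    |(∫ y in B, g y) / b - (∫ y in A, g y) / a| ≤ 2 * (1 - a / b) * O := by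
  have hAt : volume A < ⊤ := (measure_mono hAB).trans_lt hBt
  have hab : a ≤ b := by rw [ha, hb]; exact ENNReal.toReal_mono hBt.ne (measure_mono hAB)
  have hb0 : 0 < b := ha0.trans_le hab
  have hgk : IntegrableOn (fun y => g y - k) B := hg.sub (integrableOn_const hBt.ne)
  have e : ∀ s ⊆ B, MeasurableSet s → ∫ y in s, g y = (∫ y in s, (g y - k)) + k * (volume s).toReal := by
    intro s hs hsm
    rw [integral_sub (hg.mono_set hs) (integrableOn_const ((measure_mono hs).trans_lt hBt).ne)]
    simp [Measure.real]; ring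
  have hdiff : ∫ y in B, (g y - k) = (∫ y in A, (g y - k)) + ∫ y in B \ A, (g y - k) := by
    rw [← setIntegral_union disjoint_sdiff_right (hBm.diff hA) (hgk.mono_set hAB) (hgk.mono_set sdiff_subset),
      union_sdiff_cancel hAB]
  have hvol : (volume (B \ A)).toReal = b - a := by
    rw [measure_sdiff hAB hA.nullMeasurableSet hAt.ne, ENNReal.toReal_sub_of_le (measure_mono hAB) hBt.ne, ha, hb]
  have b1 : |∫ y in A, (g y - k)| ≤ O * a := by
    have := norm_setIntegral_le_of_norm_le_const (f := fun y => g y - k) (C := O) hAt (fun y hy => hO y (hAB hy))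
    simpa [Measure.real, ha] using this
  have b2 : |∫ y in B \ A, (g y - k)| ≤ O * (b - a) := by
    have := norm_setIntegral_le_of_norm_le_const (f := fun y => g y - k) (C := O)
      ((measure_mono sdiff_subset).trans_lt hBt) (fun y hy => hO y (sdiff_subset hy) : ∀ y ∈ B \ A, _)
    simpa [Measure.real, hvol] using this
  rw [e B subset_rfl hBm, e A hAB hA, hdiff, ← ha, ← hb]
  set P := ∫ y in A, (g y - k)
  set Q := ∫ y in B \ A, (g y - k)
  have e2 : (P + Q + k * b) / b - (P + k * a) / a = Q / b - P * (b - a) / (a * b) := by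
    field_simp; ring
  rw [e2]
  have e3 : |Q / b| ≤ (1 - a / b) * O := by
    rw [abs_div, abs_of_pos hb0, div_le_iff₀ hb0]
    have : (1 - a / b) * O * b = O * (b - a) := by field_simp
    linarith
  have e4 : |P * (b - a) / (a * b)| ≤ (1 - a / b) * O := by
    rw [abs_div, abs_mul, abs_of_nonneg (by linarith : 0 ≤ b - a), abs_of_pos (mul_pos ha0 hb0),
      div_le_iff₀ (mul_pos ha0 hb0)]
    have : (1 - a / b) * O * (a * b) = O * a * (b - a) := by field_simp
    rw [this]
    exact mul_le_mul_of_nonneg_right b1 (by linarith)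
  calc _ ≤ |Q / b| + |P * (b - a) / (a * b)| := abs_sub _ _
    _ ≤ _ := by linarith

/-- change of variables for a homothety -/
lemma cov {m : ℕ} {S : Set (EE m)} (hS : MeasurableSet S) {τ : ℝ} (hτ : 0 < τ) (v : EE m) (g : EE m → ℝ) :
    ∫ y in (fun y => τ • y + v) '' S, g y = τ ^ m * ∫ y in S, g (τ • y + v) := by
  have := integral_image_eq_integral_abs_det_fderiv_smul volume hS
    (f := fun y : EE m => τ • y + v) (f' := fun _ => τ • ContinuousLinearMap.id ℝ (EE m))
    (fun y _ => by
      have := ((hasFDerivAt_id (𝕜 := ℝ) y).const_smul τ).add_const v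
      exact this.hasFDerivWithinAt)
    (fun y _ y' _ hyy => by
      simp only [add_left_inj] at hyy
      exact smul_right_injective _ hτ.ne' hyy) g
  rw [this]
  have hd : (τ • ContinuousLinearMap.id ℝ (EE m)).det = τ ^ m := by
    rw [ContinuousLinearMap.det]
    simp [LinearMap.det_smul]
  simp only [hd, abs_of_pos (pow_pos hτ m), smul_eq_mul]
  rw [integral_const_mul]

namespace Geo
variable {m : ℕ} {ε : ℝ} {Ω : Set (EE (m+1))}

lemma sec_int (h : Geo m ε Ω) {g : EE (m+1) → ℝ} {B : ℝ} (hc : ContinuousOn g Ω) (hB : ∀ p ∈ Ω, |g p| ≤ B) (x : ℝ) :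
    IntegrableOn (fun y => g (mkPt m x y)) (cross Ω x) := by
  refine IntegrableOn.of_bound (h.cross_lt_top x) ?_ B ?_
  · exact (hc.comp (mkPt_cont_snd m x).continuousOn (fun y hy => hy)).aestronglyMeasurable (h.cross_open x).measurableSet
  · exact (ae_restrict_mem (h.cross_open x).measurableSet).mono (fun y hy => hB _ hy)

lemma dom_int (h : Geo m ε Ω) {g : EE (m+1) → ℝ} {B : ℝ} (hc : ContinuousOn g Ω) (hB : ∀ p ∈ Ω, |g p| ≤ B) :
    IntegrableOn g Ω := by
  refine IntegrableOn.of_bound h.vol_lt_top ?_ B ?_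
  · exact hc.aestronglyMeasurable h.op.measurableSet
  · exact (ae_restrict_mem h.op.measurableSet).mono (fun y hy => hB _ hy)

/-- averages with a uniform bound -/
lemma avg_le (h : Geo m ε Ω) {x : ℝ} (hx : x ∈ Ioo (0:ℝ) 1) {G : EE m → ℝ} {B : ℝ}
    (hB : ∀ y ∈ cross Ω x, |G y| ≤ B) : |(∫ y in cross Ω x, G y) / ωvol Ω x| ≤ B := by
  have hp := h.om_pos hx
  rw [abs_div, abs_of_pos hp, div_le_iff₀ hp]
  exact norm_setIntegral_le_of_norm_le_const (f := G) (h.cross_lt_top x) hB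

lemma avg_const (h : Geo m ε Ω) {x : ℝ} (hx : x ∈ Ioo (0:ℝ) 1) (k : ℝ) :
    (∫ _ in cross Ω x, k) / ωvol Ω x = k := by
  have hp := h.om_pos hx
  simp [Measure.real]
  rw [div_eq_iff hp.ne', ωvol, mul_comm]

lemma bern (m : ℕ) {θ θ' : ℝ} (h0 : 0 ≤ θ) (h1 : θ ≤ 1) (h0' : 0 ≤ θ') (h1' : θ' ≤ 1) :
    1 - m * (θ + θ') ≤ (1 - θ) ^ m * (1 - θ') ^ m := by
  have a := one_add_mul_le_pow (a := -θ) (by linarith) m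
  have b := one_add_mul_le_pow (a := -θ') (by linarith) m
  have e : (1 + -θ) = 1 - θ := by ring
  have e' : (1 + -θ') = 1 - θ' := by ring
  rw [e] at a
  rw [e'] at b
  have c1 : (1 - θ) ^ m ≤ 1 := pow_le_one₀ (by linarith) (by linarith)
  have c2 : (1 - θ') ^ m ≤ 1 := pow_le_one₀ (by linarith) (by linarith)
  nlinarith [mul_nonneg (sub_nonneg.2 c1) (sub_nonneg.2 c2)]

lemma om_both (h : Geo m ε Ω) {x x' : ℝ} (hx : x ∈ Ioo (0:ℝ) 1) (hx' : x' ∈ Ioo (0:ℝ) 1) (hxx : x < x')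
    (hr : x' < (1 + x) / 2) :
    (1 - 2 * (x' - x) / (1 - x)) ^ m * ωvol Ω x ≤ ωvol Ω x' ∧
    1 - m * (2 * (x' - x) / (1 - x) + 2 * (x' - x) / x) ≤
      (1 - 2 * (x' - x) / (1 - x)) ^ m * ωvol Ω x / ωvol Ω x' ∧
    |ωvol Ω x' - ωvol Ω x| ≤ (x' - x) * (m * (2 / (1 - x) + 2 / x) * (volume (Metric.ball (0 : EE m) ε)).toReal) := by
  have hx0 := hx.1
  have h1x : 0 < 1 - x := by linarith [hx.2]
  have hh : 0 < x' - x := by linarith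
  set θ := 2 * (x' - x) / (1 - x) with hθ
  have hθ0 : 0 ≤ θ := by positivity
  have hθ1 : θ ≤ 1 := by rw [hθ, div_le_one h1x]; linarith
  have eθ : (x' - x) / ((1 + x) / 2 - x) = θ := by
    have : (1 + x) / 2 - x = (1 - x) / 2 := by ring
    rw [this, hθ]; field_simp
  have a := h.hom_vol' (s := x) (r := (1 + x) / 2) (t := x') ⟨by linarith, by linarith⟩ (by linarith)
    (by rw [eθ]; exact hθ0) (by rw [eθ]; exact hθ1)
  rw [eθ] at a
  have hp : 0 < x' - x / 2 := by linarith
  have e1 : (x - x') / (x / 2 - x') = (x' - x) / (x' - x / 2) := by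
    rw [← neg_sub x' x, ← neg_sub x' (x/2), neg_div_neg_eq]
  set θ' := (x' - x) / (x' - x / 2) with hθ'
  have hθ0' : 0 ≤ θ' := by positivity
  have hθ1' : θ' ≤ 1 := by rw [hθ', div_le_one hp]; linarith
  have hθ2' : θ' ≤ 2 * (x' - x) / x := by
    rw [hθ', div_le_div_iff₀ hp hx0]; nlinarith
  have b := h.hom_vol' (s := x') (r := x / 2) (t := x) ⟨by linarith, by linarith⟩ (by linarith)
    (by rw [e1]; exact hθ0') (by rw [e1]; exact hθ1')
  rw [e1] at b
  have hpx := h.om_pos hx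
  have hpx' := h.om_pos hx'
  have hm0 : (0:ℝ) ≤ m := Nat.cast_nonneg m
  have bn := bern m hθ0 hθ1 hθ0' hθ1'
  have hmm : (m:ℝ) * (θ + θ') ≤ m * (θ + 2 * (x' - x) / x) := mul_le_mul_of_nonneg_left (by linarith) hm0
  refine ⟨a, ?_, ?_⟩
  · rw [le_div_iff₀ hpx']
    calc _ ≤ ((1 - θ) ^ m * (1 - θ') ^ m) * ωvol Ω x' := mul_le_mul_of_nonneg_right (by linarith) hpx'.le
      _ = (1 - θ) ^ m * ((1 - θ') ^ m * ωvol Ω x') := by ring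
      _ ≤ _ := mul_le_mul_of_nonneg_left b (pow_nonneg (by linarith) m)
  · have w1 := h.om_le x
    have w2 := h.om_le x'
    set W := (volume (Metric.ball (0 : EE m) ε)).toReal
    have b1 := one_add_mul_le_pow (a := -θ) (by linarith) m
    have b2 := one_add_mul_le_pow (a := -θ') (by linarith) m
    have e : (1 + -θ) = 1 - θ := by ring
    have e' : (1 + -θ') = 1 - θ' := by ring
    rw [e] at b1
    rw [e'] at b2
    have hW : 0 ≤ W := hpx.le.trans w1
    have q : (x' - x) * (m * (2 / (1 - x) + 2 / x) * W) = m * θ * W + m * (2 * (x' - x) / x) * W := by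
      rw [hθ]; field_simp
    rw [q]
    have q1 : (m:ℝ) * θ * ωvol Ω x ≤ m * θ * W := by gcongr
    have q2 : (m:ℝ) * θ' * ωvol Ω x' ≤ m * (2 * (x' - x) / x) * W := by gcongr
    have q3 : (0:ℝ) ≤ m * θ * W := by positivity
    have q4 : (0:ℝ) ≤ m * (2 * (x' - x) / x) * W := by positivity
    have q5 := mul_le_mul_of_nonneg_right b1 hpx.le
    have q6 := mul_le_mul_of_nonneg_right b2 hpx'.le
    exact abs_le.2 ⟨by nlinarith, by nlinarith⟩

/-- Lemma K. -/
lemma lemK (h : Geo m ε Ω) {x x' : ℝ} (hx : x ∈ Ioo (0:ℝ) 1) (hx' : x' ∈ Ioo (0:ℝ) 1) (hxx : x < x')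
    (hr : x' < (1 + x) / 2) {g : EE (m+1) → ℝ} {B k O : ℝ} (hc : ContinuousOn g Ω) (hB : ∀ p ∈ Ω, |g p| ≤ B)
    (hO : ∀ y ∈ cross Ω x', |g (mkPt m x' y) - k| ≤ O) :
    ∃ z ∈ Metric.ball (0 : EE m) ε,
      (∀ y ∈ cross Ω x, (1 - 2 * (x' - x) / (1 - x)) • y + (2 * (x' - x) / (1 - x)) • z ∈ cross Ω x') ∧
      IntegrableOn (fun y => g (mkPt m x' ((1 - 2 * (x' - x) / (1 - x)) • y + (2 * (x' - x) / (1 - x)) • z))) (cross Ω x) ∧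
      |ubarFn Ω g x' - (∫ y in cross Ω x,
        g (mkPt m x' ((1 - 2 * (x' - x) / (1 - x)) • y + (2 * (x' - x) / (1 - x)) • z))) / ωvol Ω x| ≤
        2 * (m * (2 * (x' - x) / (1 - x) + 2 * (x' - x) / x)) * O := by
  have h1x : 0 < 1 - x := by linarith [hx.2]
  have hx0 := hx.1
  have hh : 0 < x' - x := by linarith
  obtain ⟨o1, o2, -⟩ := h.om_both hx hx' hxx hr
  set θ := 2 * (x' - x) / (1 - x) with hθ
  have hθ0 : 0 ≤ θ := by positivity
  have hθ1 : θ < 1 := by rw [hθ, div_lt_one h1x]; linarith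
  obtain ⟨z, hz⟩ := h.ne ((1 + x) / 2) ⟨by linarith, by linarith⟩
  have hT : ∀ y ∈ cross Ω x, (1 - θ) • y + θ • z ∈ cross Ω x' := fun y hy => by
    have := h.mem_comb hθ0 hθ1.le hy hz
    have e : (1 - θ) * x + θ * ((1 + x) / 2) = x' := by
      have : θ * (1 - x) = 2 * (x' - x) := by rw [hθ]; field_simp
      linarith
    rwa [e] at this
  have hO0 : 0 ≤ O := by
    obtain ⟨y, hy⟩ := h.ne x' hx'
    exact (abs_nonneg _).trans (hO y hy)
  refine ⟨z, h.cross_sub _ hz, hT, ?_, ?_⟩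
  · refine IntegrableOn.of_bound (h.cross_lt_top x) ?_ B ?_
    · refine ContinuousOn.aestronglyMeasurable ?_ (h.cross_open x).measurableSet
      refine hc.comp (Continuous.continuousOn ?_) (fun y hy => hT y hy)
      exact (mkPt_cont_snd m x').comp (by fun_prop)
    · exact (ae_restrict_mem (h.cross_open x).measurableSet).mono (fun y hy => hB _ (hT y hy))
  · have hτ : 0 < 1 - θ := by linarith
    have hS := (h.cross_open x).measurableSet
    have hA : MeasurableSet ((fun y => (1 - θ) • y + θ • z) '' cross Ω x) := by
      have : IsOpenMap (fun y : EE m => (1 - θ) • y + θ • z) := by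
        have i1 := isOpenMap_smul₀ (α := EE m) hτ.ne'
        exact (isOpenMap_add_right (θ • z)).comp i1
      exact (this _ (h.cross_open x)).measurableSet
    have hAv : (volume ((fun y => (1 - θ) • y + θ • z) '' cross Ω x)).toReal = (1 - θ) ^ m * ωvol Ω x := by
      have := cov hS hτ (θ • z) (fun _ => (1:ℝ))
      simpa [Measure.real, ωvol] using this
    have hpx := h.om_pos hx
    have := avg_sub (A := (fun y => (1 - θ) • y + θ • z) '' cross Ω x) (B := cross Ω x')
      (by rintro _ ⟨y, hy, rfl⟩; exact hT y hy) hA hAv.symm (b := ωvol Ω x') rfl (by positivity)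
      (h.cross_lt_top x') (h.cross_open x').measurableSet (h.sec_int hc hB x') hO
    rw [cov hS hτ (θ • z) (fun y => g (mkPt m x' y)), mul_div_mul_left _ _ (pow_pos hτ m).ne'] at this
    refine this.trans ?_
    exact mul_le_mul_of_nonneg_right (by linarith) hO0

end Geo

lemma cont_of_Q {F Q : ℝ → ℝ} (hQ : ContinuousOn Q (Ioo 0 1))
    (hF : ∀ x ∈ Ioo (0:ℝ) 1, ∀ x' ∈ Ioo (0:ℝ) 1, x < x' → x' < (1 + x) / 2 → |F x' - F x| ≤ (x' - x) * Q x) :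
    ContinuousOn F (Ioo 0 1) := by
  intro x0 hx0
  refine ContinuousAt.continuousWithinAt ?_
  have hnh := isOpen_Ioo.mem_nhds hx0
  have hQc := hQ.continuousAt hnh
  have ht : Tendsto (fun x => |x - x0| * (|Q x| + |Q x0|)) (𝓝 x0) (𝓝 0) := by
    have h1 : Tendsto (fun x => |x - x0|) (𝓝 x0) (𝓝 0) := by
      have : Tendsto (fun x => |x - x0|) (𝓝 x0) (𝓝 |x0 - x0|) := (Continuous.tendsto (by fun_prop) x0)
      simpa using this
    have h2 : Tendsto (fun x => (|Q x| + |Q x0|)) (𝓝 x0) (𝓝 (|Q x0| + |Q x0|)) :=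
      hQc.tendsto.abs.add_const _
    simpa using h1.mul h2
  have : Tendsto (fun x => F x - F x0) (𝓝 x0) (𝓝 0) := by
    refine squeeze_zero_norm' ?_ ht
    have n1 : ∀ᶠ x in 𝓝 x0, x < (1 + x0) / 2 := eventually_lt_nhds (by linarith [hx0.2])
    have n2 : ∀ᶠ x in 𝓝 x0, 2 * x0 - 1 < x := eventually_gt_nhds (by linarith [hx0.2])
    filter_upwards [hnh, n1, n2] with x hx h1 h2
    rw [Real.norm_eq_abs]
    rcases lt_trichotomy x x0 with hlt | heq | hgt
    · rw [abs_sub_comm, abs_sub_comm x x0, abs_of_pos (sub_pos.2 hlt)]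
      refine (hF x hx x0 hx0 hlt (by linarith)).trans ?_
      refine mul_le_mul_of_nonneg_left ?_ (by linarith)
      linarith [le_abs_self (Q x), abs_nonneg (Q x0)]
    · rw [heq]; simp
    · rw [abs_of_pos (sub_pos.2 hgt)]
      refine (hF x0 hx0 x hx hgt (by linarith)).trans ?_
      refine mul_le_mul_of_nonneg_left ?_ (by linarith)
      linarith [le_abs_self (Q x0), abs_nonneg (Q x)]
  have h2 := this.add_const (F x0)
  simpa [ContinuousAt] using h2

namespace Geo
variable {m : ℕ} {ε : ℝ} {Ω : Set (EE (m+1))}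

lemma om_bc (h : Geo m ε Ω) : BC (ωvol Ω) := by
  refine ⟨?_, (volume (Metric.ball (0 : EE m) ε)).toReal, fun x hx => ?_⟩
  · refine cont_of_Q (Q := fun x => m * (2 / (1 - x) + 2 / x) * (volume (Metric.ball (0 : EE m) ε)).toReal) ?_
      (fun x hx x' hx' hxx hr => (h.om_both hx hx' hxx hr).2.2)
    refine (continuousOn_const.mul (ContinuousOn.add ?_ ?_)).mul continuousOn_const
    · exact continuousOn_const.div (by fun_prop) (fun x hx => by linarith [hx.2])
    · exact continuousOn_const.div (by fun_prop) (fun x hx => by linarith [hx.1])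
  · rw [abs_of_pos (h.om_pos hx)]; exact h.om_le x

lemma ubar_bc (h : Geo m ε Ω) {g : EE (m+1) → ℝ} {B L : ℝ} (hL : 0 ≤ L)
    (hlip : ∀ p ∈ Ω, ∀ q ∈ Ω, |g p - g q| ≤ L * ‖p - q‖) (hB : ∀ p ∈ Ω, |g p| ≤ B) :
    ContinuousOn (ubarFn Ω g) (Ioo 0 1) ∧ ∀ x ∈ Ioo (0:ℝ) 1, |ubarFn Ω g x| ≤ B := by
  have hc : ContinuousOn g Ω := by
    have : LipschitzOnWith (Real.toNNReal L) g Ω := LipschitzOnWith.of_dist_le_mul (fun p hp q hq => by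
      rw [Real.dist_eq, dist_eq_norm, Real.coe_toNNReal L hL]; exact hlip p hp q hq)
    exact this.continuousOn
  refine ⟨?_, fun x hx => h.avg_le hx (fun y hy => hB _ hy)⟩
  refine cont_of_Q (Q := fun x => 2 * m * (2 / (1 - x) + 2 / x) * B + L * (1 + 2 * ε * (2 / (1 - x)))) ?_ ?_
  · refine ((continuousOn_const.mul (ContinuousOn.add ?_ ?_)).mul continuousOn_const).add
      (continuousOn_const.mul (continuousOn_const.add (continuousOn_const.mul ?_)))
    · exact continuousOn_const.div (by fun_prop) (fun x hx => by linarith [hx.2])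
    · exact continuousOn_const.div (by fun_prop) (fun x hx => by linarith [hx.1])
    · exact continuousOn_const.div (by fun_prop) (fun x hx => by linarith [hx.2])
  · intro x hx x' hx' hxx hr
    have h1x : 0 < 1 - x := by linarith [hx.2]
    have hx0 := hx.1
    have hh : 0 < x' - x := by linarith
    obtain ⟨z, hz, hT, hi, hk⟩ := h.lemK hx hx' hxx hr (k := 0) hc hB (fun y hy => by simpa using hB _ hy)
    set θ := 2 * (x' - x) / (1 - x) with hθ
    have hθ0 : 0 ≤ θ := by positivity
    have h2 : |(∫ y in cross Ω x, g (mkPt m x' ((1 - θ) • y + θ • z))) / ωvol Ω x - ubarFn Ω g x| ≤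
        L * ((x' - x) + 2 * ε * θ) := by
      rw [ubarFn, ← sub_div, ← integral_sub hi (h.sec_int hc hB x)]
      refine h.avg_le hx (fun y hy => (hlip _ (hT y hy) _ hy).trans ?_)
      refine mul_le_mul_of_nonneg_left ?_ hL
      rw [mkPt_sub]
      refine (mkPt_norm_le _ _ _).trans ?_
      rw [abs_of_pos hh]
      have e : (1 - θ) • y + θ • z - y = θ • (z - y) := by module
      rw [e, norm_smul, Real.norm_of_nonneg hθ0]
      have hy' := h.cross_sub x hy
      rw [mem_ball_zero_iff] at hy' hz
      have : ‖z - y‖ ≤ 2 * ε := (norm_sub_le _ _).trans (by linarith)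
      nlinarith
    calc |ubarFn Ω g x' - ubarFn Ω g x| ≤ _ := abs_sub_le _ _ _
      _ ≤ _ := add_le_add hk h2
      _ = _ := by rw [hθ]; field_simp
end Geo


structure UU (m : ℕ) (ε C₀ S L2 : ℝ) (Ω : Set (EE (m+1))) (u : EE (m+1) → ℝ) : Prop where
  geo : Geo m ε Ω
  hC : 0 < C₀
  hS : 0 < S
  hε4 : ε ≤ 1 / 4
  hL2 : 0 ≤ L2
  diff : ∀ p ∈ Ω, DifferentiableAt ℝ u p
  lip2 : ∀ p ∈ Ω, ∀ q ∈ Ω, ‖fderiv ℝ u p - fderiv ℝ u q‖ ≤ L2 * ‖p - q‖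
  grad : ∀ p ∈ Ω, ‖fderiv ℝ u p‖ ≤ C₀ * max (min (p 0) (1 - p 0)) ε * S
  bd : ∀ p ∈ Ω, |u p| ≤ S

/-- the x-derivative -/
def dx {m : ℕ} (u : EE (m+1) → ℝ) (p : EE (m+1)) : ℝ := fderiv ℝ u p (e0 m)

namespace UU
variable {m : ℕ} {ε C₀ S L2 : ℝ} {Ω : Set (EE (m+1))} {u : EE (m+1) → ℝ}

lemma cont (h : UU m ε C₀ S L2 Ω u) : ContinuousOn u Ω := fun p hp => (h.diff p hp).continuousAt.continuousWithinAt

lemma grad1 (h : UU m ε C₀ S L2 Ω u) : ∀ p ∈ Ω, ‖fderiv ℝ u p‖ ≤ C₀ * S := by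
  intro p hp
  refine (h.grad p hp).trans ?_
  have h1 := h.geo.mem_Ioo hp
  have : max (min (p 0) (1 - p 0)) ε ≤ 1 :=
    max_le ((min_le_left _ _).trans h1.2.le) (by linarith [h.hε4])
  have hC := h.hC
  have hS := h.hS
  calc _ ≤ C₀ * 1 * S := by gcongr
    _ = _ := by ring

lemma lip (h : UU m ε C₀ S L2 Ω u) : ∀ p ∈ Ω, ∀ q ∈ Ω, |u p - u q| ≤ C₀ * S * ‖p - q‖ := fun p hp q hq =>
  h.geo.cv.norm_image_sub_le_of_norm_fderiv_le h.diff h.grad1 hq hp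

lemma sec (h : UU m ε C₀ S L2 Ω u) {x : ℝ} {y y' : EE m} (hy : y ∈ cross Ω x) (hy' : y' ∈ cross Ω x) :
    |u (mkPt m x y) - u (mkPt m x y')| ≤ C₀ * max (min x (1 - x)) ε * S * (2 * ε) := by
  have hsub : segment ℝ (mkPt m x y') (mkPt m x y) ⊆ Ω := h.geo.cv.segment_subset hy' hy
  have h0 : ∀ p ∈ segment ℝ (mkPt m x y') (mkPt m x y), p 0 = x := by
    rintro p ⟨a, b, ha, hb, hab, rfl⟩
    rw [mkPt_comb, mkPt_zero, ← add_mul, hab, one_mul]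
  have := (convex_segment (𝕜 := ℝ) (mkPt m x y') (mkPt m x y)).norm_image_sub_le_of_norm_fderiv_le
    (fun p hp => h.diff p (hsub hp)) (C := C₀ * max (min x (1 - x)) ε * S) (fun p hp => by
      have := h.grad p (hsub hp)
      rwa [h0 p hp] at this) (left_mem_segment ℝ _ _) (right_mem_segment ℝ _ _)
  refine this.trans ?_
  rw [mkPt_sub, sub_self, mkPt_norm_zero]
  have a := h.geo.cross_sub x hy
  have b := h.geo.cross_sub x hy'
  rw [mem_ball_zero_iff] at a b
  refine mul_le_mul_of_nonneg_left ((norm_sub_le _ _).trans (by linarith)) ?_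
  have hC := h.hC
  have hS := h.hS
  have : 0 < max (min x (1 - x)) ε := lt_max_of_lt_right h.geo.hε
  positivity

lemma dx_bd (h : UU m ε C₀ S L2 Ω u) : ∀ p ∈ Ω, |dx u p| ≤ C₀ * S := fun p hp => by
  have := (fderiv ℝ u p).le_opNorm (e0 m)
  rw [e0_norm, mul_one] at this
  exact this.trans (h.grad1 p hp)

lemma dx_lip (h : UU m ε C₀ S L2 Ω u) : ∀ p ∈ Ω, ∀ q ∈ Ω, |dx u p - dx u q| ≤ L2 * ‖p - q‖ := fun p hp q hq => by
  have := (fderiv ℝ u p - fderiv ℝ u q).le_opNorm (e0 m)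
  rw [e0_norm, mul_one] at this
  exact this.trans (h.lip2 p hp q hq)

lemma dx_cont (h : UU m ε C₀ S L2 Ω u) : ContinuousOn (dx u) Ω := by
  have : LipschitzOnWith (Real.toNNReal L2) (dx u) Ω := LipschitzOnWith.of_dist_le_mul (fun p hp q hq => by
    rw [Real.dist_eq, dist_eq_norm, Real.coe_toNNReal L2 h.hL2]; exact h.dx_lip p hp q hq)
  exact this.continuousOn

lemma ub_bc (h : UU m ε C₀ S L2 Ω u) :
    ContinuousOn (ubarFn Ω u) (Ioo 0 1) ∧ ∀ x ∈ Ioo (0:ℝ) 1, |ubarFn Ω u x| ≤ S :=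
  h.geo.ubar_bc (mul_pos h.hC h.hS).le h.lip h.bd

lemma f_bc (h : UU m ε C₀ S L2 Ω u) :
    ContinuousOn (ubarFn Ω (dx u)) (Ioo 0 1) ∧ ∀ x ∈ Ioo (0:ℝ) 1, |ubarFn Ω (dx u) x| ≤ C₀ * S :=
  h.geo.ubar_bc h.hL2 h.dx_lip h.dx_bd

lemma taylor (h : UU m ε C₀ S L2 Ω u) {p q : EE (m+1)} (hp : p ∈ Ω) (hq : q ∈ Ω) :
    |u q - u p - fderiv ℝ u p (q - p)| ≤ L2 * ‖q - p‖ ^ 2 := by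
  have hsub : segment ℝ p q ⊆ Ω := h.geo.cv.segment_subset hp hq
  have := (convex_segment (𝕜 := ℝ) p q).norm_image_sub_le_of_norm_fderiv_le'
    (fun w hw => h.diff w (hsub hw)) (φ := fderiv ℝ u p) (C := L2 * ‖q - p‖) (fun w hw => by
      refine (h.lip2 w (hsub hw) p hp).trans ?_
      refine mul_le_mul_of_nonneg_left ?_ h.hL2
      obtain ⟨a, b, ha, hb, hab, rfl⟩ := hw
      have : a • p + b • q - p = b • (q - p) := by
        have : a = 1 - b := by linarith
        rw [this]; module
      rw [this, norm_smul, Real.norm_of_nonneg hb]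
      exact mul_le_of_le_one_left (norm_nonneg _) (by linarith)) (left_mem_segment ℝ _ _) (right_mem_segment ℝ _ _)
  rw [Real.norm_eq_abs] at this
  refine this.trans (le_of_eq (by ring))

lemma slope_est (h : UU m ε C₀ S L2 Ω u) {x x' : ℝ} (hx : x ∈ Icc ε (1 - ε)) (hx' : x' ∈ Ioo (0:ℝ) 1)
    (hxx : x < x') (hr : x' < (1 + x) / 2) :
    |ubarFn Ω u x' - ubarFn Ω u x - (x' - x) * ubarFn Ω (dx u) x| ≤
      C₀ * (16 * m + 4) * S * ε * (x' - x) + (16 * m * C₀ * S + 25 * L2) * (x' - x) ^ 2 := by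
  have hε := h.geo.hε
  have hC := h.hC
  have hS := h.hS
  have hL2 := h.hL2
  have hx1 : x ∈ Ioo (0:ℝ) 1 := ⟨by linarith [hx.1], by linarith [hx.2]⟩
  have hx0 := hx1.1
  have h1x : 0 < 1 - x := by linarith [hx1.2]
  have hh : 0 < x' - x := by linarith
  obtain ⟨y0, hy0⟩ := h.geo.ne x' hx'
  obtain ⟨z, hz, hT, hi, hk⟩ := h.geo.lemK hx1 hx' hxx hr (k := u (mkPt m x' y0)) h.cont h.bd
    (fun y hy => h.sec hy hy0)
  set η := x' - x with hη
  set θ := 2 * η / (1 - x) with hθ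
  have hθ0 : 0 ≤ θ := by positivity
  set d := min x (1 - x) with hd
  have hd0 : 0 < d := lt_min hx0 h1x
  have hdε : ε ≤ d := le_min hx.1 (by linarith [hx.2])
  have hdx : d ≤ x := min_le_left _ _
  have hd1 : d ≤ 1 - x := min_le_right _ _
  have hmax' : max (min x' (1 - x')) ε ≤ d + η := by
    refine max_le ?_ (by linarith)
    rcases min_choice x (1 - x) with e | e
    · rw [hd, e]; exact (min_le_left _ _).trans (by linarith)
    · rw [hd, e]; exact (min_le_right _ _).trans (by linarith)
  have hm0 : (0:ℝ) ≤ m := Nat.cast_nonneg m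
  have hθd : θ ≤ 2 * η / d := by rw [hθ]; gcongr
  have hθd' : 2 * η / x ≤ 2 * η / d := by gcongr
  have err1 : 2 * (m * (θ + 2 * η / x)) * (C₀ * max (min x' (1 - x')) ε * S * (2 * ε)) ≤
      16 * m * C₀ * S * ε * η + 16 * m * C₀ * S * η ^ 2 := by
    calc _ ≤ 2 * (m * (2 * η / d + 2 * η / d)) * (C₀ * (d + η) * S * (2 * ε)) := by
          gcongr
      _ = 16 * m * C₀ * S * ε * η + 16 * m * C₀ * S * η ^ 2 * (ε / d) := by field_simp; ring
      _ ≤ 16 * m * C₀ * S * ε * η + 16 * m * C₀ * S * η ^ 2 * 1 := by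
          gcongr
          rw [div_le_one hd0]; exact hdε
      _ = _ := by ring
  have hθε : 2 * ε * θ ≤ 4 * η := by
    have : θ ≤ 2 * η / ε := hθd.trans (by gcongr)
    calc 2 * ε * θ ≤ 2 * ε * (2 * η / ε) := by gcongr
      _ = _ := by field_simp; ring
  have err2 : |(∫ y in cross Ω x, u (mkPt m x' ((1 - θ) • y + θ • z))) / ωvol Ω x - ubarFn Ω u x
      - η * ubarFn Ω (dx u) x| ≤ 4 * C₀ * S * ε * η + 25 * L2 * η ^ 2 := by
    have hiu := h.geo.sec_int h.cont h.bd x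
    have hid := h.geo.sec_int h.dx_cont h.dx_bd x
    have e : (∫ y in cross Ω x, u (mkPt m x' ((1 - θ) • y + θ • z))) / ωvol Ω x - ubarFn Ω u x
      - η * ubarFn Ω (dx u) x = (∫ y in cross Ω x, (u (mkPt m x' ((1 - θ) • y + θ • z)) - u (mkPt m x y)
        - η * dx u (mkPt m x y))) / ωvol Ω x := by
      have hsu : IntegrableOn (fun y => u (mkPt m x' ((1 - θ) • y + θ • z)) - u (mkPt m x y)) (cross Ω x) := hi.sub hiu
      rw [integral_sub hsu (hid.const_mul η), integral_sub hi hiu, integral_const_mul, ubarFn, ubarFn]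
      ring
    rw [e]
    refine h.geo.avg_le hx1 (fun y hy => ?_)
    have hq := hT y hy
    have tay := h.taylor (p := mkPt m x y) hy hq
    have e2 : (1 - θ) • y + θ • z - y = θ • (z - y) := by module
    have hy' := h.geo.cross_sub x hy
    rw [mem_ball_zero_iff] at hy' hz
    have hzy : ‖z - y‖ ≤ 2 * ε := (norm_sub_le _ _).trans (by linarith)
    have hθz : ‖θ • (z - y)‖ ≤ 2 * ε * θ := by
      rw [norm_smul, Real.norm_of_nonneg hθ0]; nlinarith
    rw [mkPt_sub, e2, ← hη] at tay
    have hn : ‖mkPt m η (θ • (z - y))‖ ≤ 5 * η := by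
      refine (mkPt_norm_le _ _ _).trans ?_
      rw [abs_of_pos hh]; linarith
    have hn2 : L2 * ‖mkPt m η (θ • (z - y))‖ ^ 2 ≤ L2 * (5 * η) ^ 2 := by gcongr
    have hsplit : fderiv ℝ u (mkPt m x y) (mkPt m η (θ • (z - y))) =
        η * dx u (mkPt m x y) + fderiv ℝ u (mkPt m x y) (mkPt m 0 (θ • (z - y))) := by
      rw [mkPt_add_e0 m η (θ • (z - y)), map_add, map_smul, smul_eq_mul, dx]
    have hsh : |fderiv ℝ u (mkPt m x y) (mkPt m 0 (θ • (z - y)))| ≤ 4 * C₀ * S * ε * η := by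
      have a1 := (fderiv ℝ u (mkPt m x y)).le_opNorm (mkPt m 0 (θ • (z - y)))
      rw [mkPt_norm_zero] at a1
      have a2 := h.grad _ hy
      rw [mkPt_zero, max_eq_left hdε] at a2
      refine a1.trans ((mul_le_mul a2 hθz (norm_nonneg _) (by positivity)).trans ?_)
      calc C₀ * d * S * (2 * ε * θ) ≤ C₀ * d * S * (2 * ε * (2 * η / d)) := by gcongr
        _ = _ := by field_simp; ring
    rw [hsplit] at tay
    have hn3 : L2 * (5 * η) ^ 2 = 25 * L2 * η ^ 2 := by ring
    have t1 := abs_le.1 (tay.trans (hn2.trans hn3.le))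
    have t2 := abs_le.1 hsh
    exact abs_le.2 ⟨by linarith [t1.1, t2.1], by linarith [t1.2, t2.2]⟩
  have a1 := abs_le.1 (hk.trans err1)
  have a2 := abs_le.1 err2
  have e3 : C₀ * (16 * m + 4) * S * ε * η + (16 * m * C₀ * S + 25 * L2) * η ^ 2 =
    (16 * m * C₀ * S * ε * η + 16 * m * C₀ * S * η ^ 2) + (4 * C₀ * S * ε * η + 25 * L2 * η ^ 2) := by ring
  rw [e3]
  exact abs_le.2 ⟨by linarith [a1.1, a2.1], by linarith [a1.2, a2.2]⟩

lemma f_BC (h : UU m ε C₀ S L2 Ω u) : BC (ubarFn Ω (dx u)) := ⟨h.f_bc.1, _, h.f_bc.2⟩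

lemma mid (h : UU m ε C₀ S L2 Ω u) {a b : ℝ} (ha : ε ≤ a) (hab : a ≤ b) (hb : b ≤ 1 - ε) (σ : ℝ) (hσ : |σ| = 1) :
    σ * (ubarFn Ω u b - ubarFn Ω u a - ∫ t in a..b, ubarFn Ω (dx u) t) ≤
      C₀ * (16 * m + 4) * S * ε * (b - a) := by
  have hε := h.geo.hε
  have hsub : Icc a b ⊆ Ioo (0:ℝ) 1 := fun x hx => ⟨by linarith [hx.1], by linarith [hx.2]⟩
  have haI : a ∈ Icc (0:ℝ) 1 := ⟨by linarith, by linarith⟩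
  set f := ubarFn Ω (dx u) with hf
  set M := C₀ * (16 * m + 4) * S * ε with hM
  set K3 := 16 * m * C₀ * S + 25 * L2 with hK3
  have hder : ∀ x ∈ Icc a b, HasDerivAt (fun x => ∫ t in a..x, f t) (f x) x := fun x hx =>
    h.f_BC.prim_hasDerivAt haI (hsub hx)
  have := image_le_of_liminf_slope_right_le_deriv_boundary
    (f := fun x => σ * (ubarFn Ω u x - ubarFn Ω u a - ∫ t in a..x, f t)) (a := a) (b := b)
    (B := fun x => M * (x - a)) (B' := fun _ => M)
    (continuousOn_const.mul (((h.ub_bc.1.mono hsub).sub continuousOn_const).sub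
      (fun x hx => (hder x hx).continuousAt.continuousWithinAt)))
    (by simp) (by fun_prop)
    (fun x hx => by
      have := (((hasDerivAt_id x).sub_const a).const_mul M).hasDerivWithinAt (s := Ici x)
      simpa using this)
    (fun x hx r hr => by
      refine Eventually.frequently ?_
      have hxm : x ∈ Icc a b := Ico_subset_Icc_self hx
      have t1 : Tendsto (fun z => slope (fun x => ∫ t in a..x, f t) x z) (𝓝[>] x) (𝓝 (f x)) :=
        ((hasDerivAt_iff_tendsto_slope.1 (hder x hxm)).mono_left (nhdsWithin_mono x (fun z hz => ne_of_gt hz)))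
      have t2 : Tendsto (fun z => M + K3 * (z - x) + |f x - slope (fun x => ∫ t in a..x, f t) x z|) (𝓝[>] x)
          (𝓝 (M + K3 * (x - x) + |f x - f x|)) := by
        refine Tendsto.add ?_ ((t1.const_sub _).abs)
        exact (Continuous.tendsto (by fun_prop) x).mono_left nhdsWithin_le_nhds
      simp only [sub_self, mul_zero, add_zero, abs_zero] at t2
      have n1 : ∀ᶠ z in 𝓝[>] x, z < (1 + x) / 2 :=
        nhdsWithin_le_nhds (eventually_lt_nhds (by linarith [(hsub hxm).2]))
      filter_upwards [t2.eventually (gt_mem_nhds hr), self_mem_nhdsWithin, n1] with z hz hzx hz1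
      refine lt_of_le_of_lt ?_ hz
      have hzx' : x < z := hzx
      have hzp : 0 < z - x := by linarith
      have est := h.slope_est (x := x) (x' := z) ⟨by linarith [hx.1], by linarith [hx.2]⟩
        ⟨by linarith [(hsub hxm).1], by linarith [(hsub hxm).2]⟩ hzx' hz1
      rw [← hM, ← hK3, ← hf] at est
      set s := slope (fun x => ∫ t in a..x, f t) x z with hs
      have hs' : (∫ t in a..z, f t) - ∫ t in a..x, f t = (z - x) * s := by
        rw [hs, slope_def_field]; field_simp
      rw [slope_def_field, div_le_iff₀ hzp]
      have e : σ * (ubarFn Ω u z - ubarFn Ω u a - ∫ t in a..z, f t) - σ * (ubarFn Ω u x - ubarFn Ω u a - ∫ t in a..x, f t)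
        = σ * ((ubarFn Ω u z - ubarFn Ω u x - (z - x) * f x) + (z - x) * (f x - s)) := by
        have : (∫ t in a..z, f t) = (∫ t in a..x, f t) + (z - x) * s := by linarith
        rw [this]; ring
      rw [e]
      refine (le_abs_self _).trans ?_
      rw [abs_mul, hσ, one_mul]
      refine (abs_add_le _ _).trans ?_
      rw [abs_mul, abs_of_pos hzp]
      nlinarith)
  exact this (right_mem_Icc.2 hab)

lemma far (h : UU m ε C₀ S L2 Ω u) {x x' : ℝ} (hx : x ∈ Ioo (0:ℝ) 1) (hx' : x' ∈ Ioo (0:ℝ) 1)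
    (hd : |x' - x| ≤ ε) :
    |ubarFn Ω u x' - ubarFn Ω u x - ∫ t in x..x', ubarFn Ω (dx u) t| ≤ 4 * C₀ * S * ε := by
  have hε := h.geo.hε
  have hC := h.hC
  have hS := h.hS
  obtain ⟨y0, hy0⟩ := h.geo.ne x hx
  have hpt : ∀ y ∈ cross Ω x, ∀ y' ∈ cross Ω x', |u (mkPt m x' y') - u (mkPt m x y)| ≤ C₀ * S * (3 * ε) := by
    intro y hy y' hy'
    refine (h.lip _ hy' _ hy).trans ?_
    rw [mkPt_sub]
    have a := h.geo.cross_sub x hy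
    have b := h.geo.cross_sub x' hy'
    rw [mem_ball_zero_iff] at a b
    have : ‖mkPt m (x' - x) (y' - y)‖ ≤ 3 * ε :=
      (mkPt_norm_le _ _ _).trans (by linarith [norm_sub_le y' y])
    gcongr
  have h1 : ∀ y' ∈ cross Ω x', |u (mkPt m x' y') - ubarFn Ω u x| ≤ C₀ * S * (3 * ε) := by
    intro y' hy'
    have e : u (mkPt m x' y') - ubarFn Ω u x = (∫ y in cross Ω x, (u (mkPt m x' y') - u (mkPt m x y))) / ωvol Ω x := by
      have hc : IntegrableOn (fun _ : EE m => u (mkPt m x' y')) (cross Ω x) := integrableOn_const (h.geo.cross_lt_top x).ne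
      rw [integral_sub hc (h.geo.sec_int h.cont h.bd x), sub_div,
        h.geo.avg_const hx, ubarFn]
    rw [e]
    exact h.geo.avg_le hx (fun y hy => hpt y hy y' hy')
  have h2 : |ubarFn Ω u x' - ubarFn Ω u x| ≤ C₀ * S * (3 * ε) := by
    have e : ubarFn Ω u x' - ubarFn Ω u x = (∫ y in cross Ω x', (u (mkPt m x' y) - ubarFn Ω u x)) / ωvol Ω x' := by
      have hc : IntegrableOn (fun _ : EE m => ubarFn Ω u x) (cross Ω x') := integrableOn_const (h.geo.cross_lt_top x').ne
      rw [integral_sub (h.geo.sec_int h.cont h.bd x') hc, sub_div,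
        h.geo.avg_const hx', ubarFn]
    rw [e]
    exact h.geo.avg_le hx' h1
  have h3 : |∫ t in x..x', ubarFn Ω (dx u) t| ≤ C₀ * S * ε := by
    have := intervalIntegral.norm_integral_le_of_norm_le_const (f := ubarFn Ω (dx u)) (C := C₀ * S) (a := x) (b := x')
      (fun t ht => h.f_bc.2 t (by
        have := uIoc_subset_uIcc ht
        rw [mem_uIcc] at this
        constructor <;> rcases this with h | h <;> linarith [hx.1, hx.2, hx'.1, hx'.2]))
    refine this.trans ?_
    gcongr
  calc _ ≤ |ubarFn Ω u x' - ubarFn Ω u x| + |∫ t in x..x', ubarFn Ω (dx u) t| := abs_sub _ _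
    _ ≤ _ := by linarith

lemma hE (h : UU m ε C₀ S L2 Ω u) {x x' : ℝ} (hx : x ∈ Ioo (0:ℝ) 1) (hx' : x' ∈ Ioo (0:ℝ) 1)
    (hxx : x ≤ x') :
    |ubarFn Ω u x' - ubarFn Ω u x - ∫ t in x..x', ubarFn Ω (dx u) t| ≤ C₀ * (16 * m + 12) * S * ε := by
  have hε := h.geo.hε
  have hε4 := h.hε4
  have hC := h.hC
  have hS := h.hS
  set a := max ε (min x (1 - ε)) with ha
  set b := max ε (min x' (1 - ε)) with hb
  have ha1 : ε ≤ a := le_max_left _ _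
  have hb1 : b ≤ 1 - ε := max_le (by linarith) (min_le_right _ _)
  have ha2 : a ≤ 1 - ε := max_le (by linarith) (min_le_right _ _)
  have hb2 : ε ≤ b := le_max_left _ _
  have hab : a ≤ b := max_le_max le_rfl (min_le_min hxx le_rfl)
  have hcl : ∀ t ∈ Ioo (0:ℝ) 1, |t - max ε (min t (1 - ε))| ≤ ε := by
    intro t ht
    rcases le_total t (1 - ε) with h1 | h1
    · rw [min_eq_left h1]
      rcases le_total ε t with h2 | h2
      · rw [max_eq_right h2]; simpa using hε.le
      · rw [max_eq_left h2]; exact abs_le.2 ⟨by linarith [ht.1], by linarith⟩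
    · rw [min_eq_right h1, max_eq_right (by linarith)]; exact abs_le.2 ⟨by linarith, by linarith [ht.2]⟩
  have haI : a ∈ Ioo (0:ℝ) 1 := ⟨by linarith, by linarith⟩
  have hbI : b ∈ Ioo (0:ℝ) 1 := ⟨by linarith, by linarith⟩
  have f1 := h.far hx haI (by rw [abs_sub_comm]; exact hcl x hx)
  have f3 := h.far hbI hx' (hcl x' hx')
  have m1 := h.mid ha1 hab hb1 1 (by simp)
  have m2 := h.mid ha1 hab hb1 (-1) (by simp)
  have hM : 0 ≤ C₀ * (16 * m + 4) * S * ε := by positivity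
  have hMb : C₀ * (16 * m + 4) * S * ε * (b - a) ≤ C₀ * (16 * m + 4) * S * ε :=
    mul_le_of_le_one_right hM (by linarith)
  have s1 := h.f_BC.split (a := x) (b := a) (c := x') (Ioo_subset_Icc_self hx) (Ioo_subset_Icc_self haI) (Ioo_subset_Icc_self hx')
  have s2 := h.f_BC.split (a := a) (b := b) (c := x') (Ioo_subset_Icc_self haI) (Ioo_subset_Icc_self hbI) (Ioo_subset_Icc_self hx')
  have g1 := abs_le.1 f1
  have g3 := abs_le.1 f3
  exact abs_le.2 ⟨by nlinarith, by nlinarith⟩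

end UU


/-- the Rayleigh property -/
def Ray {m : ℕ} (Ω : Set (EE (m+1))) (lam : ℝ) : Prop :=
  ∀ w : EE (m+1) → ℝ, ContDiffOn ℝ (⊤:ℕ∞) w (closure Ω) → (∫ p in Ω, w p) = 0 →
    lam * (∫ p in Ω, (w p) ^ 2) ≤ ∫ p in Ω, ‖gradient w p‖ ^ 2

lemma ray_of {m : ℕ} {Ω : Set (EE (m+1))} (hop : IsOpen Ω) {lam : ℝ}
    (h : lam = sInf {r | ∃ w : EuclideanSpace ℝ (Fin (m+1)) → ℝ,
        ContDiffOn ℝ (⊤:ℕ∞) w (closure Ω) ∧ (∃ p ∈ Ω, w p ≠ 0) ∧ (∫ p in Ω, w p) = 0 ∧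
        r = (∫ p in Ω, ‖gradient w p‖ ^ 2) / (∫ p in Ω, (w p) ^ 2)}) : Ray Ω lam := by
  intro w hw h0
  have hA : 0 ≤ ∫ p in Ω, ‖gradient w p‖ ^ 2 := integral_nonneg (fun p => by positivity)
  have hB : 0 ≤ ∫ p in Ω, (w p) ^ 2 := integral_nonneg (fun p => by positivity)
  by_cases hne : ∃ p ∈ Ω, w p ≠ 0
  · have hle : lam ≤ (∫ p in Ω, ‖gradient w p‖ ^ 2) / (∫ p in Ω, (w p) ^ 2) := by
      rw [h]
      refine csInf_le ⟨0, ?_⟩ ⟨w, hw, hne, h0, rfl⟩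
      rintro r ⟨v, -, -, -, rfl⟩
      exact div_nonneg (integral_nonneg (fun p => by positivity)) (integral_nonneg (fun p => by positivity))
    rcases hB.eq_or_lt with hB | hB
    · rw [← hB, mul_zero]; exact hA
    · exact (le_div_iff₀ hB).1 hle
  · push Not at hne
    have : ∫ p in Ω, (w p) ^ 2 = ∫ p in Ω, (0:ℝ) :=
      setIntegral_congr_fun hop.measurableSet (fun p hp => by simp [hne p hp])
    rw [this]; simpa using hA

lemma reg {m : ℕ} {ε : ℝ} {Ω : Set (EE (m+1))} (h : Geo m ε Ω) {u : EE (m+1) → ℝ}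
    (hu : ContDiffOn ℝ (⊤:ℕ∞) u (closure Ω)) :
    (∀ p ∈ Ω, DifferentiableAt ℝ u p) ∧
    (∃ L2, 0 ≤ L2 ∧ ∀ p ∈ Ω, ∀ q ∈ Ω, ‖fderiv ℝ u p - fderiv ℝ u q‖ ≤ L2 * ‖p - q‖) ∧
    (∃ B, ∀ p ∈ Ω, |u p| ≤ B) ∧ (∃ B, ∀ p ∈ Ω, ‖fderiv ℝ u p‖ ≤ B) := by
  have hK : IsCompact (closure Ω) := h.bd.isCompact_closure
  have hcv : Convex ℝ (closure Ω) := h.cv.closure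
  have hΩne : Ω.Nonempty := by
    obtain ⟨y, hy⟩ := h.ne (1/2) ⟨by norm_num, by norm_num⟩
    exact ⟨_, hy⟩
  have hud : UniqueDiffOn ℝ (closure Ω) := uniqueDiffOn_convex hcv
    (hΩne.mono (h.op.subset_interior_iff.2 subset_closure))
  have hnh : ∀ p ∈ Ω, closure Ω ∈ 𝓝 p := fun p hp => mem_of_superset (h.op.mem_nhds hp) subset_closure
  have hd : ∀ p ∈ Ω, DifferentiableAt ℝ u p := fun p hp =>
    (hu.contDiffAt (hnh p hp)).differentiableAt (by simp)
  have hf : ContDiffOn ℝ 1 (fderivWithin ℝ u (closure Ω)) (closure Ω) :=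
    hu.fderivWithin hud (by norm_cast)
  have he : ∀ p ∈ Ω, fderivWithin ℝ u (closure Ω) p = fderiv ℝ u p := fun p hp =>
    fderivWithin_of_mem_nhds (hnh p hp)
  refine ⟨hd, ?_, ?_, ?_⟩
  · obtain ⟨L, hL⟩ := hf.exists_lipschitzOnWith one_ne_zero hcv hK
    refine ⟨L, L.2, fun p hp q hq => ?_⟩
    have := hL.dist_le_mul p (subset_closure hp) q (subset_closure hq)
    rwa [he p hp, he q hq, dist_eq_norm, dist_eq_norm] at this
  · obtain ⟨B, hB⟩ := hK.exists_bound_of_continuousOn hu.continuousOn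
    exact ⟨B, fun p hp => hB p (subset_closure hp)⟩
  · obtain ⟨B, hB⟩ := hK.exists_bound_of_continuousOn hf.continuousOn
    exact ⟨B, fun p hp => he p hp ▸ hB p (subset_closure hp)⟩

lemma grad_norm {m : ℕ} (u : EE (m+1) → ℝ) (p : EE (m+1)) : ‖gradient u p‖ = ‖fderiv ℝ u p‖ := by
  simp [gradient]

/-- W(x) = k + ∫ g -/
def prm (g : ℝ → ℝ) (k x : ℝ) : ℝ := k + ∫ t in (0:ℝ)..x, g t

lemma prm_deriv {g : ℝ → ℝ} (hg : Continuous g) (k x : ℝ) : HasDerivAt (prm g k) (g x) x :=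
  (intervalIntegral.integral_hasDerivAt_right (hg.intervalIntegrable _ _)
    (hg.stronglyMeasurableAtFilter _ _) hg.continuousAt).const_add k

lemma prm_smooth {g : ℝ → ℝ} (hg : ContDiff ℝ (⊤:ℕ∞) g) (k : ℝ) : ContDiff ℝ (⊤:ℕ∞) (prm g k) := by
  rw [contDiff_infty_iff_deriv]
  have : deriv (prm g k) = g := funext fun x => (prm_deriv hg.continuous k x).deriv
  exact ⟨fun x => (prm_deriv hg.continuous k x).differentiableAt, by rw [this]; exact hg⟩

lemma prm_cont {g : ℝ → ℝ} (hg : ContDiff ℝ (⊤:ℕ∞) g) (k : ℝ) : Continuous (prm g k) := (prm_smooth hg k).continuous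

lemma coord_cont (m : ℕ) : Continuous (fun p : EE (m+1) => p 0) := (EuclideanSpace.proj (𝕜 := ℝ) (0 : Fin (m+1))).continuous

lemma prm_smooth' {m : ℕ} {g : ℝ → ℝ} (hg : ContDiff ℝ (⊤:ℕ∞) g) (k : ℝ) :
    ContDiff ℝ (⊤:ℕ∞) (fun p : EE (m+1) => prm g k (p 0)) :=
  (prm_smooth hg k).comp (EuclideanSpace.proj (𝕜 := ℝ) (0 : Fin (m+1))).contDiff

lemma prm_grad {m : ℕ} {g : ℝ → ℝ} (hg : ContDiff ℝ (⊤:ℕ∞) g) (k : ℝ) (p : EE (m+1)) :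
    HasGradientAt (fun p : EE (m+1) => prm g k (p 0)) (g (p 0) • e0 m) p := by
  rw [hasGradientAt_iff_hasFDerivAt]
  have h1 : HasFDerivAt (fun p : EE (m+1) => p 0) (EuclideanSpace.proj (𝕜 := ℝ) (0 : Fin (m+1))) p :=
    (EuclideanSpace.proj (𝕜 := ℝ) (0 : Fin (m+1))).hasFDerivAt
  have := (prm_deriv hg.continuous k (p 0)).comp_hasFDerivAt p h1
  refine this.congr_fderiv ?_
  ext v
  simp [e0, InnerProductSpace.toDual_apply_apply, EuclideanSpace.inner_single_left]

namespace Geo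
variable {m : ℕ} {ε : ℝ} {Ω : Set (EE (m+1))}

lemma sec_eq (h : Geo m ε Ω) (g : EE (m+1) → ℝ) (x : ℝ) :
    ∫ y in cross Ω x, g (mkPt m x y) = ωvol Ω x * ubarFn Ω g x := by
  by_cases hx : x ∈ Ioo (0:ℝ) 1
  · rw [ubarFn, mul_div_cancel₀ _ (h.om_pos hx).ne']
  · rw [h.cross_empty hx, ωvol, h.cross_empty hx]; simp

lemma wint (h : Geo m ε Ω) {W : ℝ → ℝ} (hW : Continuous W) {g : EE (m+1) → ℝ} {B : ℝ}
    (hc : ContinuousOn g Ω) (hB : ∀ p ∈ Ω, |g p| ≤ B) : IntegrableOn (fun p => W (p 0) * g p) Ω := by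
  obtain ⟨D, hD⟩ := (isCompact_Icc (a := (0:ℝ)) (b := 1)).exists_bound_of_continuousOn hW.continuousOn
  refine h.dom_int (B := D * B) ((hW.comp (coord_cont m)).continuousOn.mul hc) (fun p hp => ?_)
  rw [abs_mul]
  have h1 := hD _ (Ioo_subset_Icc_self (h.mem_Ioo hp))
  exact mul_le_mul h1 (hB p hp) (abs_nonneg _) ((norm_nonneg _).trans h1)

lemma wfub (h : Geo m ε Ω) {W : ℝ → ℝ} (hW : Continuous W) {g : EE (m+1) → ℝ} {B : ℝ}
    (hc : ContinuousOn g Ω) (hB : ∀ p ∈ Ω, |g p| ≤ B) :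
    ∫ p in Ω, W (p 0) * g p = ∫ x in (0:ℝ)..1, W x * (ωvol Ω x * ubarFn Ω g x) := by
  rw [h.fubini (h.wint hW hc hB)]
  refine intervalIntegral.integral_congr (fun x _ => ?_)
  simp only [mkPt_zero]
  rw [integral_const_mul, h.sec_eq]

lemma wfub1 (h : Geo m ε Ω) {W : ℝ → ℝ} (hW : Continuous W) :
    ∫ p in Ω, W (p 0) = ∫ x in (0:ℝ)..1, ωvol Ω x * W x := by
  have h1 := h.wfub hW (g := fun _ => 1) (B := 1) continuousOn_const (fun p _ => by simp)
  simp only [mul_one] at h1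
  rw [h1]
  refine intervalIntegral.integral_congr (fun x _ => ?_)
  have := h.sec_eq (fun _ => 1) x
  rw [← this]
  simp [ωvol, Measure.real, mul_comm]

lemma hR (h : Geo m ε Ω) {lam : ℝ} (hr : Ray Ω lam) : ∀ g : ℝ → ℝ, ContDiff ℝ (⊤:ℕ∞) g → ∀ k : ℝ,
      (∫ x in (0:ℝ)..1, ωvol Ω x * (k + ∫ t in (0:ℝ)..x, g t)) = 0 →
      lam * (∫ x in (0:ℝ)..1, ωvol Ω x * (k + ∫ t in (0:ℝ)..x, g t) ^ 2) ≤ ∫ x in (0:ℝ)..1, ωvol Ω x * g x ^ 2 := by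
  intro g hg k h0
  have hW := prm_cont hg k
  have := hr (fun p => prm g k (p 0)) (prm_smooth' hg k).contDiffOn (by rw [h.wfub1 hW]; exact h0)
  have e1 := h.wfub1 (hW.pow 2)
  have e2 := h.wfub1 (hg.continuous.pow 2)
  have e3 : ∀ p : EE (m+1), ‖gradient (fun p : EE (m+1) => prm g k (p 0)) p‖ ^ 2 = g (p 0) ^ 2 := by
    intro p
    rw [(prm_grad hg k p).gradient, norm_smul, e0_norm, mul_one, Real.norm_eq_abs, sq_abs]
  simp only [e3] at this
  simp only [Pi.pow_apply] at e1 e2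
  rw [e1, e2] at this
  exact this

lemma weak (h : Geo m ε Ω) {lam : ℝ} (hr : Ray Ω lam) {u : EE (m+1) → ℝ}
    (hu : ContDiffOn ℝ (⊤:ℕ∞) u (closure Ω)) (hu0 : ∫ p in Ω, u p = 0)
    (heq : lam * (∫ p in Ω, (u p) ^ 2) = ∫ p in Ω, ‖gradient u p‖ ^ 2)
    {g : ℝ → ℝ} (hg : ContDiff ℝ (⊤:ℕ∞) g) (k : ℝ)
    (h0 : (∫ x in (0:ℝ)..1, ωvol Ω x * prm g k x) = 0) :
    ∫ p in Ω, g (p 0) * dx u p = lam * ∫ p in Ω, prm g k (p 0) * u p := by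
  obtain ⟨hd, ⟨L, hL0, hL⟩, ⟨B, hB⟩, ⟨D, hD⟩⟩ := reg h hu
  have huc : ContinuousOn u Ω := hu.continuousOn.mono subset_closure
  have hfc : ContinuousOn (fderiv ℝ u) Ω := by
    have : LipschitzOnWith (Real.toNNReal L) (fderiv ℝ u) Ω := LipschitzOnWith.of_dist_le_mul (fun p hp q hq => by
      rw [dist_eq_norm, dist_eq_norm, Real.coe_toNNReal L hL0]; exact hL p hp q hq)
    exact this.continuousOn
  have hdxc : ContinuousOn (dx u) Ω := hfc.clm_apply continuousOn_const
  have hdxb : ∀ p ∈ Ω, |dx u p| ≤ D := fun p hp => by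
    have := (fderiv ℝ u p).le_opNorm (e0 m)
    rw [e0_norm, mul_one] at this
    exact this.trans (hD p hp)
  have hW := prm_cont hg k
  set W := prm g k with hWd
  have i1 : IntegrableOn u Ω := h.dom_int huc hB
  have i2 : IntegrableOn (fun p => u p ^ 2) Ω := by
    refine h.dom_int (B := B ^ 2) (huc.pow 2) (fun p hp => ?_)
    rw [abs_pow]; have := hB p hp; gcongr
  have i3 : IntegrableOn (fun p => ‖gradient u p‖ ^ 2) Ω := by
    simp only [grad_norm]
    refine h.dom_int (B := D ^ 2) (hfc.norm.pow 2) (fun p hp => ?_)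
    rw [abs_pow, abs_norm]; have := hD p hp; gcongr
  have i4 : IntegrableOn (fun p => W (p 0) * u p) Ω := h.wint hW huc hB
  have i5 : IntegrableOn (fun p => g (p 0) * dx u p) Ω := h.wint hg.continuous hdxc hdxb
  have i6 : IntegrableOn (fun p : EE (m+1) => W (p 0)) Ω := by
    simpa using h.wint hW (g := fun _ => 1) (B := 1) continuousOn_const (fun p _ => by simp)
  have i7 : IntegrableOn (fun p : EE (m+1) => W (p 0) ^ 2) Ω := by
    simpa using h.wint (hW.pow 2) (g := fun _ => 1) (B := 1) continuousOn_const (fun p _ => by simp)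
  have i8 : IntegrableOn (fun p : EE (m+1) => g (p 0) ^ 2) Ω := by
    simpa using h.wint (hg.continuous.pow 2) (g := fun _ => 1) (B := 1) continuousOn_const (fun p _ => by simp)
  have hW0 : ∫ p in Ω, W (p 0) = 0 := by rw [h.wfub1 hW]; exact h0
  set X := (∫ p in Ω, g (p 0) * dx u p) - lam * ∫ p in Ω, W (p 0) * u p with hX
  set Y := (∫ p in Ω, g (p 0) ^ 2) - lam * ∫ p in Ω, W (p 0) ^ 2 with hY
  have key : ∀ t : ℝ, 0 ≤ 2 * t * X + t ^ 2 * Y := by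
    intro t
    have hray := hr (fun p => u p + t * W (p 0)) (hu.add (contDiff_const.mul (prm_smooth' hg k)).contDiffOn) (by
      rw [integral_add i1 (i6.const_mul t), integral_const_mul, hu0, hW0]; simp)
    have e1 : ∫ p in Ω, (u p + t * W (p 0)) ^ 2 =
        (∫ p in Ω, u p ^ 2) + (2 * t * (∫ p in Ω, W (p 0) * u p) + t ^ 2 * ∫ p in Ω, W (p 0) ^ 2) := by
      have : ∀ p : EE (m+1), (u p + t * W (p 0)) ^ 2 = u p ^ 2 + (2 * t * (W (p 0) * u p) + t ^ 2 * W (p 0) ^ 2) :=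
        fun p => by ring
      simp only [this]
      have j : IntegrableOn (fun p => 2 * t * (W (p 0) * u p) + t ^ 2 * W (p 0) ^ 2) Ω :=
        (i4.const_mul _).add (i7.const_mul _)
      rw [integral_add i2 j, integral_add (i4.const_mul _) (i7.const_mul _), integral_const_mul, integral_const_mul]
    have e2 : ∫ p in Ω, ‖gradient (fun p => u p + t * W (p 0)) p‖ ^ 2 =
        (∫ p in Ω, ‖gradient u p‖ ^ 2) + (2 * t * (∫ p in Ω, g (p 0) * dx u p) + t ^ 2 * ∫ p in Ω, g (p 0) ^ 2) := by
      have : ∀ p ∈ Ω, ‖gradient (fun p => u p + t * W (p 0)) p‖ ^ 2 =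
          ‖gradient u p‖ ^ 2 + (2 * t * (g (p 0) * dx u p) + t ^ 2 * g (p 0) ^ 2) := by
        intro p hp
        have hgr : HasGradientAt (fun p => u p + t * W (p 0)) (gradient u p + t • (g (p 0) • e0 m)) p := by
          have a1 := (hd p hp).hasGradientAt
          have a2 := prm_grad (m := m) hg k p
          rw [hasGradientAt_iff_hasFDerivAt] at a1 a2 ⊢
          rw [map_add, map_smul]
          exact a1.add (a2.const_mul t)
        rw [hgr.gradient, norm_add_sq_real, inner_smul_right, inner_smul_right, inner_gradient_left, norm_smul,
          norm_smul, e0_norm, mul_one, mul_pow, Real.norm_eq_abs, sq_abs, Real.norm_eq_abs, sq_abs, dx]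
        ring
      rw [setIntegral_congr_fun h.op.measurableSet this]
      have j : IntegrableOn (fun p => 2 * t * (g (p 0) * dx u p) + t ^ 2 * g (p 0) ^ 2) Ω :=
        (i5.const_mul _).add (i8.const_mul _)
      rw [integral_add i3 j, integral_add (i5.const_mul _) (i8.const_mul _), integral_const_mul, integral_const_mul]
    rw [e1, e2, ← heq] at hray
    have : 2 * t * X + t ^ 2 * Y = lam * (∫ p in Ω, u p ^ 2) + (2 * t * (∫ p in Ω, g (p 0) * dx u p) + t ^ 2 * ∫ p in Ω, g (p 0) ^ 2)
      - lam * ((∫ p in Ω, u p ^ 2) + (2 * t * (∫ p in Ω, W (p 0) * u p) + t ^ 2 * ∫ p in Ω, W (p 0) ^ 2)) := by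
      rw [hX, hY]; ring
    rw [this]; linarith
  have hX0 : X = 0 := by
    by_contra hne
    have hY1 : 0 < |Y| + 1 := by positivity
    have := key (-X / (|Y| + 1))
    have e : 2 * (-X / (|Y| + 1)) * X + (-X / (|Y| + 1)) ^ 2 * Y = X ^ 2 / (|Y| + 1) ^ 2 * (Y - 2 * (|Y| + 1)) := by
      field_simp; ring
    rw [e] at this
    have h1 : 0 < X ^ 2 / (|Y| + 1) ^ 2 := by positivity
    have h2 := le_abs_self Y
    have h3 := abs_nonneg Y
    nlinarith
  linarith

lemma feq (h : Geo m ε Ω) {lam : ℝ} (hr : Ray Ω lam) {u : EE (m+1) → ℝ}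
    (hu : ContDiffOn ℝ (⊤:ℕ∞) u (closure Ω)) (hu0 : ∫ p in Ω, u p = 0)
    (heq : lam * (∫ p in Ω, (u p) ^ 2) = ∫ p in Ω, ‖gradient u p‖ ^ 2)
    {B D : ℝ} (hB : ∀ p ∈ Ω, |u p| ≤ B) (hdc : ContinuousOn (dx u) Ω) (hD : ∀ p ∈ Ω, |dx u p| ≤ D)
    (hub : BC (ubarFn Ω u)) (hf : BC (ubarFn Ω (dx u))) :
    (∫ t in (0:ℝ)..1, ωvol Ω t * ubarFn Ω u t = 0) ∧
    ∀ x ∈ Ioo (0:ℝ) 1, ωvol Ω x * ubarFn Ω (dx u) x = -(lam * ∫ t in (0:ℝ)..x, ωvol Ω t * ubarFn Ω u t) := by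
  have huc : ContinuousOn u Ω := hu.continuousOn.mono subset_closure
  have hω := h.om_bc
  have hmean : ∫ t in (0:ℝ)..1, ωvol Ω t * ubarFn Ω u t = 0 := by
    have := h.wfub (W := fun _ => 1) continuous_const huc hB
    simp only [one_mul] at this
    rw [← this, hu0]
  refine ⟨hmean, ?_⟩
  have hωu := hω.mul hub
  have hωf := hω.mul hf
  have hN : BC (fun x => ∫ t in (0:ℝ)..x, ωvol Ω t * ubarFn Ω u t) := hωu.prim
  have hG : BC (fun x => ωvol Ω x * ubarFn Ω (dx u) x + lam * ∫ t in (0:ℝ)..x, ωvol Ω t * ubarFn Ω u t) :=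
    hωf.add ((BC.const lam).mul hN)
  have hwk : ∀ g : ℝ → ℝ, ContDiff ℝ (⊤:ℕ∞) g →
      ∫ x in (0:ℝ)..1, g x * (ωvol Ω x * ubarFn Ω (dx u) x + lam * ∫ t in (0:ℝ)..x, ωvol Ω t * ubarFn Ω u t) = 0 := by
    intro g hg
    have hgB : BC g := .of_Icc hg.continuous.continuousOn
    have hp0 : BC (fun x => ∫ t in (0:ℝ)..x, g t) := hgB.prim
    have hωpos : 0 < ∫ x in (0:ℝ)..1, ωvol Ω x := hω.pos le_rfl zero_lt_one le_rfl (fun x hx => h.om_pos hx)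
    set k := -(∫ x in (0:ℝ)..1, ωvol Ω x * ∫ t in (0:ℝ)..x, g t) / ∫ x in (0:ℝ)..1, ωvol Ω x with hk
    have hk0 : (∫ x in (0:ℝ)..1, ωvol Ω x * prm g k x) = 0 := by
      have : ∀ x, ωvol Ω x * prm g k x = ωvol Ω x * k + ωvol Ω x * ∫ t in (0:ℝ)..x, g t := fun x => by
        rw [prm]; ring
      simp only [this]
      rw [intervalIntegral.integral_add (hω.mul (BC.const k)).ii01 (hω.mul hp0).ii01,
        intervalIntegral.integral_mul_const, hk]
      field_simp; ring
    have hw := h.weak hr hu hu0 heq hg k hk0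
    rw [h.wfub hg.continuous hdc hD, h.wfub (prm_cont hg k) huc hB] at hw
    have ibp := intervalIntegral.integral_mul_deriv_eq_deriv_mul_of_hasDerivAt (a := 0) (b := 1)
      (u := prm g k) (v := fun x => ∫ t in (0:ℝ)..x, ωvol Ω t * ubarFn Ω u t) (u' := g)
      (v' := fun x => ωvol Ω x * ubarFn Ω u x) (prm_cont hg k).continuousOn
      (by rw [uIcc_of_le zero_le_one]; exact hωu.prim_cont)
      (fun x _ => prm_deriv hg.continuous k x)
      (fun x hx => by
        rw [min_eq_left zero_le_one, max_eq_right zero_le_one] at hx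
        exact hωu.prim_hasDerivAt ⟨le_rfl, zero_le_one⟩ hx)
      hgB.ii01 hωu.ii01
    simp only [hmean, mul_zero, intervalIntegral.integral_same, zero_sub] at ibp
    rw [ibp] at hw
    have : ∀ x, g x * (ωvol Ω x * ubarFn Ω (dx u) x + lam * ∫ t in (0:ℝ)..x, ωvol Ω t * ubarFn Ω u t) =
      g x * (ωvol Ω x * ubarFn Ω (dx u) x) + lam * (g x * ∫ t in (0:ℝ)..x, ωvol Ω t * ubarFn Ω u t) := fun x => by ring
    simp only [this]
    rw [intervalIntegral.integral_add (hgB.mul hωf).ii01 ((BC.const lam).mul (hgB.mul hN)).ii01,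
      intervalIntegral.integral_const_mul, hw]
    ring
  have hae := isOpen_Ioo.ae_eq_zero_of_integral_contDiff_smul_eq_zero (U := Ioo (0:ℝ) 1) (μ := volume)
    (f := fun x => ωvol Ω x * ubarFn Ω (dx u) x + lam * ∫ t in (0:ℝ)..x, ωvol Ω t * ubarFn Ω u t)
    (hG.1.locallyIntegrableOn measurableSet_Ioo) (fun g hg _ hs => by
      have := hwk g hg
      rw [intervalIntegral.integral_of_le zero_le_one, integral_Ioc_eq_integral_Ioo] at this
      refine Eq.trans ?_ this
      symm
      simp only [smul_eq_mul]
      refine setIntegral_eq_integral_of_forall_compl_eq_zero (fun x hx => ?_)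
      rw [image_eq_zero_of_notMem_tsupport (fun hx' => hx (hs hx')), zero_mul])
  have heqn := Measure.eqOn_open_of_ae_eq (μ := volume) (U := Ioo (0:ℝ) 1) (g := fun _ => (0:ℝ))
    ((ae_restrict_iff' measurableSet_Ioo).2 hae) isOpen_Ioo hG.1 continuousOn_const
  intro x hx
  have := heqn hx
  simp only at this
  linarith

end Geo


lemma NeumannSol.scale {ω φ φd : ℝ → ℝ} {μ M : ℝ} (hM : 0 < M) (h : NeumannSol ω μ φ φd) :
    NeumannSol ω μ (fun x => φ x / M) (fun x => φd x / M) := by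
  obtain ⟨h1, h2, h3, h4, ⟨x, hx, hx0⟩, h6⟩ := h
  refine ⟨fun x hx => (h1 x hx).div_const M, h2.div_const M, by simp [h3], by simp [h4],
    ⟨x, hx, div_ne_zero hx0 hM.ne'⟩, fun x hx => ?_⟩
  have := (h6 x hx).div_const M
  refine (this.congr_deriv (by ring)).congr_of_eventuallyEq (Eventually.of_forall fun t => ?_)
  simp only; ring

lemma UU.zero_est {m : ℕ} {ε C₀ S L2 : ℝ} {Ω : Set (EE (m+1))} {u : EE (m+1) → ℝ}
    (h : UU m ε C₀ S L2 Ω u) {p : EE (m+1)} (hp : p ∈ Ω) (h0 : u p = 0) :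
    |ubarFn Ω u (p 0)| ≤ 2 * C₀ * S * ε := by
  have hx := h.geo.mem_Ioo hp
  have hy : tailPt m p ∈ cross Ω (p 0) := by
    change mkPt m (p 0) (tailPt m p) ∈ Ω
    rw [mkPt_tail]; exact hp
  refine h.geo.avg_le hx (fun y hy' => ?_)
  have := h.sec hy' hy
  rw [mkPt_tail, h0, sub_zero] at this
  refine this.trans ?_
  have hm : max (min (p 0) (1 - p 0)) ε ≤ 1 :=
    max_le ((min_le_left _ _).trans hx.2.le) (by linarith [h.hε4])
  have hC := h.hC
  have hS := h.hS
  have hε := h.geo.hε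
  calc _ ≤ C₀ * 1 * S * (2 * ε) := by gcongr
    _ = _ := by ring

lemma assemble (m : ℕ) (c₀ C₀ : ℝ) (hc₀ : 0 < c₀) (hC₀ : 0 < C₀) :
    ∃ C > (0:ℝ), ∃ ε₀ > (0:ℝ),
    ∀ (ε : ℝ) (Ω : Set (EE (m+1))) (u : EE (m+1) → ℝ) (lam μ L0 L1 s₁ : ℝ) (φ φd : ℝ → ℝ),
      ε < ε₀ → Geo m ε Ω →
      ContDiffOn ℝ (⊤:ℕ∞) u (closure Ω) →
      (∃ p ∈ Ω, u p ≠ 0) →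
      (∫ p in Ω, u p) = 0 →
      0 < lam →
      Ray Ω lam →
      lam = (∫ p in Ω, ‖gradient u p‖ ^ 2) / (∫ p in Ω, (u p) ^ 2) →
      (∀ p ∈ Ω, ‖gradient u p‖ ≤
        C₀ * max (min (p 0) (1 - p 0)) ε * sSup ((fun q => |u q|) '' Ω)) →
      c₀ * sSup (u '' Ω) ≤ -sInf (u '' Ω) →
      -sInf (u '' Ω) ≤ C₀ * sSup (u '' Ω) →
      Tendsto (ubarFn Ω u) (𝓝[>] 0) (𝓝 L0) →
      (1 - C₀ * ε) * sSup (u '' Ω) ≤ L0 →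
      Tendsto (ubarFn Ω u) (𝓝[<] 1) (𝓝 L1) →
      L1 ≤ (1 - C₀ * ε) * sInf (u '' Ω) →
      NeumannSol (ωvol Ω) μ φ φd →
      0 < μ →
      φ 0 = L0 → 0 < L0 →
      s₁ ∈ Ioo (0:ℝ) 1 → φ s₁ = 0 → (∀ s ∈ Ioo (0:ℝ) 1, φ s = 0 → s = s₁) →
      (∀ p ∈ Ω, u p = 0 → |p 0 - s₁| ≤ C * ε) := by
  set A := max 1 C₀ with hA
  have hA1 : 1 ≤ A := le_max_left _ _
  have hAC : C₀ ≤ A := le_max_right _ _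
  have hA0 : 0 < A := by linarith
  set K := 1 + A + C₀ * A + C₀ * (16 * m + 12) * A + 2 * C₀ * A with hK
  have k1 : 0 < C₀ * A := by positivity
  have k2 : 0 < C₀ * (16 * m + 12) * A := by positivity
  have hc : 0 < min 1 c₀ / 2 := by positivity
  have hc1 : min 1 c₀ / 2 ≤ 1 := by linarith [min_le_left 1 c₀]
  obtain ⟨C, hC, ε₁, hε₁, H⟩ := oneD m K (min 1 c₀ / 2) (by linarith) hc hc1
  refine ⟨C, hC, min ε₁ (min (1/4) (1 / (2 * C₀))), by positivity, ?_⟩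
  intro ε Ω u lam μ L0 L1 s₁ φ φd hε geo hu hne hu0 hlam hray hlamu hgrad hi1 hi2 hL0 hL0' hL1 hL1' hNS hμ hφ0 hL0p hs hs0 huniq
  have hεp := geo.hε
  have he1 : ε < ε₁ := hε.trans_le (min_le_left _ _)
  have he2 : ε ≤ 1/4 := (hε.trans_le ((min_le_right _ _).trans (min_le_left _ _))).le
  have he3 : C₀ * ε ≤ 1 / 2 := by
    have : ε ≤ 1 / (2 * C₀) := (hε.trans_le ((min_le_right _ _).trans (min_le_right _ _))).le
    calc C₀ * ε ≤ C₀ * (1 / (2 * C₀)) := by gcongr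
      _ = _ := by field_simp
  obtain ⟨hd, ⟨L2, hL20, hL2⟩, ⟨B, hB⟩, -⟩ := reg geo hu
  set M := sSup (u '' Ω) with hM
  have bA : BddAbove (u '' Ω) := ⟨B, by rintro _ ⟨p, hp, rfl⟩; exact (abs_le.1 (hB p hp)).2⟩
  have bB : BddBelow (u '' Ω) := ⟨-B, by rintro _ ⟨p, hp, rfl⟩; exact (abs_le.1 (hB p hp)).1⟩
  have uM : ∀ p ∈ Ω, u p ≤ M := fun p hp => le_csSup bA ⟨p, hp, rfl⟩
  have uI : ∀ p ∈ Ω, sInf (u '' Ω) ≤ u p := fun p hp => csInf_le bB ⟨p, hp, rfl⟩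
  have hMp : 0 < M := by
    by_contra hM0
    push Not at hM0
    obtain ⟨p, hp, hpn⟩ := hne
    have a1 := uM p hp
    have a2 := uI p hp
    have a3 : C₀ * M ≤ 0 := mul_nonpos_of_nonneg_of_nonpos hC₀.le hM0
    exact hpn (by linarith)
  have hAM : C₀ * M ≤ A * M := by gcongr
  have hAM1 : M ≤ A * M := le_mul_of_one_le_left hMp.le hA1
  have habs : ∀ p ∈ Ω, |u p| ≤ A * M := fun p hp => abs_le.2
    ⟨by linarith [uI p hp], by linarith [uM p hp]⟩
  have hS : sSup ((fun q => |u q|) '' Ω) ≤ A * M := by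
    obtain ⟨p, hp, _⟩ := hne
    exact csSup_le ⟨_, p, hp, rfl⟩ (by rintro _ ⟨p, hp, rfl⟩; exact habs p hp)
  have U : UU m ε C₀ (A * M) L2 Ω u :=
    { geo := geo, hC := hC₀, hS := by positivity, hε4 := he2, hL2 := hL20, diff := hd, lip2 := hL2
      grad := fun p hp => by
        rw [← grad_norm]
        refine (hgrad p hp).trans ?_
        have : 0 < max (min (p 0) (1 - p 0)) ε := lt_max_of_lt_right hεp
        gcongr
      bd := habs }
  have hubB : BC (ubarFn Ω u) := ⟨U.ub_bc.1, _, U.ub_bc.2⟩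
  have hfB := U.f_BC
  have hB0 : (∫ p in Ω, (u p) ^ 2) ≠ 0 := fun h0 => by rw [h0, div_zero] at hlamu; linarith
  obtain ⟨hmean, hfeq⟩ := geo.feq hray hu hu0 ((eq_div_iff hB0).1 hlamu) U.bd U.dx_cont U.dx_bd hubB hfB
  have hF : PhiFacts (ωvol Ω) μ (fun x => φ x / M) (fun x => φd x / M) s₁ :=
    phiFacts geo.om_bc (fun x hx => geo.om_pos hx) (hNS.scale hMp) hμ (by rw [hφ0]; positivity) hs
      (fun s hs' h0 => huniq s hs' (by
        rcases div_eq_zero_iff.1 h0 with h | h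
        · exact h
        · exact absurd h hMp.ne'))
  have hlm : lam ≤ μ := lam_le_mu geo.om_bc (fun x hx => geo.om_pos hx) hs hF hlam (geo.hR hray)
  have hscale : ∀ a b : ℝ, |a| ≤ b * M → |a / M| ≤ b := fun a b hab => by
    rw [abs_div, abs_of_pos hMp, div_le_iff₀ hMp]; exact hab
  have hint : ∀ x : ℝ, ∫ t in (0:ℝ)..x, ωvol Ω t * (ubarFn Ω u t / M) = (∫ t in (0:ℝ)..x, ωvol Ω t * ubarFn Ω u t) / M := by
    intro x
    rw [← intervalIntegral.integral_div]
    simp only [mul_div_assoc]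
  have O : OneD m K (min 1 c₀ / 2) ε lam μ (L0 / M) (L1 / M) s₁ (ωvol Ω) (fun x => ubarFn Ω u x / M)
      (fun x => ubarFn Ω (dx u) x / M) (fun x => φ x / M) (fun x => φd x / M) :=
    { hK := by linarith
      hc := hc
      hc1 := hc1
      hε := hεp
      hω := geo.om_bc
      hωp := fun x hx => geo.om_pos hx
      R1 := fun s hs t ht hst => geo.R1 hs ht hst
      R2 := fun s hs t ht hst => geo.R2 hs ht hst
      ubc := hubB.1.div_const M
      ubb := fun x hx => hscale _ _ ((U.ub_bc.2 x hx).trans (by gcongr; linarith))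
      fc := hfB.1.div_const M
      fb := fun x hx => hscale _ _ ((U.f_bc.2 x hx).trans (by rw [← mul_assoc]; gcongr; linarith))
      feq := fun x hx => by rw [hint, ← mul_div_assoc, hfeq x hx]; ring
      mean := by rw [hint, hmean, zero_div]
      hE := fun x hx x' hx' hxx => by
        rw [intervalIntegral.integral_div, ← sub_div, ← sub_div]
        refine hscale _ _ ((U.hE hx hx' hxx).trans ?_)
        calc _ = C₀ * (16 * m + 12) * A * ε * M := by ring
          _ ≤ K * ε * M := by gcongr; linarith
      lim0 := hL0.div_const M
      lim1 := hL1.div_const M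
      hL0 := by
        rw [le_div_iff₀ hMp]
        have : min 1 c₀ / 2 ≤ 1 - C₀ * ε := by linarith [min_le_left 1 c₀]
        exact (mul_le_mul_of_nonneg_right this hMp.le).trans hL0'
      hL1 := by
        rw [div_le_iff₀ hMp]
        have a1 : min 1 c₀ * M ≤ c₀ * M := mul_le_mul_of_nonneg_right (min_le_right _ _) hMp.le
        have a2 : 0 < min 1 c₀ * M := by positivity
        nlinarith
      hlam := hlam
      hlm := hlm
      hs := hs
      hs0 := by simp [hs0]
      hF := hF
      hφ0 := by rw [hφ0] }
  intro p hp hp0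
  refine H ε lam μ _ _ s₁ _ _ _ _ _ he1 O (p 0) (geo.mem_Ioo hp) (hscale _ _ ((U.zero_est hp hp0).trans ?_))
  calc _ = 2 * C₀ * A * ε * M := by ring
    _ ≤ K * ε * M := by gcongr; linarith


/-- Any point of the nodal set of the first Neumann eigenfunction has its
first coordinate within `Cε` of the unique zero `s₁` of the first ODE eigenfunction `φ`;
in particular the projection of the nodal set to the x-axis has diameter at most `Cε`. -/
theorem nodal_set_within_eps_of_ode_zero
    (m : ℕ) (hm : 1 ≤ m) (c₀ C₀ : ℝ) (hc₀ : 0 < c₀) (hC₀ : 0 < C₀) :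
    ∃ C > (0:ℝ), ∃ ε₀ > (0:ℝ),
    ∀ (ε : ℝ) (Ω : Set (EuclideanSpace ℝ (Fin (m+1))))
      (u : EuclideanSpace ℝ (Fin (m+1)) → ℝ) (lam μ L0 L1 s₁ : ℝ) (φ φd : ℝ → ℝ),
      0 < ε → ε < ε₀ →
      IsOpen Ω → Convex ℝ Ω → Bornology.IsBounded Ω →
      -- smooth boundary
      (∃ F : EuclideanSpace ℝ (Fin (m+1)) → ℝ, ContDiff ℝ (⊤:ℕ∞) F ∧
        Ω = {p | F p < 0} ∧ frontier Ω = {p | F p = 0} ∧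
        ∀ p ∈ frontier Ω, gradient F p ≠ 0) →
      -- Ω ⊆ (0,1) × B^{n-1}(ε)
      (∀ x y, mkPt m x y ∈ Ω →
        x ∈ Ioo (0:ℝ) 1 ∧ y ∈ Metric.ball (0 : EuclideanSpace ℝ (Fin m)) ε) →
      -- nonempty cross-sections
      (∀ s ∈ Ioo (0:ℝ) 1, (cross Ω s).Nonempty) →
      -- u is a nonzero mean-zero smooth Neumann eigenfunction with eigenvalue lam
      ContDiffOn ℝ (⊤:ℕ∞) u (closure Ω) →
      (∃ p ∈ Ω, u p ≠ 0) →
      (∫ p in Ω, u p) = 0 →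
      (∀ p ∈ Ω, lap u p = -(lam * u p)) →
      (∀ p ∈ frontier Ω, ∀ v, (∀ z ∈ Ω, ⟪v, z - p⟫ ≤ 0) → ⟪gradient u p, v⟫ = 0) →
      0 < lam →
      -- lam is the smallest nonzero Neumann eigenvalue (variational
      -- characterization), attained at u
      lam = sInf {r | ∃ w : EuclideanSpace ℝ (Fin (m+1)) → ℝ,
        ContDiffOn ℝ (⊤:ℕ∞) w (closure Ω) ∧ (∃ p ∈ Ω, w p ≠ 0) ∧ (∫ p in Ω, w p) = 0 ∧
        r = (∫ p in Ω, ‖gradient w p‖ ^ 2) / (∫ p in Ω, (w p) ^ 2)} →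
      lam = (∫ p in Ω, ‖gradient u p‖ ^ 2) / (∫ p in Ω, (u p) ^ 2) →
      -- facts from [CJK2009], assumed as hypotheses
      (∀ p ∈ Ω, ‖gradient u p‖ ≤
        C₀ * max (min (p 0) (1 - p 0)) ε * sSup ((fun q => |u q|) '' Ω)) →
      c₀ * sSup (u '' Ω) ≤ -sInf (u '' Ω) →
      -sInf (u '' Ω) ≤ C₀ * sSup (u '' Ω) →
      Tendsto (ubarFn Ω u) (𝓝[>] 0) (𝓝 L0) →
      (1 - C₀ * ε) * sSup (u '' Ω) ≤ L0 →
      Tendsto (ubarFn Ω u) (𝓝[<] 1) (𝓝 L1) →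
      L1 ≤ (1 - C₀ * ε) * sInf (u '' Ω) →
      -- φ is a first Neumann eigenfunction of the ODE
      NeumannSol (ωvol Ω) μ φ φd →
      0 < μ →
      (∀ μ', 0 < μ' → IsNeumannEigenvalue (ωvol Ω) μ' → μ ≤ μ') →
      -- normalization φ(0) = lim_{x→0+} ū(x) > 0
      φ 0 = L0 → 0 < L0 →
      -- s₁ is the unique zero of φ in (0,1)
      s₁ ∈ Ioo (0:ℝ) 1 → φ s₁ = 0 → (∀ s ∈ Ioo (0:ℝ) 1, φ s = 0 → s = s₁) →
      (∀ p ∈ Ω, u p = 0 → |p 0 - s₁| ≤ C * ε) ∧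
      (∀ p ∈ Ω, ∀ q ∈ Ω, u p = 0 → u q = 0 → |p 0 - q 0| ≤ C * ε) := by
  obtain ⟨C, hC, ε₀, hε₀, H⟩ := assemble m c₀ C₀ hc₀ hC₀
  refine ⟨2 * C, by positivity, ε₀, hε₀, ?_⟩
  intro ε Ω u lam μ L0 L1 s₁ φ φd hεp hε hop hcv hbd _ hsub hne hu hune hu0 _ _ hlam hinf hlamu hgrad hi1 hi2
    hL0 hL0' hL1 hL1' hNS hμ _ hφ0 hL0p hs hs0 huniq
  have h := H ε Ω u lam μ L0 L1 s₁ φ φd hε ⟨hεp, hop, hcv, hbd, hsub, hne⟩ hu hune hu0 hlam (ray_of hop hinf)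
    hlamu hgrad hi1 hi2 hL0 hL0' hL1 hL1' hNS hμ hφ0 hL0p hs hs0 huniq
  have hCε : 0 < C * ε := by positivity
  refine ⟨fun p hp hp0 => (h p hp hp0).trans (by linarith), fun p hp q hq hp0 hq0 => ?_⟩
  have a := abs_le.1 (h p hp hp0)
  have b := abs_le.1 (h q hq hq0)
  exact abs_le.2 ⟨by linarith [a.1, b.2], by linarith [a.2, b.1]⟩
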